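/- Fix an integer k ≥ 1. Then, as n → ∞, p_{ℙ_k}(n+1) − p_{ℙ_k}(n) ~ ( (1 + 1/k) · ζ(1 + 1/k) · Γ(1 + 1/k) )^{k/(k+1)} · p_{ℙ_k}(n) / (n · log n)^{k/(k+1)}. -/

import Mathlib

/-!
Write `p(n)` for the number of partitions of `n` into `k`-th powers of primes, `D(n) = p(n) - p(n-1)`,
`κ = 1 + 1/k`, `T_n = (n log n)^{1/κ}` and `θ = (κ ζ(κ) Γ(κ))^{1/κ}`. The claim is
`D(n+1) T_n / p(n) → θ`. The proof avoids the circle method: it is a Tauberian argument on Euler's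
recursion `n p(n) = ∑ σ(m) p(n-m)`, where `σ(m)` is the sum of the divisors of `m` that are `k`-th
powers of primes.

*Arithmetic input.* The prime number theorem (`tendsto_psi_div`) is derived by the Wiener–Ikehara
method with Fejér kernels from the continuity of `-ζ'/ζ(s) - 1/(s-1)` on `Re s ≥ 1`. Partial summation
and dominated convergence give `∑_{m ≤ y} σ(m) ~ (ζ(κ)/κ) y^κ / log y` (`tendsto_sigSum`). On the
scale `T_n` this reads `∑_{m ≤ t T_n} σ(m) ~ ζ(κ) t^κ n`, so `∑ σ(m) e^{-cm/T_n} ~ (θ/c)^κ n` for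
every `c > 0` (`tendsto_laplace_sig`).

*Combinatorial input.* `p` is eventually convex and nondecreasing (`eventually_convex`,
`eventually_pcDiff`). For four pairwise coprime parts `q_i` with product `N`, the polynomial
`∏ (1 - X^{q_i})/(1 - X)` divides `(1 - X^N)/(1 - X)` with a cofactor `G` such that `G(1) = 1`. Hence
the second differences of `p` are a convolution of the partition function of the remaining parts with
the coefficients of `G/((1-X)(1-X^N))`. These tend to infinity, and `pc_le_two_mul` shows that they
outweigh the finitely many negative ones.

*Tauberian step* (`TData`). If `D T / p` were asymptotically a constant `c`, then `p(n-m)/p(n)` would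
be about `e^{-cm/T_n}`, and Euler's recursion would give `(θ/c)^κ = 1`. To make this rigorous, a crude
lower bound for `D T / p` (`exists_lower`) is bootstrapped to every constant below `θ` (`improve`,
`lower`): at an index where a lower bound is nearly attained, the recursion for `D` forces it to be
nearly attained on a whole window of length `≍ T_n`. Conversely, the lower bound makes the decay
estimate for `p(n-m)/p(n)` nearly sharp on average (`deficit`), and convexity converts this into the
upper bound (`upper`).
-/


open Filter

/-- Number of partitions of `n` with all parts `k`-th powers of primes. -/
noncomputable def pPk (k n : ℕ) : ℕ :=
  Nat.card {P : n.Partition // ∀ i ∈ P.parts, ∃ p : ℕ, p.Prime ∧ i = p ^ k}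

noncomputable def zetaR (s : ℝ) : ℝ := (riemannZeta (s : ℂ)).re

/-! ### The Laplace transform of the error term in the prime number theorem -/

section

open MeasureTheory Filter Topology Set
open scoped FourierTransform

/-- The normalised error term `ψ(e^u) e^{-u} - 1` of the prime number theorem, cut off at `u ≤ 0`. -/
noncomputable def psiErr (u : ℝ) : ℝ :=
  (Ioi (0 : ℝ)).indicator (fun u => Chebyshev.psi (Real.exp u) * Real.exp (-u) - 1) u

lemma psiErr_abs_le (u : ℝ) : |psiErr u| ≤ Real.log 4 + 5 := by
  have h4 : 0 < Real.log 4 := Real.log_pos (by norm_num)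
  unfold psiErr
  by_cases hu : u ∈ Ioi (0 : ℝ)
  · rw [indicator_of_mem hu]
    have h1 := Chebyshev.psi_le_const_mul_self (Real.exp_pos u).le
    have h2 : Chebyshev.psi (Real.exp u) * Real.exp (-u) ≤ Real.log 4 + 4 := by
      calc _ ≤ (Real.log 4 + 4) * Real.exp u * Real.exp (-u) := by gcongr
        _ = Real.log 4 + 4 := by rw [mul_assoc, ← Real.exp_add]; simp
    have h3 : 0 ≤ Chebyshev.psi (Real.exp u) * Real.exp (-u) :=
      mul_nonneg (Chebyshev.psi_nonneg _) (Real.exp_pos _).le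
    rw [abs_le]; constructor <;> linarith
  · rw [indicator_of_notMem hu]; simp; linarith

lemma measurable_psiErr : Measurable psiErr := by
  unfold psiErr
  refine Measurable.indicator ?_ measurableSet_Ioi
  have : Measurable Chebyshev.psi := Chebyshev.psi_mono.measurable
  fun_prop

/-- The Mellin transform of `ψ(y) - y`, in terms of the function `-ζ'/ζ(s) - 1/(s - 1)`, which is
`LFunctionResidueClassAux` for modulus `1`. -/
lemma integral_psi_sub {s : ℂ} (hs : 1 < s.re) :
    ∫ y in Ioi (1 : ℝ), ((Chebyshev.psi y - y : ℝ) : ℂ) * (y : ℂ) ^ (-(s + 1)) =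
      (ArithmeticFunction.vonMangoldt.LFunctionResidueClassAux (1 : ZMod 1) s - 1) / s := by
  have hs0 : s ≠ 0 := by rintro rfl; simp at hs; linarith
  have hs1 : s - 1 ≠ 0 := by
    intro h; rw [sub_eq_zero.mp h] at hs; simp at hs
  have e1 := ArithmeticFunction.vonMangoldt.eqOn_LFunctionResidueClassAux (a := (1 : ZMod 1))
    isUnit_one (show s ∈ {s : ℂ | 1 < s.re} from hs)
  have hres : ∀ n, ArithmeticFunction.vonMangoldt.residueClass (1 : ZMod 1) n
      = ArithmeticFunction.vonMangoldt n := by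
    intro n
    have : n ∈ {n : ℕ | (n : ZMod 1) = 1} := Subsingleton.elim _ _
    simp [ArithmeticFunction.vonMangoldt.residueClass, indicator_of_mem this]
  simp only [hres, Nat.totient_one, Nat.cast_one, inv_one] at e1
  have e2 := LSeries_eq_mul_integral_of_nonneg (fun n => ArithmeticFunction.vonMangoldt n)
    (r := 1) zero_le_one hs ?_ (fun n => ArithmeticFunction.vonMangoldt_nonneg)
  · have hpsi : ∀ t : ℝ, ∑ k ∈ Finset.Icc 1 ⌊t⌋₊, (ArithmeticFunction.vonMangoldt k : ℂ)
        = (Chebyshev.psi t : ℂ) := by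
      intro t
      rw [Chebyshev.psi]; push_cast; rfl
    simp only [hpsi] at e2
    have i1 : IntegrableOn (fun y : ℝ => (Chebyshev.psi y : ℂ) * (y : ℂ) ^ (-(s + 1))) (Ioi 1) := by
      have hb : IntegrableOn (fun y : ℝ => (Real.log 4 + 4) * y ^ (-s.re)) (Ioi 1) :=
        (integrableOn_Ioi_rpow_of_lt (by linarith) zero_lt_one).const_mul _
      refine Integrable.mono' hb ?_ ?_
      · refine AEStronglyMeasurable.mul ?_ ?_
        · exact (Complex.measurable_ofReal.comp Chebyshev.psi_mono.measurable).aestronglyMeasurable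
        · refine ContinuousOn.aestronglyMeasurable ?_ measurableSet_Ioi
          intro y hy
          refine ContinuousAt.continuousWithinAt ?_
          refine ContinuousAt.cpow (by fun_prop) (by fun_prop) (Or.inl ?_)
          simp; exact zero_lt_one.trans hy
      · refine (ae_restrict_iff' measurableSet_Ioi).mpr (Eventually.of_forall fun y hy => ?_)
        have hy0 : 0 < y := zero_lt_one.trans hy
        rw [norm_mul, Complex.norm_cpow_eq_rpow_re_of_pos hy0, Complex.norm_real,
          Real.norm_of_nonneg (Chebyshev.psi_nonneg _)]
        calc _ ≤ (Real.log 4 + 4) * y * y ^ (-(s + 1)).re := by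
              gcongr; exact Chebyshev.psi_le_const_mul_self hy0.le
          _ = _ := by
              rw [mul_assoc]; congr 1
              nth_rewrite 1 [← Real.rpow_one y]
              rw [← Real.rpow_add hy0]; congr 1; simp
    have i2 : IntegrableOn (fun y : ℝ => (y : ℂ) ^ (-s)) (Ioi 1) :=
      integrableOn_Ioi_cpow_of_lt (by simpa using hs) zero_lt_one
    have e3 : ∫ y in Ioi (1 : ℝ), ((Chebyshev.psi y - y : ℝ) : ℂ) * (y : ℂ) ^ (-(s + 1))
        = (∫ y in Ioi (1 : ℝ), (Chebyshev.psi y : ℂ) * (y : ℂ) ^ (-(s + 1)))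
          - ∫ y in Ioi (1 : ℝ), (y : ℂ) ^ (-s) := by
      rw [← integral_sub i1 i2]
      refine setIntegral_congr_fun measurableSet_Ioi fun y hy => ?_
      have hy0 : (y : ℂ) ≠ 0 := by
        have : 0 < y := zero_lt_one.trans hy
        exact_mod_cast this.ne'
      have : (y : ℂ) ^ (-s) = y * (y : ℂ) ^ (-(s + 1)) := by
        nth_rewrite 2 [← Complex.cpow_one (y : ℂ)]
        rw [← Complex.cpow_add _ _ hy0]; congr 1; ring
      simp only [this]; push_cast; ring
    rw [e3, integral_Ioi_cpow_of_lt (by simpa using hs) zero_lt_one, e1, e2]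
    simp only [Complex.ofReal_one, Complex.one_cpow]
    have : -s + 1 ≠ 0 := by intro h; apply hs1; linear_combination -h
    field_simp
    ring
  · refine Asymptotics.IsBigO.of_bound (Real.log 4 + 4) (Eventually.of_forall fun n => ?_)
    have := Chebyshev.psi_le_const_mul_self (x := n) (Nat.cast_nonneg n)
    rw [Chebyshev.psi, Nat.floor_natCast] at this
    rw [Real.norm_of_nonneg (Finset.sum_nonneg fun _ _ => ArithmeticFunction.vonMangoldt_nonneg),
      Real.rpow_one, Real.norm_of_nonneg (Nat.cast_nonneg n)]
    exact this

/-- The Mellin transform in `integral_psi_sub`. It extends continuously to `Re s ≥ 1` because `ζ` does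
not vanish on the line `Re s = 1`. -/
noncomputable def bdryFn (s : ℂ) : ℂ :=
  (ArithmeticFunction.vonMangoldt.LFunctionResidueClassAux (1 : ZMod 1) s - 1) / s

lemma continuousOn_bdryFn : ContinuousOn bdryFn {s : ℂ | 1 ≤ s.re} := by
  unfold bdryFn
  refine ContinuousOn.div ((ArithmeticFunction.vonMangoldt.continuousOn_LFunctionResidueClassAux
    (1 : ZMod 1)).sub continuousOn_const) continuousOn_id ?_
  intro s hs h
  change s = 0 at h
  rw [mem_ofPred_eq, h] at hs
  simp at hs; linarith

lemma integrable_psiErr_mul {ε : ℝ} (hε : 0 < ε) :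
    Integrable (fun u => ((psiErr u * Real.exp (-ε * u) : ℝ) : ℂ)) := by
  have h0 : (fun u => psiErr u * Real.exp (-ε * u)) =
      (Ioi (0:ℝ)).indicator (fun u => psiErr u * Real.exp (-ε * u)) := by
    ext u
    by_cases hu : u ∈ Ioi (0:ℝ)
    · rw [indicator_of_mem hu]
    · rw [indicator_of_notMem hu, psiErr, indicator_of_notMem hu, zero_mul]
  refine Integrable.ofReal (f := fun u => psiErr u * Real.exp (-ε * u)) ?_
  rw [h0, integrable_indicator_iff measurableSet_Ioi]
  refine Integrable.mono' ((exp_neg_integrableOn_Ioi 0 hε).const_mul (Real.log 4 + 5)) ?_ ?_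
  · exact (measurable_psiErr.mul (by fun_prop)).aestronglyMeasurable
  · refine Eventually.of_forall fun u => ?_
    rw [norm_mul, Real.norm_of_nonneg (Real.exp_pos _).le]
    gcongr
    exact psiErr_abs_le u

/-- On the line `Re s = 1 + ε` the boundary function is the Fourier transform of the damped error
term (substitute `y = e^u` in the Mellin transform `integral_psi_sub`). -/
lemma fourier_psiErr {ε : ℝ} (hε : 0 < ε) (t : ℝ) :
    𝓕 (fun u => ((psiErr u * Real.exp (-ε * u) : ℝ) : ℂ)) t
      = bdryFn (1 + ε + 2 * Real.pi * t * Complex.I) := by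
  set s : ℂ := 1 + ε + 2 * Real.pi * t * Complex.I with hsdef
  have hs : 1 < s.re := by simp [hsdef]; exact hε
  rw [bdryFn, ← integral_psi_sub hs, ← Real.exp_zero, ← integral_comp_exp_Ioi,
    Real.fourier_real_eq_integral_exp_smul, ← integral_indicator measurableSet_Ioi]
  refine integral_congr_ae (Eventually.of_forall fun u => ?_)
  simp only
  by_cases hu : u ∈ Ioi (0:ℝ)
  · rw [indicator_of_mem hu, psiErr, indicator_of_mem hu, Complex.cpow_def_of_ne_zero
      (by exact_mod_cast (Real.exp_pos u).ne'), ← Complex.ofReal_log (Real.exp_pos u).le,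
      Real.log_exp]
    simp only [smul_eq_mul, Complex.real_smul]
    have : (((Chebyshev.psi (Real.exp u) * Real.exp (-u) - 1) * Real.exp (-ε * u) : ℝ) : ℂ)
        = ((Chebyshev.psi (Real.exp u) - Real.exp u : ℝ) : ℂ) *
          (Complex.exp (-u) * Complex.exp (-ε * u)) := by
      have : (Chebyshev.psi (Real.exp u) * Real.exp (-u) - 1) =
        (Chebyshev.psi (Real.exp u) - Real.exp u) * Real.exp (-u) := by
        rw [sub_mul, ← Real.exp_add]; simp
      rw [this]; push_cast; ring
    rw [this, mul_left_comm, ← Complex.exp_add, ← Complex.exp_add, mul_left_comm, Complex.ofReal_exp,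
      ← Complex.exp_add]
    congr 2
    rw [hsdef]; push_cast; ring
  · rw [indicator_of_notMem hu, psiErr, indicator_of_notMem hu]; simp

lemma continuous_fourierChar_smul (w : ℝ) {f : ℝ → ℂ} (hf : Continuous f) :
    Continuous fun t : ℝ => Real.fourierChar (-(t * w)) • f t := by
  have h1 : Continuous fun t : ℝ => ((Real.fourierChar (-(t * w)) : Circle) : ℂ) :=
    Continuous.comp continuous_subtype_val (Real.continuous_fourierChar.comp (by fun_prop))
  simp only [Circle.smul_def]
  exact Continuous.smul (f := fun t : ℝ => ((Real.fourierChar (-(t * w)) : Circle) : ℂ)) h1 hf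

set_option maxHeartbeats 1000000 in
/-- Wiener–Ikehara: convolving the error with a kernel whose Fourier transform has compact support
gives a function vanishing at infinity. The convolution is a Fourier integral of the boundary
function over a compact set, so the Riemann–Lebesgue lemma applies. -/
lemma tendsto_conv_psiErr {k : ℝ → ℂ} (hk : Continuous k) (hks : HasCompactSupport k)
    (hK : Integrable (𝓕 k)) :
    Tendsto (fun v : ℝ => ∫ u, 𝓕 k (u - v) * (psiErr u : ℂ)) atTop (𝓝 0) := by
  have hki : Integrable k := hk.integrable_of_hasCompactSupport hks
  have hcont : Continuous fun q : ℝ × ℝ => bdryFn (1 + |q.1| + 2 * Real.pi * q.2 * Complex.I) := by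
    refine continuousOn_bdryFn.comp_continuous (by fun_prop) fun q => ?_
    simp
  have hcont1 : ∀ t : ℝ, Continuous fun ε : ℝ =>
      bdryFn (1 + (|ε| : ℝ) + 2 * Real.pi * t * Complex.I) := by
    intro t
    refine continuousOn_bdryFn.comp_continuous (by fun_prop) fun q => ?_
    simp
  have hcont2 : ∀ ε : ℝ, Continuous fun t : ℝ =>
      bdryFn (1 + (|ε| : ℝ) + 2 * Real.pi * t * Complex.I) := by
    intro ε
    refine continuousOn_bdryFn.comp_continuous (by fun_prop) fun q => ?_
    simp
  have key : ∀ v : ℝ, ∫ u, 𝓕 k (u - v) * (psiErr u : ℂ) =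
      ∫ t, Real.fourierChar (-(t * (-v))) • (k t * bdryFn (1 + 2 * Real.pi * t * Complex.I)) := by
    intro v
    have hstep : ∀ ε : ℝ, 0 < ε →
        ∫ u, 𝓕 k (u - v) * ((psiErr u * Real.exp (-ε * u) : ℝ) : ℂ) =
        ∫ t, Real.fourierChar (-(t * (-v))) •
          (k t * bdryFn (1 + (|ε| : ℝ) + 2 * Real.pi * t * Complex.I)) := by
      intro ε hε
      have hInt : Integrable (fun t => Real.fourierChar (-(t * (-v))) • k t) := by
        refine (hki.norm).mono' ?_ (Eventually.of_forall fun t => by simp [Circle.norm_smul])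
        exact (continuous_fourierChar_smul (-v) hk).aestronglyMeasurable
      have := VectorFourier.integral_fourierIntegral_smul_eq_flip (L := innerₗ ℝ)
        Real.continuous_fourierChar continuous_inner hInt (integrable_psiErr_mul hε)
      have e1 : ∀ u, VectorFourier.fourierIntegral Real.fourierChar volume (innerₗ ℝ)
          (fun t => Real.fourierChar (-(t * (-v))) • k t) u = 𝓕 k (u - v) := by
        intro u
        rw [Real.fourier_real_eq, VectorFourier.fourierIntegral]
        refine integral_congr_ae (Eventually.of_forall fun t => ?_)
        simp only [smul_smul, ← AddChar.map_add_eq_mul]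
        congr 2
        simp [innerₗ_apply_apply]; ring
      have e2 : ∀ t, VectorFourier.fourierIntegral Real.fourierChar volume (innerₗ ℝ).flip
          (fun u => ((psiErr u * Real.exp (-ε * u) : ℝ) : ℂ)) t =
          bdryFn (1 + (|ε| : ℝ) + 2 * Real.pi * t * Complex.I) := by
        intro t
        rw [abs_of_pos hε, ← fourier_psiErr hε t, Real.fourier_real_eq, VectorFourier.fourierIntegral]
        refine integral_congr_ae (Eventually.of_forall fun u => ?_)
        simp [innerₗ_apply_apply, mul_comm]
      simp only [e1, e2, smul_eq_mul] at this
      rw [this]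
      refine integral_congr_ae (Eventually.of_forall fun t => ?_)
      simp only [smul_mul_assoc]
    have hL : Tendsto (fun ε : ℝ => ∫ u, 𝓕 k (u - v) * ((psiErr u * Real.exp (-ε * u) : ℝ) : ℂ))
        (𝓝[>] 0) (𝓝 (∫ u, 𝓕 k (u - v) * (psiErr u : ℂ))) := by
      refine tendsto_integral_filter_of_dominated_convergence
        (fun u => ‖𝓕 k (u - v)‖ * (Real.log 4 + 5)) ?_ ?_ ?_ ?_
      · refine Eventually.of_forall fun ε => ?_
        refine ((hK.comp_sub_right v).aestronglyMeasurable).mul ?_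
        exact (Complex.measurable_ofReal.comp
          (measurable_psiErr.mul (by fun_prop))).aestronglyMeasurable
      · filter_upwards [self_mem_nhdsWithin] with ε hε
        refine Eventually.of_forall fun u => ?_
        rw [norm_mul, Complex.norm_real]
        gcongr
        rw [norm_mul, Real.norm_of_nonneg (Real.exp_pos _).le]
        by_cases hu : u ∈ Ioi (0:ℝ)
        · have : Real.exp (-ε * u) ≤ 1 := by
            rw [Real.exp_le_one_iff]; have : 0 < ε * u := mul_pos hε hu
            linarith
          calc _ ≤ ‖psiErr u‖ * 1 := by gcongr
            _ ≤ _ := by rw [mul_one]; exact psiErr_abs_le u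
        · rw [psiErr, indicator_of_notMem hu]; simp
          have : 0 < Real.log 4 := Real.log_pos (by norm_num)
          linarith
      · exact (hK.comp_sub_right v).norm.mul_const _
      · refine Eventually.of_forall fun u => ?_
        refine Tendsto.mono_left ?_ nhdsWithin_le_nhds
        have : Continuous fun ε : ℝ => 𝓕 k (u - v) * ((psiErr u * Real.exp (-ε * u) : ℝ) : ℂ) := by
          fun_prop
        simpa using this.tendsto 0
    have hR : Tendsto (fun ε : ℝ => ∫ t, Real.fourierChar (-(t * (-v))) •
          (k t * bdryFn (1 + (|ε| : ℝ) + 2 * Real.pi * t * Complex.I)))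
        (𝓝[>] 0) (𝓝 (∫ t, Real.fourierChar (-(t * (-v))) •
          (k t * bdryFn (1 + 2 * Real.pi * t * Complex.I)))) := by
      obtain ⟨C, hC⟩ := (isCompact_Icc (a := (0:ℝ)) (b := 1)).prod hks |>.exists_bound_of_continuousOn
        hcont.continuousOn
      refine tendsto_integral_filter_of_dominated_convergence (fun t => ‖k t‖ * C) ?_ ?_ ?_ ?_
      · refine Eventually.of_forall fun ε => ?_
        refine (continuous_fourierChar_smul (-v) (hk.mul ?_)).aestronglyMeasurable
        exact hcont2 ε
      · filter_upwards [Ioo_mem_nhdsGT (zero_lt_one' ℝ)] with ε hε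
        refine Eventually.of_forall fun t => ?_
        rw [Circle.norm_smul, norm_mul]
        by_cases ht : t ∈ tsupport k
        · gcongr
          exact hC (ε, t) ⟨⟨hε.1.le, hε.2.le⟩, ht⟩
        · rw [image_eq_zero_of_notMem_tsupport ht]; simp
      · exact hki.norm.mul_const _
      · refine Eventually.of_forall fun t => ?_
        refine Tendsto.mono_left ?_ nhdsWithin_le_nhds
        have hc : Continuous fun ε : ℝ => bdryFn (1 + (|ε| : ℝ) + 2 * Real.pi * t * Complex.I) :=
          hcont1 t
        have h0 := hc.tendsto 0
        simp only [abs_zero, Complex.ofReal_zero, add_zero] at h0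
        exact (h0.const_mul (k t)).const_smul _
    refine tendsto_nhds_unique hL (hR.congr' ?_)
    filter_upwards [self_mem_nhdsWithin] with ε hε
    exact (hstep ε hε).symm
  simp only [key]
  refine (Real.tendsto_integral_exp_smul_cocompact
    (fun t => k t * bdryFn (1 + 2 * Real.pi * t * Complex.I))).comp ?_
  exact (tendsto_neg_atTop_atBot).mono_right (by rw [cocompact_eq_atBot_atTop]; exact le_sup_left)

end

/-! ### The Fejér kernel and averages of `ψ(e^u) e^{-u}` -/

section

open MeasureTheory Filter Topology Set
open scoped FourierTransform

/-- The triangle function of half-width `R`. -/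
noncomputable def tri (R t : ℝ) : ℂ := ((max 0 (1 - |t| / R) : ℝ) : ℂ)

/-- The Fejér kernel. -/
noncomputable def fejer (u : ℝ) : ℝ := (1 - Real.cos (2 * Real.pi * u)) / (2 * Real.pi ^ 2 * u ^ 2)

lemma fejer_nonneg (u : ℝ) : 0 ≤ fejer u :=
  div_nonneg (by linarith [Real.cos_le_one (2 * Real.pi * u)]) (by positivity)

lemma continuous_tri (R : ℝ) : Continuous (tri R) := by unfold tri; fun_prop

lemma tri_eq_zero {R t : ℝ} (hR : 0 < R) (ht : R ≤ |t|) : tri R t = 0 := by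
  have : 1 - |t| / R ≤ 0 := by rw [sub_nonpos, le_div_iff₀ hR]; linarith
  simp [tri, max_eq_left this]

lemma hasCompactSupport_tri {R : ℝ} (hR : 0 < R) : HasCompactSupport (tri R) := by
  refine HasCompactSupport.intro (isCompact_Icc (a := -R) (b := R)) fun t ht => ?_
  apply tri_eq_zero hR
  by_contra h
  push Not at h
  exact ht ⟨(abs_lt.mp h).1.le, (abs_lt.mp h).2.le⟩

/-- The Fourier transform of the triangle is the rescaled Fejér kernel. The point `u = 0`, where
`fejer` takes the junk value `0`, is excluded; it has measure zero. -/
lemma fourier_tri {R : ℝ} (hR : 0 < R) {u : ℝ} (hu : u ≠ 0) :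
    𝓕 (tri R) u = ((R * fejer (R * u) : ℝ) : ℂ) := by
  rw [Real.fourier_real_eq_integral_exp_smul]
  set a : ℂ := -2 * Real.pi * u * Complex.I with ha
  have ha0 : a ≠ 0 := by
    rw [ha]
    simp [hu, Real.pi_ne_zero]
  have hRc : (R : ℂ) ≠ 0 := by exact_mod_cast hR.ne'
  have e0 : (fun t : ℝ => Complex.exp (↑(-2 * Real.pi * t * u) * Complex.I) • tri R t)
      = fun t : ℝ => Complex.exp (a * t) * tri R t := by
    ext t; rw [smul_eq_mul, ha]; congr 2; push_cast; ring
  rw [e0]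
  have e1 : ∫ t : ℝ, Complex.exp (a * t) * tri R t =
      ∫ t in (-R)..R, Complex.exp (a * t) * tri R t := by
    rw [intervalIntegral.integral_of_le (by linarith),
      setIntegral_eq_integral_of_forall_compl_eq_zero]
    intro t ht
    rw [tri_eq_zero hR, mul_zero]
    by_contra h
    push Not at h
    exact ht ⟨(abs_lt.mp h).1, (abs_lt.mp h).2.le⟩
  have hc : Continuous fun t : ℝ => Complex.exp (a * t) * tri R t := by
    have := continuous_tri R
    fun_prop
  rw [e1, ← intervalIntegral.integral_add_adjacent_intervals (b := 0)
    (hc.intervalIntegrable _ _) (hc.intervalIntegrable _ _)]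
  have e2 : ∫ t in (-R)..0, Complex.exp (a * t) * tri R t =
      (fun t : ℝ => (1 + t / R) * Complex.exp (a * t) / a - Complex.exp (a * t) / (R * a ^ 2)) 0 -
      (fun t : ℝ => (1 + t / R) * Complex.exp (a * t) / a - Complex.exp (a * t) / (R * a ^ 2)) (-R)
      := by
    refine intervalIntegral.integral_eq_sub_of_hasDerivAt
      (f := fun t : ℝ => (1 + t / R) * Complex.exp (a * t) / a - Complex.exp (a * t) / (R * a ^ 2))
      ?_ (hc.intervalIntegrable _ _)
    intro t ht
    rw [uIcc_of_le (by linarith)] at ht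
    have h1 : HasDerivAt (fun t : ℝ => Complex.exp (a * t)) (Complex.exp (a * t) * a) t := by
      have : HasDerivAt (fun t : ℝ => a * (t:ℂ)) a t := by
        simpa using (Complex.ofRealCLM.hasDerivAt (x := t)).const_mul a
      exact this.cexp
    have h2 : HasDerivAt (fun t : ℝ => (1 + (t:ℂ) / R)) (1 / R) t :=
      ((Complex.ofRealCLM.hasDerivAt (x := t)).div_const (R:ℂ)).const_add 1
    convert! ((h2.mul h1).div_const a).sub (h1.div_const (R * a ^ 2)) using 1
    have : tri R t = 1 + t / R := by
      rw [tri, abs_of_nonpos ht.2, max_eq_right]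
      · push_cast; ring
      · rw [sub_nonneg, div_le_one hR]; linarith [ht.1]
    rw [this]
    field_simp
    ring
  have e3 : ∫ t in (0:ℝ)..R, Complex.exp (a * t) * tri R t =
      (fun t : ℝ => (1 - t / R) * Complex.exp (a * t) / a + Complex.exp (a * t) / (R * a ^ 2)) R -
      (fun t : ℝ => (1 - t / R) * Complex.exp (a * t) / a + Complex.exp (a * t) / (R * a ^ 2)) 0
      := by
    refine intervalIntegral.integral_eq_sub_of_hasDerivAt
      (f := fun t : ℝ => (1 - t / R) * Complex.exp (a * t) / a + Complex.exp (a * t) / (R * a ^ 2))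
      ?_ (hc.intervalIntegrable _ _)
    intro t ht
    rw [uIcc_of_le (by linarith)] at ht
    have h1 : HasDerivAt (fun t : ℝ => Complex.exp (a * t)) (Complex.exp (a * t) * a) t := by
      have : HasDerivAt (fun t : ℝ => a * (t:ℂ)) a t := by
        simpa using (Complex.ofRealCLM.hasDerivAt (x := t)).const_mul a
      exact this.cexp
    have h2 : HasDerivAt (fun t : ℝ => (1 - (t:ℂ) / R)) (-(1 / R)) t :=
      ((Complex.ofRealCLM.hasDerivAt (x := t)).div_const (R:ℂ)).const_sub 1
    convert! ((h2.mul h1).div_const a).add (h1.div_const (R * a ^ 2)) using 1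
    have : tri R t = 1 - t / R := by
      rw [tri, abs_of_nonneg ht.1, max_eq_right]
      · push_cast; ring
      · rw [sub_nonneg, div_le_one hR]; linarith [ht.2]
    rw [this]
    field_simp
    ring
  rw [e2, e3]
  have hcos : ((Real.cos (2 * Real.pi * (R * u)) : ℝ) : ℂ) =
      (Complex.exp (a * R) + Complex.exp (-(a * R))) / 2 := by
    rw [Complex.ofReal_cos, Complex.cos, add_comm]
    congr 3 <;> (rw [ha]; push_cast; ring)
  have ha2 : a ^ 2 = -4 * Real.pi ^ 2 * u ^ 2 := by
    rw [ha]; ring_nf; rw [Complex.I_sq]; ring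
  unfold fejer
  push_cast at hcos ⊢
  rw [hcos, mul_neg, ha2]
  have hpi : (Real.pi : ℂ) ≠ 0 := by exact_mod_cast Real.pi_ne_zero
  have huc : (u : ℂ) ≠ 0 := by exact_mod_cast hu
  simp only [mul_zero, Complex.exp_zero]
  field_simp
  ring

lemma measurable_fejer : Measurable fejer := by unfold fejer; fun_prop

lemma integrable_fejer : Integrable fejer := by
  refine Integrable.mono' (integrable_inv_one_add_sq.const_mul 2)
    measurable_fejer.aestronglyMeasurable (Eventually.of_forall fun u => ?_)
  rw [Real.norm_of_nonneg (fejer_nonneg u), fejer]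
  rcases eq_or_ne u 0 with rfl | hu
  · simp
  have hu2 : 0 < u ^ 2 := by positivity
  have hpi : 3 < Real.pi := Real.pi_gt_three
  rw [← div_eq_mul_inv, div_le_div_iff₀ (by positivity) (by positivity)]
  have h1 : 1 - Real.cos (2 * Real.pi * u) ≤ 2 := by linarith [Real.neg_one_le_cos (2 * Real.pi * u)]
  have h2 : 1 - Real.cos (2 * Real.pi * u) ≤ (2 * Real.pi * u) ^ 2 / 2 := by
    linarith [Real.one_sub_sq_div_two_le_cos (x := 2 * Real.pi * u)]
  have : 1 * u ^ 2 ≤ Real.pi ^ 2 * u ^ 2 := by gcongr; nlinarith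
  nlinarith

lemma integral_fejer_pos : 0 < ∫ u, fejer u := by
  rw [integral_pos_iff_support_of_nonneg fejer_nonneg integrable_fejer]
  have : Ioo (0:ℝ) 1 ⊆ Function.support fejer := by
    intro u hu
    rw [Function.mem_support, fejer]
    have h1 : Real.cos (2 * Real.pi * u) ≠ 1 := by
      intro h
      rw [Real.cos_eq_one_iff] at h
      obtain ⟨n, hn⟩ := h
      have hn' : (n : ℝ) = u := by
        have := Real.pi_pos
        have : (2 * Real.pi) * (n - u) = 0 := by linarith
        rcases mul_eq_zero.mp this with h | h
        · linarith
        · linarith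
      rw [← hn'] at hu
      have h1 : 0 < n := by exact_mod_cast hu.1
      have h2 : n < 1 := by exact_mod_cast hu.2
      omega
    have := hu.1
    have h2 : 1 - Real.cos (2 * Real.pi * u) ≠ 0 := sub_ne_zero.mpr h1.symm
    have := Real.pi_pos
    positivity
  refine lt_of_lt_of_le ?_ (measure_mono this)
  simp

/-- `ψ(e^u) e^{-u}`. -/
noncomputable def psiN (u : ℝ) : ℝ := Chebyshev.psi (Real.exp u) * Real.exp (-u)

lemma psiN_nonneg (u : ℝ) : 0 ≤ psiN u := mul_nonneg (Chebyshev.psi_nonneg _) (Real.exp_pos _).le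

lemma psiN_le (u : ℝ) : psiN u ≤ Real.log 4 + 4 := by
  calc _ ≤ (Real.log 4 + 4) * Real.exp u * Real.exp (-u) := by
        unfold psiN; gcongr; exact Chebyshev.psi_le_const_mul_self (Real.exp_pos u).le
    _ = Real.log 4 + 4 := by rw [mul_assoc, ← Real.exp_add]; simp

/-- Monotonicity of `ψ` as a one-sided slow-decrease condition; this is the Tauberian hypothesis. -/
lemma psiN_le_exp_mul {u v : ℝ} (h : u ≤ v) : psiN u ≤ Real.exp (v - u) * psiN v := by
  unfold psiN
  have : Chebyshev.psi (Real.exp u) ≤ Chebyshev.psi (Real.exp v) :=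
    Chebyshev.psi_mono (Real.exp_le_exp.mpr h)
  calc _ ≤ Chebyshev.psi (Real.exp v) * Real.exp (-u) := by gcongr
    _ = _ := by rw [mul_left_comm, ← Real.exp_add]; ring_nf

lemma measurable_psiN : Measurable psiN := by
  have : Measurable Chebyshev.psi := Chebyshev.psi_mono.measurable
  unfold psiN; fun_prop

lemma integrable_fejer_scaled {R : ℝ} (hR : 0 < R) (v : ℝ) :
    Integrable fun u => R * fejer (R * (u - v)) :=
  ((integrable_fejer.comp_mul_left' hR.ne').comp_sub_right v).const_mul R

lemma integral_scaled {R : ℝ} (hR : 0 < R) (v : ℝ) {f : ℝ → ℝ} :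
    ∫ u, R * f (R * (u - v)) = ∫ u, f u := by
  rw [integral_sub_right_eq_self (fun u => R * f (R * u)) v, integral_const_mul,
    Measure.integral_comp_mul_left, abs_of_pos (inv_pos.mpr hR), smul_eq_mul, ← mul_assoc,
    mul_inv_cancel₀ hR.ne', one_mul]

lemma integral_fejer_scaled {R : ℝ} (hR : 0 < R) (v : ℝ) :
    ∫ u, R * fejer (R * (u - v)) = ∫ u, fejer u := integral_scaled hR v

lemma integrable_fejer_psiN {R : ℝ} (hR : 0 < R) (v : ℝ) :
    Integrable fun u => R * fejer (R * (u - v)) * psiN u := by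
  refine (integrable_fejer_scaled hR v).mul_bdd (c := Real.log 4 + 4)
    measurable_psiN.aestronglyMeasurable ?_
  exact Eventually.of_forall fun u => by rw [Real.norm_of_nonneg (psiN_nonneg u)]; exact psiN_le u

/-- The Fejér averages of `ψ(e^u) e^{-u}` converge: the error contributes `o(1)` by
`tendsto_conv_psiErr`. -/
lemma tendsto_fejer_psiN {R : ℝ} (hR : 0 < R) :
    Tendsto (fun v => ∫ u, R * fejer (R * (u - v)) * psiN u) atTop (𝓝 (∫ u, fejer u)) := by
  have hF : ∀ v : ℝ, ∀ᵐ u : ℝ, 𝓕 (tri R) (u - v) = ((R * fejer (R * (u - v)) : ℝ) : ℂ) := by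
    intro v
    have : ∀ᵐ u : ℝ, u ≠ v := by simp [ae_iff]
    filter_upwards [this] with u hu
    exact fourier_tri hR (sub_ne_zero.mpr hu)
  have hK : Integrable (𝓕 (tri R)) := by
    have := (integrable_fejer_scaled hR 0).ofReal (𝕜 := ℂ)
    refine this.congr ?_
    filter_upwards [hF 0] with u hu
    simp only [sub_zero] at hu ⊢
    exact hu.symm
  have h1 := tendsto_conv_psiErr (continuous_tri R) (hasCompactSupport_tri hR) hK
  have h2 : Tendsto (fun v : ℝ => ∫ u, R * fejer (R * (u - v)) * psiErr u) atTop (𝓝 0) := by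
    have h3 : ∀ v : ℝ, ∫ u, 𝓕 (tri R) (u - v) * (psiErr u : ℂ) =
        ((∫ u, R * fejer (R * (u - v)) * psiErr u : ℝ) : ℂ) := by
      intro v
      refine Eq.trans (integral_congr_ae ?_) integral_ofReal
      filter_upwards [hF v] with u hu
      rw [hu, ← Complex.ofReal_mul]; rfl
    simp only [h3] at h1
    exact_mod_cast (Complex.continuous_re.tendsto _).comp h1
  have h4 : Tendsto (fun v : ℝ => ∫ u in Ioi (0:ℝ), R * fejer (R * (u - v))) atTop
      (𝓝 (∫ u, fejer u)) := by
    have h5 : ∀ v : ℝ, ∫ u in Ioi (0:ℝ), R * fejer (R * (u - v)) =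
        ∫ u, (Ioi (-v)).indicator (fun u => R * fejer (R * u)) u := by
      intro v
      rw [← integral_indicator measurableSet_Ioi,
        ← integral_sub_right_eq_self ((Ioi (-v)).indicator (fun u => R * fejer (R * u))) v]
      refine integral_congr_ae (Eventually.of_forall fun u => ?_)
      simp [indicator, mem_Ioi]
    simp only [h5]
    have h6 : ∫ u, fejer u = ∫ u, R * fejer (R * u) := by
      rw [← integral_fejer_scaled hR 0]; simp
    have hi : Integrable fun u => R * fejer (R * u) := by
      simpa using integrable_fejer_scaled hR 0
    rw [h6]
    refine tendsto_integral_filter_of_dominated_convergence (fun u => R * fejer (R * u)) ?_ ?_ hi ?_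
    · exact Eventually.of_forall fun v => hi.aestronglyMeasurable.indicator measurableSet_Ioi
    · refine Eventually.of_forall fun v => Eventually.of_forall fun u => ?_
      refine (norm_indicator_le_norm_self _ _).trans ?_
      rw [Real.norm_of_nonneg (mul_nonneg hR.le (fejer_nonneg _))]
    · refine Eventually.of_forall fun u => ?_
      refine tendsto_const_nhds.congr' ?_
      filter_upwards [eventually_gt_atTop (-u)] with v hv
      rw [indicator_of_mem (by simp; linarith)]
  have h7 := h2.add h4
  rw [zero_add] at h7
  refine h7.congr fun v => ?_
  rw [← integral_indicator measurableSet_Ioi, ← integral_add]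
  · refine integral_congr_ae (Eventually.of_forall fun u => ?_)
    by_cases hu : u ∈ Ioi (0:ℝ)
    · simp only [psiErr, indicator_of_mem hu, psiN]; ring
    · have : psiN u = 0 := by
        rw [psiN, Chebyshev.psi_eq_zero_of_le_one, zero_mul]
        rw [Real.exp_le_one_iff]; simpa using hu
      simp only [psiErr, indicator_of_notMem hu, this]; simp
  · refine (integrable_fejer_scaled hR v).mul_bdd (c := Real.log 4 + 5)
      measurable_psiErr.aestronglyMeasurable (Eventually.of_forall psiErr_abs_le)
  · exact (integrable_fejer_scaled hR v).indicator measurableSet_Ioi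

/-- The mass of the Fejér kernel outside `[-y, y]` tends to zero. -/
lemma tendsto_fejer_tail :
    Tendsto (fun y : ℝ => ∫ u in (Icc (-y) y)ᶜ, fejer u) atTop (𝓝 0) := by
  have : ∀ y : ℝ, ∫ u in (Icc (-y) y)ᶜ, fejer u =
      ∫ u, ((Icc (-y) y)ᶜ).indicator fejer u := fun y =>
    (integral_indicator measurableSet_Icc.compl).symm
  simp only [this]
  rw [show (0:ℝ) = ∫ u : ℝ, (0:ℝ) by simp]
  refine tendsto_integral_filter_of_dominated_convergence fejer ?_ ?_ integrable_fejer ?_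
  · exact Eventually.of_forall fun v =>
      measurable_fejer.aestronglyMeasurable.indicator measurableSet_Icc.compl
  · refine Eventually.of_forall fun v => Eventually.of_forall fun u => ?_
    refine (norm_indicator_le_norm_self _ _).trans ?_
    rw [Real.norm_of_nonneg (fejer_nonneg _)]
  · refine Eventually.of_forall fun u => ?_
    refine tendsto_const_nhds.congr' ?_
    filter_upwards [eventually_ge_atTop |u|] with v hv
    rw [indicator_of_notMem]
    simpa using abs_le.mp hv

/-- For every `η > 0` there is a scale with small tail outside `[-δ, δ]`. -/
lemma exists_scale {δ η : ℝ} (hδ : 0 < δ) (hη : 0 < η) :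
    ∃ R : ℝ, 0 < R ∧ ∀ v : ℝ, ∫ u in (Icc (v - δ) (v + δ))ᶜ, R * fejer (R * (u - v)) ≤ η := by
  have h1 : Tendsto (fun R : ℝ => ∫ u in (Icc (-(R * δ)) (R * δ))ᶜ, fejer u) atTop (𝓝 0) :=
    tendsto_fejer_tail.comp (tendsto_id.atTop_mul_const hδ)
  obtain ⟨R, hR, hR0⟩ := ((h1.eventually (ge_mem_nhds hη)).and (eventually_gt_atTop 0)).exists
  refine ⟨R, hR0, fun v => le_of_eq_of_le ?_ hR⟩
  rw [← integral_indicator measurableSet_Icc.compl, ← integral_indicator measurableSet_Icc.compl,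
    ← integral_scaled hR0 v (f := ((Icc (-(R * δ)) (R * δ))ᶜ).indicator fejer)]
  refine integral_congr_ae (Eventually.of_forall fun u => ?_)
  have hiff : u ∈ (Icc (v - δ) (v + δ))ᶜ ↔ R * (u - v) ∈ (Icc (-(R * δ)) (R * δ))ᶜ := by
    rw [mem_compl_iff, mem_compl_iff, not_iff_not, mem_Icc, mem_Icc]
    constructor
    · rintro ⟨h1, h2⟩; constructor <;> nlinarith
    · rintro ⟨h1, h2⟩
      constructor
      · by_contra h; push Not at h; nlinarith
      · by_contra h; push Not at h; nlinarith
  by_cases hu : u ∈ (Icc (v - δ) (v + δ))ᶜ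
  · simp only [indicator_of_mem hu, indicator_of_mem (hiff.mp hu)]
  · simp only [indicator_of_notMem hu, indicator_of_notMem (hiff.not.mp hu), mul_zero]

end

/-! ### The prime number theorem -/

section

open MeasureTheory Filter Topology Set

/-- Mass of the rescaled Fejér kernel inside the window. -/
lemma fejer_window {R δ η : ℝ} (hR : 0 < R) {v : ℝ}
    (h : ∫ u in (Icc (v - δ) (v + δ))ᶜ, R * fejer (R * (u - v)) ≤ η) :
    (∫ u, fejer u) - η ≤ ∫ u in Icc (v - δ) (v + δ), R * fejer (R * (u - v)) := by
  have := integral_add_compl (s := Icc (v - δ) (v + δ)) measurableSet_Icc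
    (integrable_fejer_scaled hR v)
  rw [integral_fejer_scaled hR v] at this
  linarith

/-- Slow decrease bounds the value at the left end of the window by the Fejér average. -/
lemma psiN_upper {R δ η : ℝ} (hR : 0 < R) (v : ℝ)
    (h : ∫ u in (Icc (v - δ) (v + δ))ᶜ, R * fejer (R * (u - v)) ≤ η) :
    psiN (v - δ) * Real.exp (-(2 * δ)) * ((∫ u, fejer u) - η) ≤
      ∫ u, R * fejer (R * (u - v)) * psiN u := by
  have h0 : ∀ u, 0 ≤ R * fejer (R * (u - v)) := fun u => mul_nonneg hR.le (fejer_nonneg _)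
  calc _ ≤ psiN (v - δ) * Real.exp (-(2 * δ)) *
        ∫ u in Icc (v - δ) (v + δ), R * fejer (R * (u - v)) := by
        gcongr
        · exact mul_nonneg (psiN_nonneg _) (Real.exp_pos _).le
        · exact fejer_window hR h
    _ = ∫ u in Icc (v - δ) (v + δ), psiN (v - δ) * Real.exp (-(2 * δ)) *
          (R * fejer (R * (u - v))) := (integral_const_mul _ _).symm
    _ ≤ ∫ u in Icc (v - δ) (v + δ), R * fejer (R * (u - v)) * psiN u := by
        refine setIntegral_mono_on ((integrable_fejer_scaled hR v).const_mul _).integrableOn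
          (integrable_fejer_psiN hR v).integrableOn measurableSet_Icc fun u hu => ?_
        rw [mul_comm]
        gcongr
        · exact h0 u
        · have h1 := psiN_le_exp_mul hu.1
          have h2 : Real.exp (u - (v - δ)) ≤ Real.exp (2 * δ) :=
            Real.exp_le_exp.mpr (by linarith [hu.2])
          calc psiN (v - δ) * Real.exp (-(2 * δ))
              ≤ (Real.exp (2 * δ) * psiN u) * Real.exp (-(2 * δ)) := by
                gcongr
                exact h1.trans (by gcongr; exact psiN_nonneg u)
            _ = psiN u := by rw [mul_right_comm, ← Real.exp_add]; simp
    _ ≤ _ := setIntegral_le_integral (integrable_fejer_psiN hR v)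
          (Eventually.of_forall fun u => mul_nonneg (h0 u) (psiN_nonneg u))

/-- Slow decrease bounds the Fejér average by the value at the right end of the window. -/
lemma psiN_lower {R δ η : ℝ} (hR : 0 < R) (v : ℝ)
    (h : ∫ u in (Icc (v - δ) (v + δ))ᶜ, R * fejer (R * (u - v)) ≤ η) :
    ∫ u, R * fejer (R * (u - v)) * psiN u ≤
      Real.exp (2 * δ) * psiN (v + δ) * (∫ u, fejer u) + (Real.log 4 + 4) * η := by
  have h0 : ∀ u, 0 ≤ R * fejer (R * (u - v)) := fun u => mul_nonneg hR.le (fejer_nonneg _)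
  have hl : 0 ≤ Real.log 4 := Real.log_nonneg (by norm_num)
  rw [← integral_add_compl (s := Icc (v - δ) (v + δ)) measurableSet_Icc
    (integrable_fejer_psiN hR v)]
  refine add_le_add ?_ ?_
  · calc _ ≤ ∫ u in Icc (v - δ) (v + δ), Real.exp (2 * δ) * psiN (v + δ) *
          (R * fejer (R * (u - v))) := by
          refine setIntegral_mono_on (integrable_fejer_psiN hR v).integrableOn
            ((integrable_fejer_scaled hR v).const_mul _).integrableOn measurableSet_Icc
            fun u hu => ?_
          rw [mul_comm]
          gcongr
          · exact h0 u
          · refine (psiN_le_exp_mul hu.2).trans ?_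
            gcongr
            · exact psiN_nonneg _
            · linarith [hu.1]
      _ ≤ ∫ u, Real.exp (2 * δ) * psiN (v + δ) * (R * fejer (R * (u - v))) :=
          setIntegral_le_integral ((integrable_fejer_scaled hR v).const_mul _)
            (Eventually.of_forall fun u => mul_nonneg
              (mul_nonneg (Real.exp_pos _).le (psiN_nonneg _)) (h0 u))
      _ = _ := by rw [integral_const_mul, integral_fejer_scaled hR]
  · calc _ ≤ ∫ u in (Icc (v - δ) (v + δ))ᶜ, (Real.log 4 + 4) * (R * fejer (R * (u - v))) := by
          refine setIntegral_mono_on (integrable_fejer_psiN hR v).integrableOn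
            ((integrable_fejer_scaled hR v).const_mul _).integrableOn measurableSet_Icc.compl
            fun u hu => ?_
          rw [mul_comm]
          gcongr
          · exact h0 u
          · exact psiN_le u
      _ ≤ _ := by rw [integral_const_mul]; gcongr

lemma tendsto_psiN : Tendsto psiN atTop (𝓝 1) := by
  set c := ∫ u, fejer u with hc
  have hc0 : 0 < c := integral_fejer_pos
  have hl : 0 ≤ Real.log 4 := Real.log_nonneg (by norm_num)
  -- choice of a small parameter `t`, with window `δ = t` and tail mass `η = t`
  rw [tendsto_order]
  constructor
  · intro b hb
    have hlim : Tendsto (fun t : ℝ => Real.exp (-(2 * t)) * (c - t - (Real.log 4 + 4) * t) / c)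
        (𝓝[>] 0) (𝓝 1) := by
      have : ContinuousAt (fun t : ℝ => Real.exp (-(2 * t)) * (c - t - (Real.log 4 + 4) * t) / c) 0 :=
        by fun_prop
      have h := this.tendsto
      simp [hc0.ne'] at h
      exact h.mono_left nhdsWithin_le_nhds
    obtain ⟨t, ht1, ht0⟩ := ((hlim.eventually (lt_mem_nhds hb)).and
      self_mem_nhdsWithin).exists
    have ht0 : 0 < t := ht0
    obtain ⟨R, hR, htail⟩ := exists_scale ht0 ht0
    have h1 := (tendsto_fejer_psiN hR).eventually (lt_mem_nhds (show c - t < c by linarith))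
    have h2 : Tendsto (fun x : ℝ => x - t) atTop atTop := tendsto_atTop_add_const_right _ _ tendsto_id
    filter_upwards [h2.eventually h1] with x hx
    have h3 := psiN_lower hR (x - t) (htail _)
    rw [sub_add_cancel, ← hc] at h3
    refine ht1.trans_le ?_
    rw [div_le_iff₀ hc0]
    calc _ ≤ Real.exp (-(2 * t)) * (Real.exp (2 * t) * psiN x * c) := by gcongr; linarith
      _ = Real.exp (-(2 * t)) * Real.exp (2 * t) * (psiN x * c) := by ring
      _ = _ := by rw [← Real.exp_add]; simp
  · intro b hb
    have hlim : Tendsto (fun t : ℝ => Real.exp (2 * t) * (c + t) / (c - t)) (𝓝[>] 0) (𝓝 1) := by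
      have : ContinuousAt (fun t : ℝ => Real.exp (2 * t) * (c + t) / (c - t)) 0 :=
        ContinuousAt.div (by fun_prop) (by fun_prop) (by simpa using hc0.ne')
      have h := this.tendsto
      simp [hc0.ne'] at h
      exact h.mono_left nhdsWithin_le_nhds
    have hlt : ∀ᶠ t : ℝ in 𝓝[>] 0, t < c := nhdsWithin_le_nhds (gt_mem_nhds hc0)
    obtain ⟨t, ⟨ht1, htc⟩, ht0⟩ := (((hlim.eventually (gt_mem_nhds hb)).and hlt).and
      self_mem_nhdsWithin).exists
    have ht0 : 0 < t := ht0
    obtain ⟨R, hR, htail⟩ := exists_scale ht0 ht0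
    have h1 := (tendsto_fejer_psiN hR).eventually (gt_mem_nhds (show c < c + t by linarith))
    have h2 : Tendsto (fun x : ℝ => x + t) atTop atTop := tendsto_atTop_add_const_right _ _ tendsto_id
    filter_upwards [h2.eventually h1] with x hx
    have h3 := psiN_upper hR (x + t) (htail _)
    rw [add_sub_cancel_right, ← hc] at h3
    refine lt_of_le_of_lt ?_ ht1
    rw [le_div_iff₀ (by linarith)]
    calc _ = Real.exp (2 * t) * Real.exp (-(2 * t)) * (psiN x * (c - t)) := by
          rw [← Real.exp_add]; simp
      _ = Real.exp (2 * t) * (psiN x * Real.exp (-(2 * t)) * (c - t)) := by ring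
      _ ≤ _ := by gcongr; linarith

/-- The prime number theorem: `ψ(x) ~ x`. -/
theorem tendsto_psi_div : Tendsto (fun x : ℝ => Chebyshev.psi x / x) atTop (𝓝 1) := by
  refine (tendsto_psiN.comp Real.tendsto_log_atTop).congr' ?_
  filter_upwards [eventually_gt_atTop 0] with x hx
  simp [psiN, Real.exp_log hx, Real.exp_neg, div_eq_mul_inv]

/-- The prime number theorem in the form `θ(x) ~ x`. -/
theorem tendsto_theta_div : Tendsto (fun x : ℝ => Chebyshev.theta x / x) atTop (𝓝 1) := by
  have h : Tendsto (fun x : ℝ => (Chebyshev.psi x - Chebyshev.theta x) / x) atTop (𝓝 0) := by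
    have h1 : Tendsto (fun x : ℝ => 2 * (Real.log x / x ^ (1 / 2 : ℝ))) atTop (𝓝 0) := by
      simpa using ((isLittleO_log_rpow_atTop (by norm_num : (0:ℝ) < 1/2)).tendsto_div_nhds_zero).const_mul 2
    refine squeeze_zero_norm' ?_ h1
    filter_upwards [eventually_ge_atTop 1] with x hx
    have hx0 : 0 < x := by linarith
    rw [norm_div, Real.norm_eq_abs, Real.norm_of_nonneg hx0.le, div_le_iff₀ hx0]
    refine (Chebyshev.abs_psi_sub_theta_le_sqrt_mul_log hx).trans (le_of_eq ?_)
    rw [← Real.sqrt_eq_rpow]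
    have hs : √x ≠ 0 := (Real.sqrt_pos.mpr hx0).ne'
    field_simp
    rw [Real.sq_sqrt hx0.le, mul_comm]
  have := tendsto_psi_div.sub h
  rw [sub_zero] at this
  refine this.congr fun x => ?_
  ring

end

/-! ### Sums of powers of primes -/

section

open MeasureTheory Filter Topology Set

/-- `∑_{p ≤ X} p^k log p`. -/
noncomputable def primePowLog (k : ℕ) (X : ℝ) : ℝ :=
  ∑ p ∈ Finset.Icc 0 ⌊X⌋₊ with p.Prime, (p : ℝ) ^ k * Real.log p

/-- `∑_{p ≤ X} p^k`. -/
noncomputable def primePow (k : ℕ) (X : ℝ) : ℝ :=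
  ∑ p ∈ Finset.Icc 0 ⌊X⌋₊ with p.Prime, (p : ℝ) ^ k

/-- Abel summation against `θ`, with the integral rescaled to `[0, 1]`. -/
lemma primePowLog_eq (k : ℕ) {X : ℝ} (hX : 0 < X) :
    primePowLog (k + 1) X = X ^ (k + 1) * Chebyshev.theta X -
      X ^ (k + 1) * ∫ s in (0:ℝ)..1, ((k + 1 : ℕ) : ℝ) * s ^ k * Chebyshev.theta (X * s) := by
  let a : ℕ → ℝ := fun n => if n.Prime then Real.log n else 0
  have hth : ∀ t : ℝ, ∑ n ∈ Finset.Icc 0 ⌊t⌋₊, a n = Chebyshev.theta t := fun t => by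
    rw [Chebyshev.theta_eq_sum_Icc, Finset.sum_filter]
  have h1 : primePowLog (k + 1) X = ∑ n ∈ Finset.Icc 0 ⌊X⌋₊, (n : ℝ) ^ (k + 1) * a n := by
    rw [primePowLog, Finset.sum_filter]
    refine Finset.sum_congr rfl fun n _ => ?_
    by_cases h : n.Prime <;> simp [a, h]
  have h2 := sum_mul_eq_sub_integral_mul (c := a) (f := fun t : ℝ => t ^ (k + 1)) (b := X) hX.le
    (fun t _ => by fun_prop) (by
      refine Continuous.integrableOn_Icc ?_
      have : deriv (fun t : ℝ => t ^ (k + 1)) = fun t : ℝ => ((k + 1 : ℕ) : ℝ) * t ^ k := by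
        ext t; simp
      rw [this]; fun_prop)
  rw [h1, h2]
  simp only [hth]
  congr 1
  rw [← intervalIntegral.integral_of_le hX.le]
  have h3 := intervalIntegral.mul_integral_comp_mul_left (a := 0) (b := 1)
    (f := fun t : ℝ => ((k + 1 : ℕ) : ℝ) * t ^ k * Chebyshev.theta t) X
  rw [mul_zero, mul_one] at h3
  have h4 : ∫ t in (0:ℝ)..X, deriv (fun t : ℝ => t ^ (k + 1)) t * Chebyshev.theta t =
      ∫ t in (0:ℝ)..X, ((k + 1 : ℕ) : ℝ) * t ^ k * Chebyshev.theta t :=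
    intervalIntegral.integral_congr fun t _ => by simp
  rw [h4, ← h3, pow_succ', mul_assoc, ← intervalIntegral.integral_const_mul (X ^ k)]
  congr 1
  refine intervalIntegral.integral_congr fun t _ => ?_
  simp only [mul_pow]
  ring

lemma tendsto_primePowLog {k : ℕ} (hk : 1 ≤ k) :
    Tendsto (fun X : ℝ => primePowLog k X / X ^ (k + 1)) atTop (𝓝 (1 / (k + 1))) := by
  obtain ⟨k, rfl⟩ : ∃ j, k = j + 1 := ⟨k - 1, by omega⟩
  have hth : ∀ s : ℝ, 0 < s → Tendsto (fun X : ℝ => Chebyshev.theta (X * s) / X) atTop (𝓝 s) := by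
    intro s hs
    have h := (tendsto_theta_div.comp (tendsto_id.atTop_mul_const hs)).mul_const s
    rw [one_mul] at h
    refine h.congr fun X => ?_
    simp only [Function.comp, id]
    field_simp
  have h1 : Tendsto (fun X : ℝ => ∫ s in (0:ℝ)..1,
      ((k + 1 : ℕ) : ℝ) * s ^ k * (Chebyshev.theta (X * s) / X)) atTop
      (𝓝 (∫ s in (0:ℝ)..1, ((k + 1 : ℕ) : ℝ) * s ^ k * s)) := by
    refine intervalIntegral.tendsto_integral_filter_of_dominated_convergence
      (fun s => ((k + 1 : ℕ) : ℝ) * s ^ k * (Real.log 4 * s)) ?_ ?_ ?_ ?_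
    · refine Eventually.of_forall fun X => Measurable.aestronglyMeasurable ?_
      have : Measurable Chebyshev.theta := Chebyshev.theta_mono.measurable
      fun_prop
    · filter_upwards [eventually_gt_atTop 0] with X hX
      refine Eventually.of_forall fun s hs => ?_
      rw [uIoc_of_le zero_le_one] at hs
      have hs0 := hs.1
      rw [Real.norm_of_nonneg (by have := Chebyshev.theta_nonneg (X * s); positivity)]
      gcongr
      rw [div_le_iff₀ hX]
      linarith [Chebyshev.theta_le_log4_mul_x (x := X * s) (by positivity)]
    · exact Continuous.intervalIntegrable (by fun_prop) _ _
    · refine Eventually.of_forall fun s hs => ?_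
      rw [uIoc_of_le zero_le_one] at hs
      exact (hth s hs.1).const_mul _
  have h2 : ∫ s in (0:ℝ)..1, ((k + 1 : ℕ) : ℝ) * s ^ k * s = (k + 1) / (k + 2) := by
    have : ∀ s : ℝ, ((k + 1 : ℕ) : ℝ) * s ^ k * s = ((k + 1 : ℕ) : ℝ) * s ^ (k + 1) :=
      fun s => by ring
    simp only [this]
    rw [intervalIntegral.integral_const_mul, integral_pow]
    simp
    field_simp
    ring
  rw [h2] at h1
  have h3 := tendsto_theta_div.sub h1
  have e : (1:ℝ) - (k + 1) / (k + 2) = 1 / (((k + 1 : ℕ) : ℝ) + 1) := by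
    push_cast; field_simp; ring
  rw [e] at h3
  refine h3.congr' ?_
  filter_upwards [eventually_gt_atTop 0] with X hX
  rw [primePowLog_eq k hX]
  have : ∫ s in (0:ℝ)..1, ((k + 1 : ℕ) : ℝ) * s ^ k * (Chebyshev.theta (X * s) / X) =
      (∫ s in (0:ℝ)..1, ((k + 1 : ℕ) : ℝ) * s ^ k * Chebyshev.theta (X * s)) / X := by
    rw [← intervalIntegral.integral_div]
    refine intervalIntegral.integral_congr fun s _ => ?_
    ring
  rw [this]
  field_simp
  ring

lemma primePow_nonneg (k : ℕ) (X : ℝ) : 0 ≤ primePow k X :=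
  Finset.sum_nonneg fun _ _ => by positivity

lemma primePow_le (k : ℕ) {X : ℝ} (hX : 0 ≤ X) : primePow k X ≤ X ^ (k + 1) := by
  calc primePow k X ≤ ∑ p ∈ Finset.Icc 0 ⌊X⌋₊ with p.Prime, X ^ k := by
        refine Finset.sum_le_sum fun p hp => ?_
        simp only [Finset.mem_filter, Finset.mem_Icc] at hp
        gcongr
        exact (Nat.le_floor_iff hX).mp hp.1.2
    _ ≤ ∑ p ∈ Finset.Icc 1 ⌊X⌋₊, X ^ k := by
        refine Finset.sum_le_sum_of_subset_of_nonneg ?_ fun _ _ _ => by positivity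
        intro p hp
        simp only [Finset.mem_filter, Finset.mem_Icc] at hp ⊢
        exact ⟨hp.2.one_le, hp.1.2⟩
    _ = ⌊X⌋₊ * X ^ k := by simp
    _ ≤ X * X ^ k := by gcongr; exact Nat.floor_le hX
    _ = X ^ (k + 1) := by ring

lemma primePowLog_le (k : ℕ) {X : ℝ} (hX : 1 ≤ X) :
    primePowLog k X ≤ primePow k X * Real.log X := by
  rw [primePow, Finset.sum_mul]
  refine Finset.sum_le_sum fun p hp => ?_
  simp only [Finset.mem_filter, Finset.mem_Icc] at hp
  have : 0 < (p : ℝ) := by exact_mod_cast hp.2.pos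
  gcongr
  exact (Nat.le_floor_iff (by linarith)).mp hp.1.2

/-- Primes `p > Y` satisfy `log Y ≤ log p`, and those with `p ≤ Y` are estimated trivially. -/
lemma primePow_mul_log_le (k : ℕ) {X Y : ℝ} (hY : 1 < Y) :
    primePow k X * Real.log Y ≤ Y ^ (k + 1) * Real.log Y + primePowLog k X := by
  have hl : 0 < Real.log Y := Real.log_pos hY
  rw [primePow, Finset.sum_mul]
  calc _ ≤ ∑ p ∈ Finset.Icc 0 ⌊X⌋₊ with p.Prime,
        ((if p ≤ ⌊Y⌋₊ then (p : ℝ) ^ k * Real.log Y else 0) + (p : ℝ) ^ k * Real.log p) := by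
        refine Finset.sum_le_sum fun p hp => ?_
        simp only [Finset.mem_filter, Finset.mem_Icc] at hp
        have hp1 : (1 : ℝ) ≤ p := by exact_mod_cast hp.2.one_le
        split_ifs with h
        · have := Real.log_nonneg hp1
          have : 0 ≤ (p : ℝ) ^ k * Real.log p := by positivity
          linarith
        · rw [zero_add]
          gcongr
          exact (Nat.floor_lt (by linarith)).mp (not_le.mp h) |>.le
    _ = (∑ p ∈ (Finset.Icc 0 ⌊X⌋₊).filter Nat.Prime,
          (if p ≤ ⌊Y⌋₊ then (p : ℝ) ^ k * Real.log Y else 0)) + primePowLog k X := by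
        rw [Finset.sum_add_distrib, primePowLog]
    _ ≤ primePow k Y * Real.log Y + primePowLog k X := by
        gcongr
        rw [← Finset.sum_filter, primePow, Finset.sum_mul]
        refine Finset.sum_le_sum_of_subset_of_nonneg ?_ fun _ _ _ => by positivity
        intro p hp
        simp only [Finset.mem_filter, Finset.mem_Icc] at hp ⊢
        exact ⟨⟨hp.1.1.1, hp.2⟩, hp.1.2⟩
    _ ≤ _ := by gcongr; exact primePow_le k (by linarith)

/-- The weight `log p` is removed by taking `Y = X^{1-ε}` in `primePow_mul_log_le`. -/
lemma tendsto_primePow {k : ℕ} (hk : 1 ≤ k) :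
    Tendsto (fun X : ℝ => primePow k X * Real.log X / X ^ (k + 1)) atTop (𝓝 (1 / (k + 1))) := by
  have hP := tendsto_primePowLog hk
  rw [tendsto_order]
  constructor
  · intro b hb
    filter_upwards [hP.eventually (lt_mem_nhds hb), eventually_ge_atTop 1] with X hX h1
    refine hX.trans_le ?_
    gcongr
    exact primePowLog_le k h1
  · intro b hb
    -- cut the sum at `X ^ r` with `r < 1` close to `1`
    have hlim : Tendsto (fun r : ℝ => r⁻¹ * (1 / ((k:ℝ) + 1))) (𝓝[<] 1) (𝓝 (1 / ((k:ℝ) + 1))) := by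
      have : ContinuousAt (fun r : ℝ => r⁻¹ * (1 / ((k:ℝ) + 1))) 1 :=
        ContinuousAt.mul (continuousAt_inv₀ one_ne_zero) continuousAt_const
      have h := this.tendsto
      rw [inv_one, one_mul] at h
      exact h.mono_left nhdsWithin_le_nhds
    have hr0 : ∀ᶠ r : ℝ in 𝓝[<] 1, 0 < r := nhdsWithin_le_nhds (lt_mem_nhds one_pos)
    obtain ⟨r, ⟨hrb, hr0⟩, hr1⟩ := (((hlim.eventually (gt_mem_nhds hb)).and hr0).and
      self_mem_nhdsWithin).exists
    have hr1 : r < 1 := hr1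
    have hexp : 0 < (1 - r) * (k + 1) := by
      have : (0:ℝ) < 1 - r := by linarith
      positivity
    have h0 : Tendsto (fun X : ℝ => Real.log X / X ^ ((1 - r) * (k + 1))) atTop (𝓝 0) :=
      (isLittleO_log_rpow_atTop hexp).tendsto_div_nhds_zero
    have h1 := h0.add (hP.const_mul r⁻¹)
    rw [zero_add] at h1
    filter_upwards [h1.eventually (gt_mem_nhds hrb), eventually_gt_atTop 1] with X hX hX1
    refine lt_of_le_of_lt ?_ hX
    have hX0 : 0 < X := by linarith
    have hl : 0 < Real.log X := Real.log_pos hX1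
    have h2 := primePow_mul_log_le k (X := X) (Real.one_lt_rpow hX1 hr0)
    rw [Real.log_rpow hX0] at h2
    have h3 : (X ^ r) ^ (k + 1) = X ^ (k + 1) / X ^ ((1 - r) * (k + 1)) := by
      rw [← Real.rpow_natCast, ← Real.rpow_natCast, ← Real.rpow_mul hX0.le, ← Real.rpow_sub hX0]
      congr 1; push_cast; ring
    rw [h3] at h2
    have hE : 0 < X ^ ((1 - r) * ((k:ℝ) + 1)) := by positivity
    rw [div_le_iff₀ (by positivity)]
    set E := X ^ ((1 - r) * ((k:ℝ) + 1))
    calc primePow k X * Real.log X = r⁻¹ * (primePow k X * (r * Real.log X)) := by field_simp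
      _ ≤ r⁻¹ * (X ^ (k + 1) / E * (r * Real.log X) + primePowLog k X) := by gcongr
      _ = _ := by field_simp

lemma exists_primePow_le {k : ℕ} (hk : 1 ≤ k) :
    ∃ C : ℝ, 0 < C ∧ ∀ X : ℝ, 1 ≤ X → primePow k X ≤ C * (X ^ (k + 1) / (1 + Real.log X)) := by
  have h := (tendsto_primePow hk).eventually (gt_mem_nhds (show 1 / ((k:ℝ) + 1) < 2 by
    rw [div_lt_iff₀ (by positivity)]; linarith [(Nat.cast_nonneg k : (0:ℝ) ≤ k)]))
  obtain ⟨X0, hX0⟩ := eventually_atTop.mp h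
  have hm : 1 ≤ max X0 (Real.exp 1) := le_max_of_le_right (by simp)
  refine ⟨4 + (1 + Real.log (max X0 (Real.exp 1))), by have := Real.log_nonneg hm; linarith,
    fun X hX => ?_⟩
  have hl : 0 ≤ Real.log X := Real.log_nonneg hX
  have hX' : 0 < X := by linarith
  have hlm := Real.log_nonneg hm
  rw [← mul_div_assoc, le_div_iff₀ (by linarith)]
  rcases le_total X (max X0 (Real.exp 1)) with h1 | h1
  · calc _ ≤ X ^ (k + 1) * (1 + Real.log (max X0 (Real.exp 1))) := by
          gcongr
          exact primePow_le k hX'.le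
      _ ≤ _ := by
          rw [mul_comm]
          exact mul_le_mul_of_nonneg_right (by linarith) (by positivity)
  · have h2 := hX0 X (le_of_max_le_left h1)
    rw [div_lt_iff₀ (by positivity)] at h2
    have h3 : 1 ≤ Real.log X := by
      rw [Real.le_log_iff_exp_le hX']; exact le_of_max_le_right h1
    have h4 := primePow_nonneg k X
    have h5 : 0 < X ^ (k + 1) := by positivity
    calc _ ≤ primePow k X * (2 * Real.log X) := by gcongr; linarith
      _ ≤ 4 * X ^ (k + 1) := by linarith
      _ ≤ _ := by gcongr; linarith

end

/-! ### The summatory function of the divisor weights -/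

section

open MeasureTheory Filter Topology Set

/-- `a` is the `k`-th power of a prime. -/
def IsPk (k a : ℕ) : Prop := ∃ p : ℕ, p.Prime ∧ a = p ^ k

open Classical in
/-- Sum of the divisors of `m` that are `k`-th powers of primes. -/
noncomputable def sig (k m : ℕ) : ℕ := ∑ a ∈ m.divisors with IsPk k a, a

/-- The summatory function of `sig`. -/
noncomputable def sigSum (k : ℕ) (y : ℝ) : ℝ := ∑ m ∈ Finset.Ioc 0 ⌊y⌋₊, (sig k m : ℝ)

lemma IsPk.pos {k a : ℕ} (h : IsPk k a) : 0 < a := by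
  obtain ⟨p, hp, rfl⟩ := h; exact pow_pos hp.pos k

open Classical in
lemma sum_IsPk {k : ℕ} (hk : 1 ≤ k) {y : ℝ} (hy : 0 ≤ y) :
    ∑ a ∈ Finset.Ioc 0 ⌊y⌋₊, (if IsPk k a then (a : ℝ) else 0) = primePow k (y ^ (1 / (k:ℝ))) := by
  have hk0 : (k:ℝ) ≠ 0 := by positivity
  rw [← Finset.sum_filter, primePow]
  symm
  refine Finset.sum_bij (fun p _ => p ^ k) ?_ ?_ ?_ ?_
  · intro p hp
    simp only [Finset.mem_filter, Finset.mem_Icc, Finset.mem_Ioc] at hp ⊢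
    refine ⟨⟨pow_pos hp.2.pos k, ?_⟩, p, hp.2, rfl⟩
    rw [Nat.le_floor_iff hy]
    have := (Nat.le_floor_iff (by positivity)).mp hp.1.2
    push_cast
    calc (p:ℝ) ^ k ≤ (y ^ (1 / (k:ℝ))) ^ k := by gcongr
      _ = y := by rw [← Real.rpow_natCast, ← Real.rpow_mul hy, one_div_mul_cancel hk0, Real.rpow_one]
  · intro p _ q _ h
    exact Nat.pow_left_injective (by omega) h
  · intro a ha
    simp only [Finset.mem_filter, Finset.mem_Ioc] at ha
    obtain ⟨⟨_, h1⟩, p, hp, rfl⟩ := ha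
    refine ⟨p, ?_, rfl⟩
    simp only [Finset.mem_filter, Finset.mem_Icc]
    refine ⟨⟨Nat.zero_le _, ?_⟩, hp⟩
    rw [Nat.le_floor_iff (by positivity)]
    rw [Nat.le_floor_iff hy] at h1
    push_cast at h1
    calc (p:ℝ) = ((p:ℝ) ^ k) ^ (1 / (k:ℝ)) := by
          rw [← Real.rpow_natCast, ← Real.rpow_mul (by positivity), mul_one_div_cancel hk0,
            Real.rpow_one]
      _ ≤ _ := by gcongr
  · intro p _; push_cast; rfl

/-- `R(y) = ∑_{p^k ≤ y} p^k`. -/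
noncomputable def pkSum (k : ℕ) (y : ℝ) : ℝ := primePow k (y ^ (1 / (k:ℝ)))

lemma pkSum_nonneg (k : ℕ) (y : ℝ) : 0 ≤ pkSum k y := primePow_nonneg _ _

lemma pkSum_eq_zero {k : ℕ} {y : ℝ} (hy : 0 ≤ y) (h : y < 1) : pkSum k y = 0 := by
  rw [pkSum, primePow]
  refine Finset.sum_eq_zero fun p hp => ?_
  simp only [Finset.mem_filter, Finset.mem_Icc] at hp
  have h1 : y ^ (1 / (k:ℝ)) ≤ 1 := Real.rpow_le_one hy h.le (by positivity)
  have h2 := (Nat.floor_mono h1).trans_eq Nat.floor_one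
  have := hp.2.two_le
  omega

open Classical in
/-- Writing each multiple of `a` as `a j` and summing over `a` first. Terms with `j + 1 > y`
vanish. -/
lemma sigSum_eq_tsum {k : ℕ} (hk : 1 ≤ k) {y : ℝ} (hy : 0 ≤ y) :
    sigSum k y = ∑' j : ℕ, pkSum k (y / (j + 1)) := by
  let c : ArithmeticFunction ℝ := ⟨fun a => if IsPk k a then (a : ℝ) else 0, by simp⟩
  have h1 : sigSum k y = ∑ m ∈ Finset.Ioc 0 ⌊y⌋₊, ((ArithmeticFunction.zeta : ArithmeticFunction ℝ) * c) m := by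
    refine Finset.sum_congr rfl fun m _ => ?_
    rw [ArithmeticFunction.coe_zeta_mul_apply, sig, Finset.sum_filter]
    push_cast
    rfl
  rw [h1, ArithmeticFunction.sum_Ioc_mul_eq_sum_sum]
  have h2 : ∑' j : ℕ, pkSum k (y / (j + 1)) = ∑ j ∈ Finset.range ⌊y⌋₊, pkSum k (y / (j + 1)) := by
    refine tsum_eq_sum fun j hj => ?_
    rw [Finset.mem_range, not_lt] at hj
    refine pkSum_eq_zero (by positivity) ?_
    rw [div_lt_one (by positivity)]
    have := Nat.lt_floor_add_one y
    have : (⌊y⌋₊ : ℝ) ≤ j := by exact_mod_cast hj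
    linarith
  rw [h2]
  symm
  refine Finset.sum_bij (fun j _ => j + 1) ?_ ?_ ?_ ?_
  · intro j hj; simp at hj ⊢; omega
  · intro i _ j _ h; simpa using h
  · intro b hb; simp at hb; exact ⟨b - 1, by simp; omega, by omega⟩
  · intro j hj
    rw [pkSum, ← sum_IsPk hk (by positivity), ← Nat.cast_add_one, Nat.floor_div_natCast]
    simp [c, ArithmeticFunction.zeta_apply]

lemma tendsto_pkSum {k : ℕ} (hk : 1 ≤ k) :
    Tendsto (fun y : ℝ => pkSum k y * Real.log y / y ^ (1 + 1 / (k:ℝ))) atTop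
      (𝓝 (1 / (1 + 1 / (k:ℝ)))) := by
  have hk0 : (0:ℝ) < k := by positivity
  have h1 : Tendsto (fun y : ℝ => y ^ (1 / (k:ℝ))) atTop atTop := tendsto_rpow_atTop (by positivity)
  have h2 := ((tendsto_primePow hk).comp h1).const_mul (k:ℝ)
  have e : (k:ℝ) * (1 / (k + 1)) = 1 / (1 + 1 / (k:ℝ)) := by field_simp
  rw [e] at h2
  refine h2.congr' ?_
  filter_upwards [eventually_gt_atTop 0] with y hy
  simp only [Function.comp, pkSum]
  rw [Real.log_rpow hy, ← Real.rpow_natCast, ← Real.rpow_mul hy.le]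
  have : 1 / (k:ℝ) * ((k + 1 : ℕ) : ℝ) = 1 + 1 / (k:ℝ) := by push_cast; field_simp
  rw [this]
  field_simp

lemma exists_pkSum_le {k : ℕ} (hk : 1 ≤ k) :
    ∃ C : ℝ, 0 < C ∧ ∀ y : ℝ, 1 ≤ y →
      pkSum k y ≤ C * (y ^ (1 + 1 / (k:ℝ)) / (1 + Real.log y)) := by
  obtain ⟨C, hC, h⟩ := exists_primePow_le hk
  have hk0 : (1:ℝ) ≤ k := by exact_mod_cast hk
  refine ⟨C * k, by positivity, fun y hy => ?_⟩
  have hy0 : 0 < y := by linarith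
  have h1 := h (y ^ (1 / (k:ℝ))) (Real.one_le_rpow hy (by positivity))
  have hl := Real.log_nonneg hy
  have e1 : 1 / (k:ℝ) * ((k + 1 : ℕ) : ℝ) = 1 + 1 / (k:ℝ) := by push_cast; field_simp
  rw [Real.log_rpow hy0, ← Real.rpow_natCast, ← Real.rpow_mul hy0.le, e1] at h1
  refine h1.trans ?_
  rw [mul_assoc]
  gcongr
  rw [← mul_div_assoc, div_le_div_iff₀ (by positivity) (by positivity)]
  have : 1 + Real.log y ≤ k * (1 + 1 / k * Real.log y) := by
    rw [mul_add, ← mul_assoc, mul_one_div_cancel (by positivity)]; linarith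
  calc _ ≤ y ^ (1 + 1 / (k:ℝ)) * (k * (1 + 1 / k * Real.log y)) := by gcongr
    _ = _ := by ring

lemma summable_majorant {k : ℕ} (hk : 1 ≤ k) :
    Summable fun j : ℕ => ((j:ℝ) + 1) ^ (-(1 + 1 / (k:ℝ))) * (1 + Real.log (j + 1)) := by
  have hk0 : (1:ℝ) ≤ k := by exact_mod_cast hk
  set ε : ℝ := 1 / (2 * k) with hε
  have hε0 : 0 < ε := by positivity
  have h1 : Summable fun j : ℕ => ((j:ℝ) + 1) ^ (-(1 + ε)) := by
    have := (Real.summable_nat_rpow (p := -(1 + ε))).mpr (by linarith)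
    have := (summable_nat_add_iff 1).mpr this
    simpa using this
  refine Summable.of_nonneg_of_le (fun j => ?_) (fun j => ?_) (h1.mul_left (1 + 1 / ε))
  · have : 0 ≤ Real.log ((j:ℝ) + 1) := Real.log_nonneg (by linarith [(Nat.cast_nonneg j : (0:ℝ) ≤ j)])
    positivity
  · have hj : (1:ℝ) ≤ j + 1 := by linarith [(Nat.cast_nonneg j : (0:ℝ) ≤ j)]
    have h2 := Real.log_le_rpow_div (x := (j:ℝ) + 1) (by linarith) hε0
    have h3 : 1 ≤ ((j:ℝ) + 1) ^ ε := Real.one_le_rpow hj hε0.le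
    calc _ ≤ ((j:ℝ) + 1) ^ (-(1 + 1 / (k:ℝ))) * ((1 + 1 / ε) * ((j:ℝ) + 1) ^ ε) := by
          gcongr
          rw [add_mul, one_mul, one_div_mul_eq_div]; linarith
      _ = (1 + 1 / ε) * (((j:ℝ) + 1) ^ (-(1 + 1 / (k:ℝ))) * ((j:ℝ) + 1) ^ ε) := by ring
      _ = _ := by
          rw [← Real.rpow_add (by linarith)]
          congr 2
          rw [hε]; field_simp; ring

/-- Majorant, uniform in `y`, for dominated convergence in `tendsto_sigSum`. -/
lemma pkSum_term_le {k : ℕ} {C : ℝ} (hC : 0 < C)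
    (h : ∀ y : ℝ, 1 ≤ y → pkSum k y ≤ C * (y ^ (1 + 1 / (k:ℝ)) / (1 + Real.log y)))
    {y : ℝ} (hy : 1 ≤ y) (j : ℕ) :
    pkSum k (y / (j + 1)) * (1 + Real.log y) / y ^ (1 + 1 / (k:ℝ)) ≤
      C * (((j:ℝ) + 1) ^ (-(1 + 1 / (k:ℝ))) * (1 + Real.log (j + 1))) := by
  have hj : (1:ℝ) ≤ j + 1 := by linarith [(Nat.cast_nonneg j : (0:ℝ) ≤ j)]
  have hj0 : (0:ℝ) < j + 1 := by linarith
  have hlj := Real.log_nonneg hj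
  have hy0 : 0 < y := by linarith
  rcases lt_or_ge (y / (j + 1)) 1 with h1 | h1
  · rw [pkSum_eq_zero (by positivity) h1]
    simp only [zero_mul, zero_div]
    positivity
  · have h2 := h _ h1
    have hl := Real.log_nonneg h1
    have hly := Real.log_nonneg hy
    rw [div_le_iff₀ (by positivity)]
    have h3 : 1 + Real.log y ≤ (1 + Real.log (y / (j + 1))) * (1 + Real.log (j + 1)) := by
      rw [Real.log_div hy0.ne' hj0.ne'] at hl ⊢
      nlinarith
    calc _ ≤ C * ((y / (j + 1)) ^ (1 + 1 / (k:ℝ)) / (1 + Real.log (y / (j + 1)))) *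
          ((1 + Real.log (y / (j + 1))) * (1 + Real.log (j + 1))) := by
          gcongr
      _ = C * ((y / (j + 1)) ^ (1 + 1 / (k:ℝ)) * (1 + Real.log (j + 1))) := by
          field_simp
      _ = _ := by
          rw [Real.div_rpow hy0.le hj0.le, Real.rpow_neg hj0.le]
          field_simp

lemma zetaR_eq {s : ℝ} (hs : 1 < s) : (riemannZeta (s : ℂ)).re = ∑' j : ℕ, ((j:ℝ) + 1) ^ (-s) := by
  rw [zeta_eq_tsum_one_div_nat_add_one_cpow (by simpa using hs)]
  have : ∀ j : ℕ, 1 / ((j:ℂ) + 1) ^ (s : ℂ) = ((((j:ℝ) + 1) ^ (-s) : ℝ) : ℂ) := by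
    intro j
    rw [Real.rpow_neg (by positivity), Complex.ofReal_inv, Complex.ofReal_cpow (by positivity)]
    push_cast
    rw [one_div]
  simp only [this]
  rw [← Complex.ofReal_tsum, Complex.ofReal_re]

/-- `∑_{m ≤ y} σ(m) ~ (ζ(κ)/κ) y^κ / log y` with `κ = 1 + 1/k`, by dominated convergence in
`sigSum_eq_tsum`. -/
lemma tendsto_sigSum {k : ℕ} (hk : 1 ≤ k) :
    Tendsto (fun y : ℝ => sigSum k y * Real.log y / y ^ (1 + 1 / (k:ℝ))) atTop
      (𝓝 ((riemannZeta ((1 + 1 / (k:ℝ) : ℝ) : ℂ)).re / (1 + 1 / (k:ℝ)))) := by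
  have hk0 : (1:ℝ) ≤ k := by exact_mod_cast hk
  obtain ⟨C, hC, hb⟩ := exists_pkSum_le hk
  rw [zetaR_eq (by simp; omega), ← tsum_div_const]
  have h1 : Tendsto (fun y : ℝ => ∑' j : ℕ,
      pkSum k (y / (j + 1)) * Real.log y / y ^ (1 + 1 / (k:ℝ))) atTop
      (𝓝 (∑' j : ℕ, ((j:ℝ) + 1) ^ (-(1 + 1 / (k:ℝ))) / (1 + 1 / (k:ℝ)))) := by
    refine tendsto_tsum_of_dominated_convergence ((summable_majorant hk).mul_left C) ?_ ?_
    · intro j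
      have hj0 : (0:ℝ) < j + 1 := by positivity
      have h2 : Tendsto (fun y : ℝ => y / ((j:ℝ) + 1)) atTop atTop := tendsto_id.atTop_div_const hj0
      have h3 := (tendsto_pkSum hk).comp h2
      have h4 : Tendsto (fun y : ℝ => 1 + Real.log (j + 1) / Real.log (y / ((j:ℝ) + 1))) atTop (𝓝 1) := by
        have := (tendsto_const_nhds (x := Real.log ((j:ℝ) + 1))).div_atTop
          (Real.tendsto_log_atTop.comp h2)
        simpa using this.const_add 1
      have h5 := (h3.mul h4).mul_const (((j:ℝ) + 1) ^ (-(1 + 1 / (k:ℝ))))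
      have e : 1 / (1 + 1 / (k:ℝ)) * 1 * ((j:ℝ) + 1) ^ (-(1 + 1 / (k:ℝ))) =
        ((j:ℝ) + 1) ^ (-(1 + 1 / (k:ℝ))) / (1 + 1 / (k:ℝ)) := by ring
      rw [e] at h5
      refine h5.congr' ?_
      filter_upwards [eventually_gt_atTop 1, h2.eventually (eventually_gt_atTop 1)] with y hy hy2
      have hl := Real.log_pos hy2
      have hy0 : 0 < y := by linarith
      simp only [Function.comp]
      have e1 : 1 + Real.log (j + 1) / Real.log (y / (j + 1)) =
          Real.log y / Real.log (y / (j + 1)) := by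
        rw [eq_div_iff hl.ne', add_mul, div_mul_cancel₀ _ hl.ne', Real.log_div hy0.ne' hj0.ne']
        ring
      rw [e1, Real.div_rpow hy0.le hj0.le, Real.rpow_neg hj0.le]
      field_simp
    · filter_upwards [eventually_ge_atTop 1] with y hy j
      have hl := Real.log_nonneg hy
      have hp := pkSum_nonneg k (y / (j + 1))
      rw [Real.norm_of_nonneg (by positivity)]
      refine le_trans ?_ (pkSum_term_le hC hb hy j)
      gcongr
      linarith
  refine h1.congr' ?_
  filter_upwards [eventually_ge_atTop 0] with y hy
  rw [sigSum_eq_tsum hk hy, ← tsum_mul_right, ← tsum_div_const]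

lemma sigSum_nonneg (k : ℕ) (y : ℝ) : 0 ≤ sigSum k y := Finset.sum_nonneg fun _ _ => by positivity

lemma sigSum_mono (k : ℕ) : Monotone (sigSum k) := by
  intro x y h
  refine Finset.sum_le_sum_of_subset_of_nonneg ?_ fun _ _ _ => by positivity
  exact Finset.Ioc_subset_Ioc_right (Nat.floor_mono h)

lemma exists_sigSum_le {k : ℕ} (hk : 1 ≤ k) :
    ∃ C : ℝ, 0 < C ∧ ∀ y : ℝ, 1 ≤ y →
      sigSum k y * (1 + Real.log y) ≤ C * y ^ (1 + 1 / (k:ℝ)) := by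
  obtain ⟨C, hC, hb⟩ := exists_pkSum_le hk
  have hs := (summable_majorant hk).mul_left C
  refine ⟨(∑' j : ℕ, C * (((j:ℝ) + 1) ^ (-(1 + 1 / (k:ℝ))) * (1 + Real.log (j + 1)))) + 1, ?_,
    fun y hy => ?_⟩
  · have : 0 ≤ ∑' j : ℕ, C * (((j:ℝ) + 1) ^ (-(1 + 1 / (k:ℝ))) * (1 + Real.log (j + 1))) := by
      refine tsum_nonneg fun j => ?_
      have : 0 ≤ Real.log ((j:ℝ) + 1) := Real.log_nonneg (by linarith [(Nat.cast_nonneg j : (0:ℝ) ≤ j)])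
      positivity
    linarith
  · have hy0 : 0 < y := by linarith
    have hl := Real.log_nonneg hy
    rw [← div_le_iff₀ (by positivity), sigSum_eq_tsum hk hy0.le, ← tsum_mul_right, ← tsum_div_const]
    refine le_trans (Summable.tsum_le_tsum (pkSum_term_le hC hb hy) ?_ hs) (by linarith)
    refine Summable.of_nonneg_of_le (fun j => ?_) (pkSum_term_le hC hb hy) hs
    have hp := pkSum_nonneg k (y / (j + 1))
    positivity

end

/-! ### Laplace transforms and the scale `T_n` -/

section

open MeasureTheory Filter Topology Set

lemma summable_sig_exp {s : ℕ → ℝ} (h0 : ∀ m, 0 ≤ s m) (h2 : ∀ m, s m ≤ (m:ℝ) ^ 2) {r : ℝ}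
    (hr : 0 < r) : Summable fun m : ℕ => s m * Real.exp (-(r * m)) := by
  refine Summable.of_nonneg_of_le (fun m => by have := h0 m; positivity) (fun m => ?_)
    (Real.summable_pow_mul_exp_neg_nat_mul 2 hr)
  rw [neg_mul]
  gcongr
  exact h2 m

/-- Laplace transforms as integrals of the summatory function. -/
lemma tsum_eq_integral {s : ℕ → ℝ} (hs0 : s 0 = 0) (h0 : ∀ m, 0 ≤ s m)
    (h2 : ∀ m, s m ≤ (m:ℝ) ^ 2) {T c : ℝ} (hT : 0 < T) (hc : 0 < c) :
    ∑' m : ℕ, s m * Real.exp (-(c * m / T)) =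
      ∫ t in Ioi (0:ℝ), c * Real.exp (-(c * t)) * ∑ m ∈ Finset.Ioc 0 ⌊t * T⌋₊, s m := by
  have hI : ∀ a : ℝ, ∫ t in Ioi a, c * Real.exp (-(c * t)) = Real.exp (-(c * a)) := by
    intro a
    rw [integral_const_mul]
    have := integral_exp_mul_Ioi (a := -c) (by linarith) a
    simp only [neg_mul] at this
    rw [this]; field_simp
  have hInt : IntegrableOn (fun t => c * Real.exp (-(c * t))) (Ioi 0) := by
    have := (integrableOn_exp_mul_Ioi (a := -c) (by linarith) 0).const_mul c
    simpa [neg_mul, IntegrableOn] using this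
  let F : ℕ → ℝ → ℝ := fun m => (Ici ((m:ℝ) / T)).indicator
    (fun t => s m * (c * Real.exp (-(c * t))))
  have hF0 : ∀ m t, 0 ≤ F m t := fun m t =>
    indicator_nonneg (fun t _ => by have := h0 m; positivity) t
  have hFi : ∀ m, Integrable (F m) (volume.restrict (Ioi 0)) := fun m =>
    (hInt.const_mul (s m)).indicator measurableSet_Ici
  have hFv : ∀ m, ∫ t in Ioi (0:ℝ), F m t = s m * Real.exp (-(c * m / T)) := by
    intro m
    rcases Nat.eq_zero_or_pos m with rfl | hm
    · simp [F, hs0]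
    · have hpos : 0 < (m:ℝ) / T := by positivity
      simp only [F]
      rw [setIntegral_indicator measurableSet_Ici]
      have : Ioi (0:ℝ) ∩ Ici ((m:ℝ) / T) = Ici ((m:ℝ) / T) :=
        inter_eq_right.mpr fun t ht => lt_of_lt_of_le hpos ht
      rw [this, integral_const_mul, integral_Ici_eq_integral_Ioi, hI, mul_div_assoc]
  have h1 := integral_tsum_of_summable_integral_norm (μ := volume.restrict (Ioi 0)) hFi (by
    have : ∀ m, ∫ t in Ioi (0:ℝ), ‖F m t‖ = s m * Real.exp (-((c / T) * m)) := by
      intro m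
      simp only [Real.norm_of_nonneg (hF0 m _)]
      rw [hFv]; ring_nf
    simp only [this]
    exact summable_sig_exp h0 h2 (by positivity))
  simp only [hFv] at h1
  rw [h1]
  refine setIntegral_congr_fun measurableSet_Ioi fun t ht => ?_
  have ht : 0 < t := ht
  rw [Finset.mul_sum, tsum_eq_sum (s := Finset.Ioc 0 ⌊t * T⌋₊)]
  · refine Finset.sum_congr rfl fun m hm => ?_
    rw [Finset.mem_Ioc, Nat.le_floor_iff (by positivity)] at hm
    rw [show F m t = _ from indicator_of_mem (by
      rw [mem_Ici, div_le_iff₀ hT]; exact hm.2) _]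
    ring
  · intro m hm
    rw [Finset.mem_Ioc, Nat.le_floor_iff (by positivity), not_and, not_le] at hm
    rcases Nat.eq_zero_or_pos m with rfl | hm0
    · simp [F, hs0]
    · refine indicator_of_notMem ?_ _
      rw [mem_Ici, not_le, lt_div_iff₀ hT]
      exact hm hm0

/-- Abelian theorem: dominated convergence in `tsum_eq_integral` transfers the asymptotics of the
summatory function to the Laplace transform. -/
lemma tendsto_laplace {s : ℕ → ℝ} (hs0 : s 0 = 0) (h0 : ∀ m, 0 ≤ s m)
    (h2 : ∀ m, s m ≤ (m:ℝ) ^ 2) {T : ℕ → ℝ} (hT : ∀ᶠ n in atTop, 0 < T n) {B κ C : ℝ} (hκ : 0 < κ)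
    (hS : ∀ t : ℝ, 0 < t →
      Tendsto (fun n : ℕ => (∑ m ∈ Finset.Ioc 0 ⌊t * T n⌋₊, s m) / n) atTop (𝓝 (B * t ^ κ)))
    (hb : ∀ᶠ n : ℕ in atTop, ∀ t : ℝ, 0 < t →
      (∑ m ∈ Finset.Ioc 0 ⌊t * T n⌋₊, s m) / n ≤ C * (1 + t ^ κ))
    {c : ℝ} (hc : 0 < c) :
    Tendsto (fun n : ℕ => (∑' m : ℕ, s m * Real.exp (-(c * m / T n))) / n) atTop
      (𝓝 (B * Real.Gamma (κ + 1) * c ^ (-κ))) := by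
  have hmain : ∫ t in Ioi (0:ℝ), c * Real.exp (-(c * t)) * (B * t ^ κ) =
      B * Real.Gamma (κ + 1) * c ^ (-κ) := by
    have := Real.integral_rpow_mul_exp_neg_mul_Ioi (a := κ + 1) (by linarith) hc
    rw [add_sub_cancel_right] at this
    calc _ = ∫ t in Ioi (0:ℝ), (c * B) * (t ^ κ * Real.exp (-(c * t))) := by
          congr 1; ext t; ring
      _ = (c * B) * ((1 / c) ^ (κ + 1) * Real.Gamma (κ + 1)) := by rw [integral_const_mul, this]
      _ = _ := by
          rw [one_div, Real.inv_rpow hc.le, Real.rpow_add hc, Real.rpow_one, Real.rpow_neg hc.le]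
          field_simp
  rw [← hmain]
  have h3 : Tendsto (fun n : ℕ => ∫ t in Ioi (0:ℝ), c * Real.exp (-(c * t)) *
      ((∑ m ∈ Finset.Ioc 0 ⌊t * T n⌋₊, s m) / n)) atTop
      (𝓝 (∫ t in Ioi (0:ℝ), c * Real.exp (-(c * t)) * (B * t ^ κ))) := by
    refine tendsto_integral_filter_of_dominated_convergence
      (fun t => c * Real.exp (-(c * t)) * (C * (1 + t ^ κ))) ?_ ?_ ?_ ?_
    · refine Eventually.of_forall fun n => Measurable.aestronglyMeasurable ?_
      have : Measurable fun t : ℝ => ∑ m ∈ Finset.Ioc 0 ⌊t * T n⌋₊, s m :=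
        (measurable_from_nat (f := fun N => ∑ m ∈ Finset.Ioc 0 N, s m)).comp
          (Nat.measurable_floor.comp (measurable_id.mul_const _))
      fun_prop
    · filter_upwards [hb] with n hn
      filter_upwards [ae_restrict_mem measurableSet_Ioi] with t ht
      have : 0 ≤ ∑ m ∈ Finset.Ioc 0 ⌊t * T n⌋₊, s m := Finset.sum_nonneg fun m _ => h0 m
      rw [Real.norm_of_nonneg (by positivity)]
      gcongr
      exact hn t ht
    · have i1 : IntegrableOn (fun t => Real.exp (-(c * t))) (Ioi 0) := by
        have := (integrableOn_exp_mul_Ioi (a := -c) (by linarith) 0)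
        simpa [neg_mul] using this
      have i2 : IntegrableOn (fun t : ℝ => t ^ κ * Real.exp (-(c * t))) (Ioi 0) := by
        have := integrableOn_rpow_mul_exp_neg_mul_rpow (s := κ) (p := 1) (b := c) (by linarith)
          one_pos hc
        simpa [neg_mul] using this
      refine ((i1.add i2).const_mul (c * C)).congr (Eventually.of_forall fun t => ?_)
      simp only [Pi.add_apply]
      ring
    · filter_upwards [ae_restrict_mem measurableSet_Ioi] with t ht
      exact (hS t ht).const_mul _
  refine h3.congr' ?_
  filter_upwards [hT] with n hn
  rw [tsum_eq_integral hs0 h0 h2 hn hc, ← integral_div]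
  congr 1; ext t; ring

/-- The scale `T_n = (n log n)^{k/(k+1)}`. -/
noncomputable def Tk (k : ℕ) (n : ℕ) : ℝ := ((n:ℝ) * Real.log n) ^ ((k:ℝ) / ((k:ℝ) + 1))

lemma Tk_nonneg (k n : ℕ) : 0 ≤ Tk k n := by
  have := Real.log_natCast_nonneg n
  unfold Tk; positivity

lemma Tk_pos (k : ℕ) {n : ℕ} (hn : 2 ≤ n) : 0 < Tk k n := by
  have : 0 < Real.log n := Real.log_pos (by exact_mod_cast hn)
  unfold Tk; positivity

lemma tendsto_mul_log : Tendsto (fun n : ℕ => (n:ℝ) * Real.log n) atTop atTop :=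
  tendsto_natCast_atTop_atTop.atTop_mul_atTop₀ (Real.tendsto_log_atTop.comp tendsto_natCast_atTop_atTop)

lemma tendsto_Tk {k : ℕ} (hk : 1 ≤ k) : Tendsto (Tk k) atTop atTop := by
  have hk0 : (0:ℝ) < k := by positivity
  exact (tendsto_rpow_atTop (by positivity)).comp tendsto_mul_log

lemma Tk_rpow {k : ℕ} (hk : 1 ≤ k) (n : ℕ) : Tk k n ^ (1 + 1 / (k:ℝ)) = n * Real.log n := by
  have hk0 : (0:ℝ) < k := by positivity
  have := Real.log_natCast_nonneg n
  rw [Tk, ← Real.rpow_mul (by positivity)]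
  have : (k:ℝ) / (k + 1) * (1 + 1 / k) = 1 := by field_simp
  rw [this, Real.rpow_one]

lemma log_Tk (k : ℕ) {n : ℕ} (hn : 2 ≤ n) :
    Real.log (Tk k n) = ((k:ℝ) / ((k:ℝ) + 1)) * (Real.log n + Real.log (Real.log n)) := by
  have h1 : 0 < Real.log n := Real.log_pos (by exact_mod_cast hn)
  have h2 : (0:ℝ) < n := by positivity
  rw [Tk, Real.log_rpow (by positivity), Real.log_mul h2.ne' h1.ne']

/-- On the scale `T_n` the factor `log (t T_n)` is asymptotic to `log n / κ`, which cancels the `1/κ`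
in `tendsto_sigSum`. -/
lemma tendsto_sigSum_scaled {k : ℕ} (hk : 1 ≤ k) {t : ℝ} (ht : 0 < t) :
    Tendsto (fun n : ℕ => sigSum k (t * Tk k n) / n) atTop
      (𝓝 ((riemannZeta ((1 + 1 / (k:ℝ) : ℝ) : ℂ)).re * t ^ (1 + 1 / (k:ℝ)))) := by
  have hk0 : (0:ℝ) < k := by positivity
  set κ : ℝ := 1 + 1 / (k:ℝ) with hκ
  have hr : (k:ℝ) / (k + 1) = 1 / κ := by rw [hκ]; field_simp
  have hκ0 : 0 < κ := by positivity
  have hT : Tendsto (fun n : ℕ => t * Tk k n) atTop atTop := (tendsto_Tk hk).const_mul_atTop ht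
  have h1 := (tendsto_sigSum hk).comp hT
  -- `log (t T_n) / log n → 1/κ`
  have hlog : Tendsto (fun n : ℕ => Real.log (n:ℝ)) atTop atTop :=
    Real.tendsto_log_atTop.comp tendsto_natCast_atTop_atTop
  have h2 : Tendsto (fun n : ℕ => Real.log (t * Tk k n) / Real.log n) atTop (𝓝 (1 / κ)) := by
    have a1 : Tendsto (fun n : ℕ => Real.log t / Real.log n) atTop (𝓝 0) :=
      tendsto_const_nhds.div_atTop hlog
    have a2 : Tendsto (fun n : ℕ => Real.log (Real.log n) / Real.log n) atTop (𝓝 0) :=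
      (Real.isLittleO_log_id_atTop.tendsto_div_nhds_zero).comp hlog
    have a3 := a1.add ((a2.const_add 1).const_mul (1 / κ))
    rw [add_zero, mul_one, zero_add] at a3
    refine a3.congr' ?_
    filter_upwards [eventually_ge_atTop 2] with n hn
    have hl : 0 < Real.log n := Real.log_pos (by exact_mod_cast hn)
    rw [Real.log_mul ht.ne' (Tk_pos k hn).ne', log_Tk k hn, hr]
    field_simp
  have h3 := (h1.div h2 (by positivity)).mul_const (t ^ κ)
  have e : (riemannZeta ((κ : ℝ) : ℂ)).re / κ / (1 / κ) * t ^ κ =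
      (riemannZeta ((κ : ℝ) : ℂ)).re * t ^ κ := by field_simp
  rw [e] at h3
  refine h3.congr' ?_
  filter_upwards [eventually_ge_atTop 2, hT.eventually (eventually_gt_atTop 1)] with n hn hn1
  have hl : 0 < Real.log n := Real.log_pos (by exact_mod_cast hn)
  have hl2 := Real.log_pos hn1
  have hn0 : (0:ℝ) < n := by positivity
  simp only [Function.comp, Pi.div_apply]
  rw [← hκ, Real.mul_rpow ht.le (Tk_nonneg k n), Tk_rpow hk]
  have := Real.rpow_pos_of_pos ht κ
  field_simp

lemma exists_sigSum_scaled_le {k : ℕ} (hk : 1 ≤ k) :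
    ∃ C : ℝ, ∀ᶠ n : ℕ in atTop, ∀ t : ℝ, 0 < t →
      sigSum k (t * Tk k n) / n ≤ C * (1 + t ^ (1 + 1 / (k:ℝ))) := by
  have hk0 : (0:ℝ) < k := by positivity
  set κ : ℝ := 1 + 1 / (k:ℝ) with hκ
  have hr : (k:ℝ) / (k + 1) = 1 / κ := by rw [hκ]; field_simp
  have hκ0 : 0 < κ := by positivity
  obtain ⟨C, hC, hb⟩ := exists_sigSum_le hk
  refine ⟨C * κ, ?_⟩
  have hlog : Tendsto (fun n : ℕ => Real.log (n:ℝ)) atTop atTop :=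
    Real.tendsto_log_atTop.comp tendsto_natCast_atTop_atTop
  filter_upwards [eventually_ge_atTop 2, (tendsto_Tk hk).eventually (eventually_ge_atTop 1),
    hlog.eventually (eventually_ge_atTop 1)] with n hn hT hl1
  have hn0 : (0:ℝ) < n := by positivity
  have key : ∀ t : ℝ, 1 ≤ t → sigSum k (t * Tk k n) / n ≤ C * κ * t ^ κ := by
    intro t ht
    have h1 := hb (t * Tk k n) (by nlinarith)
    rw [Real.mul_rpow (by linarith) (Tk_nonneg k n), Tk_rpow hk] at h1
    have h2 : Real.log n / κ ≤ 1 + Real.log (t * Tk k n) := by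
      rw [Real.log_mul (by linarith) (by linarith), log_Tk k hn, hr]
      have := Real.log_nonneg ht
      have h3 : 0 ≤ 1 / κ * Real.log (Real.log n) := mul_nonneg (by positivity) (Real.log_nonneg hl1)
      rw [mul_add, one_div_mul_eq_div]
      linarith
    have h4 : sigSum k (t * Tk k n) * (Real.log n / κ) ≤ C * (t ^ κ * (n * Real.log n)) :=
      le_trans (mul_le_mul_of_nonneg_left h2 (sigSum_nonneg _ _)) h1
    rw [div_le_iff₀ hn0]
    have hl0 : 0 < Real.log n := by linarith
    have h5 : sigSum k (t * Tk k n) = sigSum k (t * Tk k n) * (Real.log n / κ) * (κ / Real.log n) := by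
      field_simp
    rw [h5]
    calc _ ≤ C * (t ^ κ * (n * Real.log n)) * (κ / Real.log n) := by gcongr
      _ = _ := by field_simp
  intro t ht
  have h6 := Real.rpow_pos_of_pos ht κ
  rcases le_total 1 t with h | h
  · refine (key t h).trans ?_
    gcongr
    linarith
  · have h7 := key 1 le_rfl
    rw [Real.one_rpow, mul_one] at h7
    calc _ ≤ sigSum k (1 * Tk k n) / n := by
          gcongr
          exact sigSum_mono k (by gcongr)
      _ ≤ C * κ * 1 := by linarith
      _ ≤ _ := by gcongr; linarith

lemma sig_zero (k : ℕ) : sig k 0 = 0 := by simp [sig]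

lemma sig_le (k m : ℕ) : (sig k m : ℝ) ≤ (m:ℝ) ^ 2 := by
  have : sig k m ≤ m ^ 2 := by
    classical
    calc sig k m ≤ ∑ a ∈ m.divisors, a := by
          rw [sig]
          refine (Finset.sum_le_sum_of_subset (Finset.filter_subset _ _)).trans_eq rfl
      _ ≤ ∑ a ∈ m.divisors, m := Finset.sum_le_sum fun a ha => Nat.divisor_le ha
      _ = m.divisors.card * m := by simp
      _ ≤ m * m := by gcongr; exact Nat.card_divisors_le_self m
      _ = m ^ 2 := by ring
  exact_mod_cast this

lemma tendsto_laplace_sig {k : ℕ} (hk : 1 ≤ k) {c : ℝ} (hc : 0 < c) :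
    Tendsto (fun n : ℕ => (∑' m : ℕ, (sig k m : ℝ) * Real.exp (-(c * m / Tk k n))) / n) atTop
      (𝓝 ((riemannZeta ((1 + 1 / (k:ℝ) : ℝ) : ℂ)).re * Real.Gamma ((1 + 1 / (k:ℝ)) + 1) *
        c ^ (-(1 + 1 / (k:ℝ))))) := by
  obtain ⟨C, hC⟩ := exists_sigSum_scaled_le hk
  refine tendsto_laplace (C := C) (by simp [sig_zero]) (fun m => by positivity) (sig_le k) ?_
    (by positivity) (fun t ht => tendsto_sigSum_scaled hk ht) hC hc
  filter_upwards [eventually_ge_atTop 2] with n hn using Tk_pos k hn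

lemma Tk_mono {k m n : ℕ} (h : m ≤ n) : Tk k m ≤ Tk k n := by
  rcases Nat.eq_zero_or_pos m with rfl | hm
  · rcases Nat.eq_zero_or_pos n with rfl | hn
    · rfl
    · rcases Nat.eq_zero_or_pos k with rfl | hk
      · simp [Tk]
      · have : ((k:ℝ) / (k + 1)) ≠ 0 := by positivity
        have h0 : Tk k 0 = 0 := by simp [Tk, Real.zero_rpow this]
        rw [h0]; exact Tk_nonneg _ _
  · have := Real.log_natCast_nonneg m
    unfold Tk
    gcongr

lemma Tk_two_mul {k n : ℕ} (hn : 2 ≤ n) : Tk k (2 * n) ≤ 4 * Tk k n := by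
  have hl : 0 < Real.log n := Real.log_pos (by exact_mod_cast hn)
  have h2 : Real.log 2 ≤ Real.log n := Real.log_le_log (by norm_num) (by exact_mod_cast hn)
  have hlog : Real.log ((2 * n : ℕ) : ℝ) ≤ 2 * Real.log n := by
    push_cast
    rw [Real.log_mul (by norm_num) (by positivity)]; linarith
  have h0 := Real.log_natCast_nonneg (2 * n)
  calc Tk k (2 * n) ≤ (4 * ((n:ℝ) * Real.log n)) ^ ((k:ℝ) / ((k:ℝ) + 1)) := by
        refine Real.rpow_le_rpow (by positivity) ?_ (by positivity)
        push_cast at hlog ⊢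
        calc 2 * (n:ℝ) * Real.log (2 * n) ≤ 2 * n * (2 * Real.log n) := by gcongr
          _ = _ := by ring
    _ = 4 ^ ((k:ℝ) / ((k:ℝ) + 1)) * Tk k n := by
        rw [Real.mul_rpow (by norm_num) (by positivity), Tk]
    _ ≤ 4 ^ (1:ℝ) * Tk k n := by
        gcongr
        · exact Tk_nonneg k n
        · norm_num
        · rw [div_le_one (by positivity)]; linarith
    _ = _ := by norm_num

/-- `n / T_n` beats a positive power of `n`. -/
lemma exists_rpow_le_div_Tk {k : ℕ} (hk : 1 ≤ k) :
    ∃ s : ℝ, 0 < s ∧ ∀ᶠ n : ℕ in atTop, (n:ℝ) ^ s ≤ n / Tk k n := by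
  have hk0 : (0:ℝ) < k := by positivity
  set r : ℝ := (k:ℝ) / ((k:ℝ) + 1) with hr
  have hr0 : 0 < r := by positivity
  have hr1 : r < 1 := by rw [hr, div_lt_one (by positivity)]; linarith
  refine ⟨(1 - r) / 2, by linarith, ?_⟩
  have h1 : Tendsto (fun n : ℕ => Real.log (n:ℝ) / (n:ℝ) ^ ((1 - r) / (2 * r))) atTop (𝓝 0) :=
    ((isLittleO_log_rpow_atTop (show 0 < (1 - r) / (2 * r) by
      have : 0 < 1 - r := by linarith
      positivity)).tendsto_div_nhds_zero).comp tendsto_natCast_atTop_atTop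
  filter_upwards [h1.eventually (gt_mem_nhds one_pos), eventually_ge_atTop 2] with n h hn
  have hn0 : (0:ℝ) < n := by positivity
  rw [div_lt_one (by positivity)] at h
  have hl : 0 < Real.log n := Real.log_pos (by exact_mod_cast hn)
  have hT := Tk_pos k hn
  rw [le_div_iff₀ hT]
  have : Tk k n ≤ (n:ℝ) ^ ((1 + r) / 2) := by
    calc Tk k n ≤ ((n:ℝ) * (n:ℝ) ^ ((1 - r) / (2 * r))) ^ r := by
          unfold Tk; gcongr
      _ = _ := by
          rw [Real.mul_rpow hn0.le (by positivity), ← Real.rpow_mul hn0.le, ← Real.rpow_add hn0]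
          congr 1; field_simp; ring
  calc _ ≤ (n:ℝ) ^ ((1 - r) / 2) * (n:ℝ) ^ ((1 + r) / 2) := by gcongr
    _ = n := by
        rw [← Real.rpow_add hn0, show (1 - r) / 2 + (1 + r) / 2 = 1 by ring, Real.rpow_one]

lemma tendsto_div_Tk {k : ℕ} (hk : 1 ≤ k) : Tendsto (fun n : ℕ => (n:ℝ) / Tk k n) atTop atTop := by
  obtain ⟨s, hs, h⟩ := exists_rpow_le_div_Tk hk
  exact tendsto_atTop_mono' _ h ((tendsto_rpow_atTop hs).comp tendsto_natCast_atTop_atTop)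

lemma tendsto_mul_exp_Tk {k : ℕ} (hk : 1 ≤ k) {ε : ℝ} (hε : 0 < ε) :
    Tendsto (fun n : ℕ => (n:ℝ) * Real.exp (-(ε * (n / Tk k n)))) atTop (𝓝 0) := by
  obtain ⟨s, hs, h⟩ := exists_rpow_le_div_Tk hk
  have h1 : Tendsto (fun x : ℝ => x ^ (1 / s) * Real.exp (-ε * x)) atTop (𝓝 0) :=
    tendsto_rpow_mul_exp_neg_mul_atTop_nhds_zero (1 / s) ε hε
  have h2 := h1.comp ((tendsto_rpow_atTop hs).comp tendsto_natCast_atTop_atTop)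
  refine squeeze_zero' (Eventually.of_forall fun n => by positivity) ?_ h2
  filter_upwards [h] with n hn
  simp only [Function.comp]
  rw [← Real.rpow_mul (by positivity), mul_one_div_cancel hs.ne', Real.rpow_one]
  gcongr
  rw [neg_mul, neg_le_neg_iff]
  gcongr

lemma tendsto_Tk_succ_div {k : ℕ} :
    Tendsto (fun n : ℕ => Tk k (n + 1) / Tk k n) atTop (𝓝 1) := by
  have h0 : Tendsto (fun n : ℕ => ((n:ℝ) + 1) / n) atTop (𝓝 1) := by
    have := (tendsto_one_div_atTop_nhds_zero_nat (𝕜 := ℝ)).const_add 1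
    rw [add_zero] at this
    refine this.congr' ?_
    filter_upwards [eventually_ge_atTop 1] with n hn
    have : (n:ℝ) ≠ 0 := by positivity
    field_simp
  have hlog : Tendsto (fun n : ℕ => Real.log (n:ℝ)) atTop atTop :=
    Real.tendsto_log_atTop.comp tendsto_natCast_atTop_atTop
  have h1 : Tendsto (fun n : ℕ => Real.log ((n:ℝ) + 1) / Real.log n) atTop (𝓝 1) := by
    have a1 : Tendsto (fun n : ℕ => Real.log (((n:ℝ) + 1) / n)) atTop (𝓝 0) := by
      have := ((Real.continuousAt_log one_ne_zero).tendsto).comp h0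
      simpa [Function.comp_def] using this
    have a2 := (a1.div_atTop hlog).const_add 1
    rw [add_zero] at a2
    refine a2.congr' ?_
    filter_upwards [eventually_ge_atTop 2] with n hn
    have hl : 0 < Real.log n := Real.log_pos (by exact_mod_cast hn)
    have : (n:ℝ) ≠ 0 := by positivity
    rw [Real.log_div (by positivity) this]
    field_simp
    ring
  have h2 := h0.mul h1
  rw [one_mul] at h2
  have h3 := (Real.continuousAt_rpow_const 1 ((k:ℝ) / ((k:ℝ) + 1)) (Or.inl one_ne_zero)).tendsto.comp h2
  rw [Real.one_rpow] at h3
  refine h3.congr' ?_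
  filter_upwards [eventually_ge_atTop 2] with n hn
  have hl : 0 < Real.log n := Real.log_pos (by exact_mod_cast hn)
  have hl2 : 0 < Real.log ((n:ℝ) + 1) := Real.log_pos (by
    have : (2:ℝ) ≤ n := by exact_mod_cast hn
    linarith)
  have : (0:ℝ) < n := by positivity
  simp only [Function.comp, Tk]
  push_cast
  rw [← Real.div_rpow (by positivity) (by positivity)]
  congr 1
  field_simp

end

/-! ### Partition counts and Euler's recursion -/

section

open Filter Topology

open Classical in
/-- The finset of partitions of `n` with all parts in `A`. -/
noncomputable def partsIn (A : Set ℕ) (n : ℕ) : Finset n.Partition :=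
  Finset.univ.filter fun P => ∀ i ∈ P.parts, i ∈ A

/-- The number of partitions of `n` with all parts in `A`. -/
noncomputable def pc (A : Set ℕ) (n : ℕ) : ℕ := (partsIn A n).card

lemma mem_partsIn {A : Set ℕ} {n : ℕ} {P : n.Partition} :
    P ∈ partsIn A n ↔ ∀ i ∈ P.parts, i ∈ A := by simp [partsIn]

/-- Removing a fixed multiset `t` of parts is a bijection. -/
lemma card_parts_ge {A : Set ℕ} {n : ℕ} {t : Multiset ℕ} (htA : ∀ i ∈ t, i ∈ A)
    (ht0 : ∀ i ∈ t, 0 < i) (htn : t.sum ≤ n) :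
    ((partsIn A n).filter fun P => t ≤ P.parts).card = pc A (n - t.sum) := by
  refine Finset.card_bij' (t := partsIn A (n - t.sum))
    (fun P hP => (⟨P.parts - t, fun {i} hi => P.parts_pos (Multiset.mem_of_le tsub_le_self hi), by
      have h := (Finset.mem_filter.mp hP).2
      have h1 : (P.parts - t + t).sum = n := by rw [tsub_add_cancel_of_le h, P.parts_sum]
      rw [Multiset.sum_add] at h1
      omega⟩ : (n - t.sum).Partition))
    (fun Q hQ => (⟨Q.parts + t, fun {i} hi => by
      rcases Multiset.mem_add.mp hi with h | h
      · exact Q.parts_pos h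
      · exact ht0 i h, by rw [Multiset.sum_add, Q.parts_sum]; omega⟩ : n.Partition)) ?_ ?_ ?_ ?_
  · intro P hP
    rw [mem_partsIn]
    intro i hi
    exact mem_partsIn.mp (Finset.mem_filter.mp hP).1 i (Multiset.mem_of_le tsub_le_self hi)
  · intro Q hQ
    rw [Finset.mem_filter, mem_partsIn]
    refine ⟨fun i hi => ?_, le_add_self⟩
    rcases Multiset.mem_add.mp hi with h | h
    · exact mem_partsIn.mp hQ i h
    · exact htA i h
  · intro P hP
    have h := (Finset.mem_filter.mp hP).2
    ext1
    exact tsub_add_cancel_of_le h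
  · intro Q hQ
    ext1
    simp

lemma card_parts_ge_eq_zero {A : Set ℕ} {n : ℕ} {t : Multiset ℕ} (htn : n < t.sum) :
    ((partsIn A n).filter fun P => t ≤ P.parts).card = 0 := by
  rw [Finset.card_eq_zero, Finset.filter_eq_empty_iff]
  intro P _ h
  obtain ⟨u, hu⟩ := Multiset.le_iff_exists_add.mp h
  have := P.parts_sum
  rw [hu, Multiset.sum_add] at this
  omega

/-- Splitting partitions according to whether the part `a` occurs. -/
lemma pc_split {A : Set ℕ} {a : ℕ} (ha : a ∈ A) (ha0 : 0 < a) (n : ℕ) :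
    pc A n = pc (A \ {a}) n + if a ≤ n then pc A (n - a) else 0 := by
  have h1 : ((partsIn A n).filter fun P => ({a} : Multiset ℕ) ≤ P.parts).card =
      if a ≤ n then pc A (n - a) else 0 := by
    split_ifs with h
    · rw [card_parts_ge (by simpa using ha) (by simpa using ha0) (by simpa using h)]
      simp
    · exact card_parts_ge_eq_zero (by simpa using h)
  rw [← h1, pc, ← Finset.card_filter_add_card_filter_not (s := partsIn A n)
    (fun P => ({a} : Multiset ℕ) ≤ P.parts), add_comm]
  congr 1
  rw [pc]
  congr 1
  ext P
  simp only [Finset.mem_filter, mem_partsIn, Multiset.singleton_le, Set.mem_sdiff,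
    Set.mem_singleton_iff]
  constructor
  · rintro ⟨h1, h2⟩ i hi
    exact ⟨h1 i hi, fun h => h2 (h ▸ hi)⟩
  · intro h
    exact ⟨fun i hi => (h i hi).1, fun hi => (h a hi).2 rfl⟩

lemma pc_zero (A : Set ℕ) : pc A 0 = 1 := by
  rw [pc, Finset.card_eq_one]
  refine ⟨default, ?_⟩
  ext P
  rw [mem_partsIn, Finset.mem_singleton]
  constructor
  · intro _; exact Subsingleton.elim _ _
  · rintro rfl i hi
    have : (default : Nat.Partition 0).parts = 0 := by
      have := (default : Nat.Partition 0).parts_sum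
      rw [Multiset.sum_eq_zero_iff] at this
      refine Multiset.eq_zero_of_forall_notMem fun j hj => ?_
      exact absurd (this j hj) ((default : Nat.Partition 0).parts_pos hj).ne'
    rw [this] at hi
    simp at hi

lemma pc_mul_pos {A : Set ℕ} {a : ℕ} (ha : a ∈ A) (ha0 : 0 < a) (j : ℕ) : 0 < pc A (j * a) := by
  induction j with
  | zero => rw [zero_mul, pc_zero]; exact one_pos
  | succ j ih =>
    rw [pc_split ha ha0, if_pos (by nlinarith), Nat.succ_mul, Nat.add_sub_cancel]
    omega

open Classical in
/-- Euler's recursion `n p(n) = ∑ σ_A(m) p(n-m)`. -/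
lemma pc_recursion {A : Set ℕ} (hA : ∀ a ∈ A, 0 < a) (n : ℕ) :
    n * pc A n = ∑ m ∈ Finset.Icc 1 n, (∑ a ∈ m.divisors with a ∈ A, a) * pc A (n - m) := by
  have h1 : n * pc A n = ∑ P ∈ partsIn A n, ∑ a ∈ Finset.Icc 1 n, P.parts.count a * a := by
    rw [pc, mul_comm, ← smul_eq_mul, ← Finset.sum_const]
    refine Finset.sum_congr rfl fun P _ => ?_
    conv_lhs => rw [← P.parts_sum]
    rw [Finset.sum_multiset_count]
    simp only [smul_eq_mul]
    refine Finset.sum_subset (fun a ha => ?_) fun a _ ha => ?_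
    · rw [Multiset.mem_toFinset] at ha
      rw [Finset.mem_Icc]
      exact ⟨P.parts_pos ha, (Multiset.le_sum_of_mem ha).trans_eq P.parts_sum⟩
    · rw [Multiset.mem_toFinset] at ha
      rw [Multiset.count_eq_zero_of_notMem ha, zero_mul]
  have h2 : ∀ P ∈ partsIn A n, ∀ a ∈ Finset.Icc 1 n, P.parts.count a * a =
      ∑ j ∈ Finset.Icc 1 n, if Multiset.replicate j a ≤ P.parts then a else 0 := by
    intro P _ a ha
    rw [Finset.mem_Icc] at ha
    rw [← Finset.sum_filter, Finset.sum_const, smul_eq_mul]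
    congr 1
    have hc : P.parts.count a ≤ n := by
      have : (Multiset.replicate (P.parts.count a) a) ≤ P.parts :=
        Multiset.le_count_iff_replicate_le.mp le_rfl
      obtain ⟨u, hu⟩ := Multiset.le_iff_exists_add.mp this
      have h3 := P.parts_sum
      rw [hu, Multiset.sum_add, Multiset.sum_replicate, smul_eq_mul] at h3
      calc P.parts.count a ≤ P.parts.count a * a := Nat.le_mul_of_pos_right _ ha.1
        _ ≤ n := by omega
    have : (Finset.Icc 1 n).filter (fun j => Multiset.replicate j a ≤ P.parts) =
        Finset.Icc 1 (P.parts.count a) := by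
      ext j
      simp only [Finset.mem_filter, Finset.mem_Icc, ← Multiset.le_count_iff_replicate_le]
      omega
    rw [this]; simp
  have h3 : ∀ a ∈ Finset.Icc 1 n, ∀ j ∈ Finset.Icc 1 n,
      (∑ P ∈ partsIn A n, if Multiset.replicate j a ≤ P.parts then a else 0) =
      if a ∈ A ∧ j * a ≤ n then a * pc A (n - j * a) else 0 := by
    intro a ha j hj
    rw [Finset.mem_Icc] at ha hj
    rw [← Finset.sum_filter, Finset.sum_const, smul_eq_mul]
    by_cases haA : a ∈ A
    · by_cases hle : j * a ≤ n
      · rw [card_parts_ge (fun i hi => Multiset.eq_of_mem_replicate hi ▸ haA)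
          (fun i hi => Multiset.eq_of_mem_replicate hi ▸ hA a haA)
          (by simpa [Multiset.sum_replicate] using hle)]
        rw [if_pos ⟨haA, hle⟩, Multiset.sum_replicate, smul_eq_mul, mul_comm]
      · rw [card_parts_ge_eq_zero (by simpa [Multiset.sum_replicate] using hle)]
        simp [hle]
    · have : (partsIn A n).filter (fun P => Multiset.replicate j a ≤ P.parts) = ∅ := by
        rw [Finset.filter_eq_empty_iff]
        intro P hP h
        refine haA (mem_partsIn.mp hP a (Multiset.mem_of_le h ?_))
        exact Multiset.mem_replicate.mpr ⟨by omega, rfl⟩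
      rw [this]; simp [haA]
  rw [h1]
  calc _ = ∑ P ∈ partsIn A n, ∑ a ∈ Finset.Icc 1 n, ∑ j ∈ Finset.Icc 1 n,
        (if Multiset.replicate j a ≤ P.parts then a else 0) :=
        Finset.sum_congr rfl fun P hP => Finset.sum_congr rfl fun a ha => h2 P hP a ha
    _ = ∑ a ∈ Finset.Icc 1 n, ∑ j ∈ Finset.Icc 1 n, ∑ P ∈ partsIn A n,
        (if Multiset.replicate j a ≤ P.parts then a else 0) := by
        rw [Finset.sum_comm]
        exact Finset.sum_congr rfl fun a _ => Finset.sum_comm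
    _ = ∑ a ∈ Finset.Icc 1 n, ∑ j ∈ Finset.Icc 1 n,
        (if a ∈ A ∧ j * a ≤ n then a * pc A (n - j * a) else 0) :=
        Finset.sum_congr rfl fun a ha => Finset.sum_congr rfl fun j hj => h3 a ha j hj
    _ = ∑ a ∈ Finset.Icc 1 n, ∑ m ∈ Finset.Icc 1 n,
        (if a ∈ A ∧ a ∣ m then a * pc A (n - m) else 0) := by
        refine Finset.sum_congr rfl fun a ha => ?_
        rw [Finset.mem_Icc] at ha
        rw [← Finset.sum_filter, ← Finset.sum_filter]
        refine Finset.sum_bij (fun j _ => j * a) ?_ ?_ ?_ ?_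
        · intro j hj
          simp only [Finset.mem_filter, Finset.mem_Icc] at hj ⊢
          exact ⟨⟨by nlinarith, hj.2.2⟩, hj.2.1, dvd_mul_left _ _⟩
        · intro i _ j _ h
          exact Nat.eq_of_mul_eq_mul_right (by omega) h
        · intro m hm
          simp only [Finset.mem_filter, Finset.mem_Icc] at hm
          obtain ⟨⟨hm1, hm2⟩, haA, j, rfl⟩ := hm
          refine ⟨j, ?_, mul_comm _ _⟩
          simp only [Finset.mem_filter, Finset.mem_Icc]
          refine ⟨⟨?_, ?_⟩, haA, by rwa [mul_comm]⟩
          · rcases Nat.eq_zero_or_pos j with rfl | h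
            · simp at hm1
            · exact h
          · nlinarith
        · intro j _; rfl
    _ = _ := by
        rw [Finset.sum_comm]
        refine Finset.sum_congr rfl fun m hm => ?_
        rw [Finset.mem_Icc] at hm
        rw [Finset.sum_mul, ← Finset.sum_filter]
        refine Finset.sum_congr ?_ fun _ _ => rfl
        ext a
        simp only [Finset.mem_filter, Finset.mem_Icc, Nat.mem_divisors]
        constructor
        · rintro ⟨_, h1, h2⟩; exact ⟨⟨h2, by omega⟩, h1⟩
        · rintro ⟨⟨h2, _⟩, h1⟩
          have := Nat.le_of_dvd (by omega) h2
          exact ⟨⟨hA a h1, by omega⟩, h1, h2⟩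

/-- A partition of a large number has a large part or a part of large multiplicity. -/
lemma pc_le_two_mul {A : Set ℕ} (hA : ∀ a ∈ A, 0 < a) {T n : ℕ} (hT : 1 ≤ T) (hn : T ^ 3 ≤ n) :
    pc A n ≤ 2 * ∑ j ∈ Finset.Icc T n, pc A (n - j) := by
  classical
  have hcover : partsIn A n ⊆
      (((Finset.Icc T n).filter (· ∈ A)).biUnion fun a =>
        (partsIn A n).filter fun P => ({a} : Multiset ℕ) ≤ P.parts) ∪
      (((Finset.Ico 1 T).filter fun a => a ∈ A ∧ T * a ≤ n).biUnion fun a =>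
        (partsIn A n).filter fun P => Multiset.replicate T a ≤ P.parts) := by
    intro P hP
    simp only [Finset.mem_union, Finset.mem_biUnion, Finset.mem_filter, Finset.mem_Icc,
      Finset.mem_Ico, Multiset.singleton_le]
    by_cases h : ∃ a ∈ P.parts, T ≤ a
    · obtain ⟨a, ha, haT⟩ := h
      exact Or.inl ⟨a, ⟨⟨haT, (Multiset.le_sum_of_mem ha).trans_eq P.parts_sum⟩,
        mem_partsIn.mp hP a ha⟩, hP, ha⟩
    · right
      push Not at h
      by_contra hcon
      have hcount : ∀ a ∈ P.parts, P.parts.count a < T := by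
        intro a ha
        by_contra hge
        push Not at hge
        have hrep := Multiset.le_count_iff_replicate_le.mp hge
        have hsum : T * a ≤ n := by
          obtain ⟨u, hu⟩ := Multiset.le_iff_exists_add.mp hrep
          have h3 := P.parts_sum
          rw [hu, Multiset.sum_add, Multiset.sum_replicate, smul_eq_mul] at h3
          omega
        exact hcon ⟨a, ⟨⟨P.parts_pos ha, h a ha⟩, mem_partsIn.mp hP a ha, hsum⟩, hP, hrep⟩
      have : n < T ^ 3 := by
        rw [← P.parts_sum, Finset.sum_multiset_count]
        have hsub : P.parts.toFinset ⊆ Finset.range T := by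
          intro a ha; rw [Multiset.mem_toFinset] at ha; exact Finset.mem_range.mpr (h a ha)
        calc _ ≤ ∑ a ∈ P.parts.toFinset, T * (T - 1) := by
              refine Finset.sum_le_sum fun a ha => ?_
              rw [Multiset.mem_toFinset] at ha
              rw [smul_eq_mul]
              have h1 := hcount a ha
              have h2 := h a ha
              exact Nat.mul_le_mul h1.le (by omega)
          _ = P.parts.toFinset.card * (T * (T - 1)) := by simp
          _ ≤ T * (T * (T - 1)) := by
              gcongr
              simpa using Finset.card_le_card hsub
          _ < T ^ 3 := by
              obtain ⟨s, rfl⟩ : ∃ s, T = s + 1 := ⟨T - 1, by omega⟩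
              simp only [Nat.add_sub_cancel]
              nlinarith [sq_nonneg s]
      omega
  have h1 : (((Finset.Icc T n).filter (· ∈ A)).biUnion fun a =>
        (partsIn A n).filter fun P => ({a} : Multiset ℕ) ≤ P.parts).card ≤
      ∑ j ∈ Finset.Icc T n, pc A (n - j) := by
    refine Finset.card_biUnion_le.trans ?_
    calc _ = ∑ a ∈ (Finset.Icc T n).filter (· ∈ A), pc A (n - a) := by
          refine Finset.sum_congr rfl fun a ha => ?_
          simp only [Finset.mem_filter, Finset.mem_Icc] at ha
          rw [card_parts_ge (by simpa using ha.2) (by simpa using hA a ha.2) (by simpa using ha.1.2)]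
          simp
      _ ≤ _ := Finset.sum_le_sum_of_subset (Finset.filter_subset _ _)
  have h2 : (((Finset.Ico 1 T).filter fun a => a ∈ A ∧ T * a ≤ n).biUnion fun a =>
        (partsIn A n).filter fun P => Multiset.replicate T a ≤ P.parts).card ≤
      ∑ j ∈ Finset.Icc T n, pc A (n - j) := by
    refine Finset.card_biUnion_le.trans ?_
    calc _ = ∑ a ∈ (Finset.Ico 1 T).filter fun a => a ∈ A ∧ T * a ≤ n, pc A (n - T * a) := by
          refine Finset.sum_congr rfl fun a ha => ?_
          simp only [Finset.mem_filter] at ha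
          rw [card_parts_ge (fun i hi => Multiset.eq_of_mem_replicate hi ▸ ha.2.1)
            (fun i hi => Multiset.eq_of_mem_replicate hi ▸ hA a ha.2.1)
            (by simpa [Multiset.sum_replicate] using ha.2.2)]
          simp [Multiset.sum_replicate]
      _ = ∑ j ∈ ((Finset.Ico 1 T).filter fun a => a ∈ A ∧ T * a ≤ n).image (T * ·),
            pc A (n - j) := by
          rw [Finset.sum_image]
          intro a _ b _ h
          exact Nat.eq_of_mul_eq_mul_left (by omega) h
      _ ≤ _ := by
          refine Finset.sum_le_sum_of_subset fun j hj => ?_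
          simp only [Finset.mem_image, Finset.mem_filter, Finset.mem_Ico, Finset.mem_Icc] at hj ⊢
          obtain ⟨a, ⟨⟨ha, _⟩, _, hle⟩, rfl⟩ := hj
          exact ⟨by nlinarith, hle⟩
  calc pc A n ≤ _ := Finset.card_le_card hcover
    _ ≤ _ := Finset.card_union_le _ _
    _ ≤ _ := by omega

end

/-! ### Eventual convexity of the partition function -/

section

open Filter Topology

/-- The generating function of partitions with parts in `A`. -/
noncomputable def genF (A : Set ℕ) : PowerSeries ℚ := PowerSeries.mk fun n => (pc A n : ℚ)

lemma one_sub_mul_genF {A : Set ℕ} {a : ℕ} (ha : a ∈ A) (ha0 : 0 < a) :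
    (1 - PowerSeries.X ^ a) * genF A = genF (A \ {a}) := by
  ext n
  rw [sub_mul, one_mul, map_sub, PowerSeries.coeff_X_pow_mul', genF, genF, PowerSeries.coeff_mk,
    PowerSeries.coeff_mk, PowerSeries.coeff_mk, pc_split ha ha0 n]
  split_ifs <;> push_cast <;> ring

/-- `(1 - X^a)/(1 - X)` and `(1 - X^b)/(1 - X)` have no common root when `a`, `b` are coprime. -/
lemma isCoprime_geom {a b : ℕ} (ha : 0 < a) (hb : 0 < b) (hab : Nat.Coprime a b) :
    IsCoprime (∑ i ∈ Finset.range a, (Polynomial.X : Polynomial ℚ) ^ i)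
      (∑ i ∈ Finset.range b, (Polynomial.X : Polynomial ℚ) ^ i) := by
  rw [← Polynomial.prod_cyclotomic_eq_geom_sum ha, ← Polynomial.prod_cyclotomic_eq_geom_sum hb]
  refine IsCoprime.prod_left fun i hi => IsCoprime.prod_right fun j hj => ?_
  refine Polynomial.cyclotomic.isCoprime_rat ?_
  rintro rfl
  rw [Finset.mem_erase, Nat.mem_divisors] at hi hj
  exact hi.1 (Nat.eq_one_of_dvd_coprimes hab hi.2.1 hj.2.1)

lemma geom_dvd_geom {a b : ℕ} (h : a ∣ b) :
    (∑ i ∈ Finset.range a, (Polynomial.X : Polynomial ℚ) ^ i) ∣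
      (∑ i ∈ Finset.range b, (Polynomial.X : Polynomial ℚ) ^ i) := by
  have hX : (Polynomial.X - 1 : Polynomial ℚ) ≠ 0 := Polynomial.X_sub_C_ne_zero 1
  rw [← mul_dvd_mul_iff_right hX, geom_sum_mul, geom_sum_mul]
  obtain ⟨c, rfl⟩ := h
  rw [pow_mul]
  simpa using sub_dvd_pow_sub_pow ((Polynomial.X : Polynomial ℚ) ^ a) 1 c

lemma eval_geom (a : ℕ) :
    (∑ i ∈ Finset.range a, (Polynomial.X : Polynomial ℚ) ^ i).eval 1 = a := by
  simp [Polynomial.eval_finsetSum]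

/-- For pairwise coprime `q i`, the product of the `(1 - X^{q i})/(1 - X)` divides
`(1 - X^N)/(1 - X)` with `N = ∏ q i`, and the cofactor takes the value `1` at `1`. -/
lemma exists_cofactor {q : ℕ → ℕ} {s : Finset ℕ} (hq : ∀ i ∈ s, 0 < q i)
    (hc : ∀ i ∈ s, ∀ j ∈ s, i ≠ j → Nat.Coprime (q i) (q j)) :
    ∃ G : Polynomial ℚ, (∏ i ∈ s, ∑ l ∈ Finset.range (q i), (Polynomial.X : Polynomial ℚ) ^ l) * G
      = ∑ l ∈ Finset.range (∏ i ∈ s, q i), (Polynomial.X : Polynomial ℚ) ^ l ∧ G.eval 1 = 1 := by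
  have hd : (∏ i ∈ s, ∑ l ∈ Finset.range (q i), (Polynomial.X : Polynomial ℚ) ^ l) ∣
      ∑ l ∈ Finset.range (∏ i ∈ s, q i), (Polynomial.X : Polynomial ℚ) ^ l := by
    refine Finset.prod_dvd_of_coprime ?_ fun i hi => geom_dvd_geom (Finset.dvd_prod_of_mem _ hi)
    intro i hi j hj hij
    exact isCoprime_geom (hq i hi) (hq j hj) (hc i hi j hj hij)
  obtain ⟨G, hG⟩ := hd
  refine ⟨G, hG.symm, ?_⟩
  have h := congrArg (Polynomial.eval 1) hG
  rw [Polynomial.eval_mul, eval_geom, Polynomial.eval_prod] at h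
  simp only [eval_geom] at h
  push_cast at h
  have h0 : (∏ i ∈ s, (q i : ℚ)) ≠ 0 :=
    Finset.prod_ne_zero_iff.mpr fun i hi => by exact_mod_cast (hq i hi).ne'
  exact mul_left_cancel₀ h0 (by rw [← h, mul_one])

/-- Past its degree, the partial sums of the coefficients of `G` equal `G(1)`. -/
lemma coeff_mk_one_mul (G : Polynomial ℚ) {n : ℕ} (hn : G.natDegree ≤ n) :
    PowerSeries.coeff n ((PowerSeries.mk 1 : PowerSeries ℚ) * (G : PowerSeries ℚ)) = G.eval 1 := by
  rw [mul_comm, PowerSeries.coeff_mul, Finset.Nat.sum_antidiagonal_eq_sum_range_succ_mk,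
    Polynomial.eval_eq_sum_range' (Nat.lt_succ_of_le hn)]
  simp

/-- The series `∑ (⌊n/N⌋+1) X^n`, inverse of `(1-X)(1-X^N)`. -/
noncomputable def kerK (N : ℕ) : PowerSeries ℚ := PowerSeries.mk fun n => ((n / N : ℕ) : ℚ) + 1

lemma one_sub_pow_mul_kerK {N : ℕ} (hN : 0 < N) :
    (1 - PowerSeries.X ^ N) * kerK N = PowerSeries.mk 1 := by
  ext n
  rw [sub_mul, one_mul, map_sub, PowerSeries.coeff_X_pow_mul', kerK, PowerSeries.coeff_mk,
    PowerSeries.coeff_mk, PowerSeries.coeff_mk]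
  split_ifs with h
  · rw [Nat.div_eq_sub_div hN h]
    push_cast; simp
  · rw [Nat.div_eq_of_lt (by omega)]; simp

/-- Coefficients of `G/((1-X)(1-X^N))` tend to infinity when `G(1)=1`. -/
lemma coeff_kerK_mul {N : ℕ} (hN : 0 < N) {G : Polynomial ℚ} (hG : G.eval 1 = 1) :
    ∃ H : ℕ, (∀ n, -(H : ℚ) ≤ PowerSeries.coeff n (kerK N * (G : PowerSeries ℚ))) ∧
      ∀ B : ℕ, ∃ M, ∀ n ≥ M, (B : ℚ) ≤ PowerSeries.coeff n (kerK N * (G : PowerSeries ℚ)) := by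
  set h : ℕ → ℚ := fun n => PowerSeries.coeff n (kerK N * (G : PowerSeries ℚ)) with hh
  set n0 := max N G.natDegree with hn0
  have hrec : ∀ n, n0 ≤ n → h n = h (n - N) + 1 := by
    intro n hn
    have h1 : (1 - PowerSeries.X ^ N) * (kerK N * (G : PowerSeries ℚ)) =
        PowerSeries.mk 1 * (G : PowerSeries ℚ) := by rw [← mul_assoc, one_sub_pow_mul_kerK hN]
    have h2 := congrArg (PowerSeries.coeff n) h1
    rw [coeff_mk_one_mul G ((le_max_right _ _).trans hn), hG, sub_mul, one_mul, map_sub,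
      PowerSeries.coeff_X_pow_mul', if_pos ((le_max_left _ _).trans hn)] at h2
    simp only [hh]
    linarith
  obtain ⟨H, hH⟩ : ∃ H : ℕ, ∀ n < n0, -(H : ℚ) ≤ h n := by
    obtain ⟨H, hH⟩ := exists_nat_ge (∑ n ∈ Finset.range n0, |h n|)
    refine ⟨H, fun n hn => ?_⟩
    have := Finset.single_le_sum (f := fun n => |h n|) (fun i _ => abs_nonneg _)
      (Finset.mem_range.mpr hn)
    have h3 := neg_abs_le (h n)
    linarith
  have hall : ∀ n, -(H : ℚ) ≤ h n := by
    intro n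
    induction n using Nat.strong_induction_on with
    | _ n ih =>
      rcases lt_or_ge n n0 with hn | hn
      · exact hH n hn
      · rw [hrec n hn]
        have := ih (n - N) (by have := le_max_left N G.natDegree; omega)
        linarith
  have hgrow : ∀ j : ℕ, ∀ n ≥ n0 + j * N, -(H : ℚ) + j ≤ h n := by
    intro j
    induction j with
    | zero => intro n _; simpa using hall n
    | succ j ih =>
      intro n hn
      rw [Nat.succ_mul] at hn
      rw [hrec n (by omega)]
      have := ih (n - N) (by omega)
      push_cast
      linarith
  refine ⟨H, hall, fun B => ⟨n0 + (B + H) * N, fun n hn => ?_⟩⟩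
  have := hgrow (B + H) n hn
  push_cast at this
  linarith

/-- The second difference as a convolution. -/
lemma genF_second_diff {A : Set ℕ} {q : ℕ → ℕ} (hqA : ∀ i < 4, q i ∈ A) (hq : ∀ i < 4, 0 < q i)
    (hc : ∀ i < 4, ∀ j < 4, i ≠ j → Nat.Coprime (q i) (q j))
    (hinj : ∀ i < 4, ∀ j < 4, i ≠ j → q i ≠ q j) :
    ∃ (N : ℕ) (G : Polynomial ℚ), 0 < N ∧ G.eval 1 = 1 ∧
      (1 - PowerSeries.X) ^ 2 * genF A =
        (kerK N * (G : PowerSeries ℚ)) * genF ((((A \ {q 0}) \ {q 1}) \ {q 2}) \ {q 3}) := by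
  obtain ⟨G, hG, hG1⟩ := exists_cofactor (q := q) (s := Finset.range 4)
    (fun i hi => hq i (Finset.mem_range.mp hi))
    (fun i hi j hj => hc i (Finset.mem_range.mp hi) j (Finset.mem_range.mp hj))
  have hN : 0 < ∏ i ∈ Finset.range 4, q i :=
    Finset.prod_pos fun i hi => hq i (Finset.mem_range.mp hi)
  refine ⟨∏ i ∈ Finset.range 4, q i, G, hN, hG1, ?_⟩
  set N := ∏ i ∈ Finset.range 4, q i
  have hF : genF ((((A \ {q 0}) \ {q 1}) \ {q 2}) \ {q 3}) = (1 - PowerSeries.X ^ (q 3)) *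
      ((1 - PowerSeries.X ^ (q 2)) * ((1 - PowerSeries.X ^ (q 1)) *
        ((1 - PowerSeries.X ^ (q 0)) * genF A))) := by
    have h01 := hinj 1 (by omega) 0 (by omega) (by omega)
    have h02 := hinj 2 (by omega) 0 (by omega) (by omega)
    have h12 := hinj 2 (by omega) 1 (by omega) (by omega)
    have h03 := hinj 3 (by omega) 0 (by omega) (by omega)
    have h13 := hinj 3 (by omega) 1 (by omega) (by omega)
    have h23 := hinj 3 (by omega) 2 (by omega) (by omega)
    have m1 : q 1 ∈ A \ {q 0} := ⟨hqA 1 (by omega), h01⟩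
    have m2 : q 2 ∈ (A \ {q 0}) \ {q 1} := ⟨⟨hqA 2 (by omega), h02⟩, h12⟩
    have m3 : q 3 ∈ ((A \ {q 0}) \ {q 1}) \ {q 2} := ⟨⟨⟨hqA 3 (by omega), h03⟩, h13⟩, h23⟩
    rw [one_sub_mul_genF (hqA 0 (by omega)) (hq 0 (by omega)),
      one_sub_mul_genF m1 (hq 1 (by omega)), one_sub_mul_genF m2 (hq 2 (by omega)),
      one_sub_mul_genF m3 (hq 3 (by omega))]
  have hgeom : ∀ a : ℕ, ((∑ l ∈ Finset.range a, (Polynomial.X : Polynomial ℚ) ^ l :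
      Polynomial ℚ) : PowerSeries ℚ) * (1 - PowerSeries.X) = 1 - PowerSeries.X ^ a := by
    intro a
    have := congrArg (Polynomial.toPowerSeries (R := ℚ))
      (geom_sum_mul_neg (Polynomial.X : Polynomial ℚ) a)
    simpa using this
  have hG' := congrArg (Polynomial.toPowerSeries (R := ℚ)) hG
  rw [Polynomial.coe_mul] at hG'
  simp only [Finset.prod_range_succ, Finset.prod_range_zero, one_mul, Polynomial.coe_mul] at hG'
  have hK : (1 - PowerSeries.X) * ((1 - PowerSeries.X ^ N) * kerK N) = 1 := by
    rw [one_sub_pow_mul_kerK hN, mul_comm]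
    exact PowerSeries.mk_one_mul_one_sub_eq_one ℚ
  have e0 := hgeom (q 0)
  have e1 := hgeom (q 1)
  have e2 := hgeom (q 2)
  have e3 := hgeom (q 3)
  have eN := hgeom N
  generalize ((∑ l ∈ Finset.range (q 0), (Polynomial.X : Polynomial ℚ) ^ l :
      Polynomial ℚ) : PowerSeries ℚ) = a0 at *
  generalize ((∑ l ∈ Finset.range (q 1), (Polynomial.X : Polynomial ℚ) ^ l :
      Polynomial ℚ) : PowerSeries ℚ) = a1 at *
  generalize ((∑ l ∈ Finset.range (q 2), (Polynomial.X : Polynomial ℚ) ^ l :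
      Polynomial ℚ) : PowerSeries ℚ) = a2 at *
  generalize ((∑ l ∈ Finset.range (q 3), (Polynomial.X : Polynomial ℚ) ^ l :
      Polynomial ℚ) : PowerSeries ℚ) = a3 at *
  generalize ((∑ l ∈ Finset.range N, (Polynomial.X : Polynomial ℚ) ^ l :
      Polynomial ℚ) : PowerSeries ℚ) = aN at *
  rw [hF, ← e0, ← e1, ← e2, ← e3]
  rw [← eN] at hK
  calc (1 - PowerSeries.X) ^ 2 * genF A
      = (1 - PowerSeries.X) ^ 2 * ((1 - PowerSeries.X) * (aN * (1 - PowerSeries.X) * kerK N))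
          * genF A := by rw [hK, mul_one]
    _ = _ := by rw [← hG']; ring

/-- The partition function of a set containing four pairwise coprime elements is eventually
convex. -/
lemma eventually_convex {A : Set ℕ} (hA : ∀ a ∈ A, 0 < a) {q : ℕ → ℕ} (hqA : ∀ i < 4, q i ∈ A)
    (hc : ∀ i < 4, ∀ j < 4, i ≠ j → Nat.Coprime (q i) (q j))
    (hinj : ∀ i < 4, ∀ j < 4, i ≠ j → q i ≠ q j) :
    ∃ n0, ∀ n ≥ n0, (2 : ℝ) * pc A (n + 1) ≤ pc A (n + 2) + pc A n := by
  obtain ⟨N, G, hN, hG, hF⟩ := genF_second_diff hqA (fun i hi => hA _ (hqA i hi)) hc hinj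
  obtain ⟨H, hH, hgrow⟩ := coeff_kerK_mul hN hG
  set C := (((A \ {q 0}) \ {q 1}) \ {q 2}) \ {q 3} with hC
  have hCpos : ∀ a ∈ C, 0 < a := fun a ha => hA a ha.1.1.1.1
  set h : ℕ → ℚ := fun n => PowerSeries.coeff n (kerK N * (G : PowerSeries ℚ)) with hh
  obtain ⟨M, hM⟩ := hgrow 0
  obtain ⟨T0, hT0⟩ := hgrow (2 * M * H)
  set T := max (max M T0) 1
  have hTM : M ≤ T := (le_max_left _ _).trans (le_max_left _ _)
  have hTT : T0 ≤ T := (le_max_right _ _).trans (le_max_left _ _)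
  have hT1 : 1 ≤ T := le_max_right _ _
  have hconv : ∀ n, (pc A (n + 2) : ℚ) - 2 * pc A (n + 1) + pc A n =
      ∑ m ∈ Finset.range (n + 3), h m * pc C (n + 2 - m) := by
    intro n
    have h1 := congrArg (PowerSeries.coeff (n + 2)) hF
    rw [PowerSeries.coeff_mul (n + 2) (kerK N * (G : PowerSeries ℚ)),
      Finset.Nat.sum_antidiagonal_eq_sum_range_succ_mk] at h1
    have h2 : (1 - PowerSeries.X) ^ 2 * genF A =
      genF A - 2 * (PowerSeries.X ^ 1 * genF A) + PowerSeries.X ^ 2 * genF A := by ring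
    rw [h2, map_add, map_sub, PowerSeries.coeff_X_pow_mul', if_pos (by omega)] at h1
    have h3 : PowerSeries.coeff (n + 2) (2 * (PowerSeries.X ^ 1 * genF A)) =
        2 * (pc A (n + 1) : ℚ) := by
      rw [two_mul, map_add, PowerSeries.coeff_X_pow_mul', if_pos (by omega), genF,
        PowerSeries.coeff_mk, two_mul]
      simp
    rw [h3] at h1
    simpa [genF] using h1
  refine ⟨M + T ^ 3 + T + 1, fun n hn => ?_⟩
  have key : 0 ≤ ∑ m ∈ Finset.range (n + 3), h m * pc C (n + 2 - m) := by
    set S : ℚ := ∑ j ∈ Finset.Ico T (n + 3), (pc C (n + 2 - j) : ℚ) with hS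
    have hMT : M ≤ n + 3 := by omega
    have hTn : T ≤ n + 3 := by omega
    have hsmall : ∀ m < M, (pc C (n + 2 - m) : ℚ) ≤ 2 * S := by
      intro m hm
      have h1 := pc_le_two_mul hCpos hT1 (n := n + 2 - m) (by omega)
      have h2 : ∑ j ∈ Finset.Icc T (n + 2 - m), pc C (n + 2 - m - j) ≤
          ∑ j ∈ Finset.Ico T (n + 3), pc C (n + 2 - j) := by
        calc _ = ∑ j ∈ (Finset.Icc T (n + 2 - m)).image (· + m), pc C (n + 2 - j) := by
              rw [Finset.sum_image (fun a _ b _ h => by simpa using h)]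
              refine Finset.sum_congr rfl fun j _ => ?_
              congr 1; omega
          _ ≤ _ := by
              refine Finset.sum_le_sum_of_subset fun j hj => ?_
              simp only [Finset.mem_image, Finset.mem_Icc, Finset.mem_Ico] at hj ⊢
              omega
      have h3 : pc C (n + 2 - m) ≤ 2 * ∑ j ∈ Finset.Ico T (n + 3), pc C (n + 2 - j) := by omega
      rw [hS]
      exact_mod_cast h3
    rw [Finset.range_eq_Ico, ← Finset.sum_Ico_consecutive _ (Nat.zero_le M) hMT,
      ← Finset.sum_Ico_consecutive _ hTM hTn]
    have hp1 : -((M : ℚ) * (H * (2 * S))) ≤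
        ∑ m ∈ Finset.Ico 0 M, h m * pc C (n + 2 - m) := by
      calc -((M : ℚ) * (H * (2 * S))) = ∑ m ∈ Finset.Ico 0 M, -(H * (2 * S)) := by simp
        _ ≤ _ := by
          refine Finset.sum_le_sum fun m hm => ?_
          have h1 := hsmall m (Finset.mem_Ico.mp hm).2
          have h2 := hH m
          have h3 : (0 : ℚ) ≤ pc C (n + 2 - m) := by positivity
          have h4 : (0 : ℚ) ≤ H := by positivity
          have h5 : -(H : ℚ) * pc C (n + 2 - m) ≤ h m * pc C (n + 2 - m) :=
            mul_le_mul_of_nonneg_right h2 h3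
          have h6 := mul_le_mul_of_nonneg_left h1 h4
          linarith
    have hp2 : 0 ≤ ∑ m ∈ Finset.Ico M T, h m * pc C (n + 2 - m) := by
      refine Finset.sum_nonneg fun m hm => mul_nonneg ?_ (by positivity)
      have := hM m (Finset.mem_Ico.mp hm).1
      simpa using this
    have hp3 : (2 * M * H : ℚ) * S ≤ ∑ m ∈ Finset.Ico T (n + 3), h m * pc C (n + 2 - m) := by
      rw [hS, Finset.mul_sum]
      refine Finset.sum_le_sum fun m hm => mul_le_mul_of_nonneg_right ?_ (by positivity)
      have := hT0 m (hTT.trans (Finset.mem_Ico.mp hm).1)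
      exact_mod_cast this
    linarith
  rw [← hconv n] at key
  have : (2 : ℚ) * pc A (n + 1) ≤ pc A (n + 2) + pc A n := by linarith
  exact_mod_cast this

/-- First difference of the partition function. -/
noncomputable def pcDiff (A : Set ℕ) (n : ℕ) : ℝ :=
  (pc A n : ℝ) - if n = 0 then 0 else (pc A (n - 1) : ℝ)

lemma pcDiff_succ (A : Set ℕ) (n : ℕ) : pcDiff A (n + 1) = (pc A (n + 1) : ℝ) - pc A n := by
  simp [pcDiff]

/-- An eventually convex sequence of natural numbers is eventually nondecreasing, since otherwise it
would become negative. Positivity then follows from the partitions of multiples of `q 0`. -/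
lemma eventually_pcDiff {A : Set ℕ} (hA : ∀ a ∈ A, 0 < a) {q : ℕ → ℕ} (hqA : ∀ i < 4, q i ∈ A)
    (hc : ∀ i < 4, ∀ j < 4, i ≠ j → Nat.Coprime (q i) (q j))
    (hinj : ∀ i < 4, ∀ j < 4, i ≠ j → q i ≠ q j) :
    ∃ n0, ∀ n ≥ n0, 0 ≤ pcDiff A n ∧ pcDiff A n ≤ pcDiff A (n + 1) ∧ (0 : ℝ) < pc A n := by
  obtain ⟨n0, hn0⟩ := eventually_convex hA hqA hc hinj
  have hmono : ∀ n ≥ n0 + 1, pcDiff A n ≤ pcDiff A (n + 1) := by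
    intro n hn
    obtain ⟨m, rfl⟩ : ∃ m, n = m + 1 := ⟨n - 1, by omega⟩
    rw [pcDiff_succ, pcDiff_succ]
    have := hn0 m (by omega)
    have e : m + 1 + 1 = m + 2 := rfl
    rw [e]
    linarith
  have hmono' : ∀ n ≥ n0 + 1, ∀ j, pcDiff A n ≤ pcDiff A (n + j) := by
    intro n hn j
    induction j with
    | zero => exact le_rfl
    | succ j ih => exact ih.trans (hmono (n + j) (by omega))
  -- otherwise the integer-valued `p` would drop by at least `1` at every step
  obtain ⟨n1, hn1, hpos⟩ : ∃ n1 ≥ n0 + 1, 0 ≤ pcDiff A n1 := by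
    by_contra hcon
    push Not at hcon
    have hle : ∀ n ≥ n0 + 1, pcDiff A n ≤ -1 := by
      intro n hn
      have h1 := hcon n hn
      obtain ⟨m, rfl⟩ : ∃ m, n = m + 1 := ⟨n - 1, by omega⟩
      rw [pcDiff_succ] at h1 ⊢
      have h2 : pc A (m + 1) < pc A m := by
        have : (pc A (m + 1) : ℝ) < pc A m := by linarith
        exact_mod_cast this
      have : (pc A (m + 1) : ℝ) + 1 ≤ pc A m := by exact_mod_cast h2
      linarith
    have hdec : ∀ j : ℕ, (pc A (n0 + j) : ℝ) ≤ pc A n0 - j := by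
      intro j
      induction j with
      | zero => simp
      | succ j ih =>
        have := hle (n0 + j + 1) (by omega)
        rw [pcDiff_succ] at this
        rw [← add_assoc]
        push_cast
        linarith
    have := hdec (pc A n0 + 1)
    push_cast at this
    have h2 : (0 : ℝ) ≤ pc A (n0 + (pc A n0 + 1)) := by positivity
    linarith
  have hnn : ∀ n ≥ n1, 0 ≤ pcDiff A n := by
    intro n hn
    have := hmono' n1 hn1 (n - n1)
    rw [Nat.add_sub_cancel' hn] at this
    linarith
  have hpm : ∀ n ≥ n1, ∀ j, (pc A n : ℝ) ≤ pc A (n + j) := by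
    intro n hn j
    induction j with
    | zero => exact le_rfl
    | succ j ih =>
      have := hnn (n + j + 1) (by omega)
      rw [pcDiff_succ] at this
      rw [← add_assoc]
      linarith
  have h0 := hA _ (hqA 0 (by omega))
  refine ⟨n1 * q 0, fun n hn => ?_⟩
  have hn1' : n1 ≤ n1 * q 0 := Nat.le_mul_of_pos_right _ h0
  refine ⟨hnn n (by omega), hmono n (by omega), ?_⟩
  have h2 := hpm (n1 * q 0) hn1' (n - n1 * q 0)
  rw [Nat.add_sub_cancel' hn] at h2
  have h3 : (0 : ℝ) < pc A (n1 * q 0) := by exact_mod_cast pc_mul_pos (hqA 0 (by omega)) h0 n1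
  linarith

/-- `eventually_pcDiff` applied to four distinct primes raised to the power `k`. -/
lemma eventually_pcDiff_isPk {k : ℕ} (hk : 1 ≤ k) :
    ∃ n0, ∀ n ≥ n0, 0 ≤ pcDiff {a | IsPk k a} n ∧
      pcDiff {a | IsPk k a} n ≤ pcDiff {a | IsPk k a} (n + 1) ∧
      (0 : ℝ) < pc {a | IsPk k a} n := by
  have hprime : ∀ i < 4, (Nat.nth Nat.Prime i).Prime := fun i _ => Nat.prime_nth_prime i
  have hne : ∀ i < 4, ∀ j < 4, i ≠ j → Nat.nth Nat.Prime i ≠ Nat.nth Nat.Prime j := by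
    intro i _ j _ hij h
    exact hij (Nat.nth_injective Nat.infinite_setOfPred_prime h)
  refine eventually_pcDiff (q := fun i => Nat.nth Nat.Prime i ^ k) (fun a ha => ha.pos)
    (fun i hi => ⟨_, hprime i hi, rfl⟩) ?_ ?_
  · intro i hi j hj hij
    exact Nat.Coprime.pow _ _ ((Nat.coprime_primes (hprime i hi) (hprime j hj)).mpr
      (hne i hi j hj hij))
  · intro i hi j hj hij h
    exact hne i hi j hj hij (Nat.pow_left_injective (by omega) h)

/-- The recursion for the first differences. -/
lemma pcDiff_recursion {p σ : ℕ → ℝ}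
    (hp : ∀ n : ℕ, (n : ℝ) * p n = ∑ m ∈ Finset.Icc 1 n, σ m * p (n - m)) {n : ℕ} (hn : 1 ≤ n) :
    n * (p n - p (n - 1)) + p (n - 1) =
      ∑ m ∈ Finset.Icc 1 n, σ m * (p (n - m) - if n - m = 0 then 0 else p (n - m - 1)) := by
  obtain ⟨l, rfl⟩ : ∃ l, n = l + 1 := ⟨n - 1, by omega⟩
  simp only [mul_sub, Finset.sum_sub_distrib]
  rw [← mul_sub, mul_sub, hp (l + 1), Nat.add_sub_cancel]
  have h1 : ∑ m ∈ Finset.Icc 1 (l + 1), σ m * (if l + 1 - m = 0 then 0 else p (l + 1 - m - 1)) =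
      l * p l := by
    rw [hp l, Finset.sum_Icc_succ_top (by omega)]
    simp only [tsub_self, if_true, mul_zero, add_zero]
    refine Finset.sum_congr rfl fun m hm => ?_
    rw [Finset.mem_Icc] at hm
    rw [if_neg (by omega)]
    congr 2
    omega
  rw [h1]
  push_cast
  ring

end

/-! ### Tauberian hypotheses and first bounds for the differences -/

section

open Filter Topology

/-- Backward difference of a sequence, with the convention `p (-1) = 0`. -/
noncomputable def dif (p : ℕ → ℝ) (n : ℕ) : ℝ := p n - if n = 0 then 0 else p (n - 1)

lemma dif_succ (p : ℕ → ℝ) (n : ℕ) : dif p (n + 1) = p (n + 1) - p n := by simp [dif]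

/-- Hypotheses of the Tauberian argument: `p` is nonnegative and eventually convex and increasing,
satisfies Euler's recursion with weights `σ`, and on the scale `T n` the partial sums and the
Laplace transform of `σ` are asymptotic to `n B t^κ` and `n (θ/c)^κ`. -/
structure TData (p σ T : ℕ → ℝ) (B κ θ : ℝ) : Prop where
  p_nonneg : ∀ n, 0 ≤ p n
  s_nonneg : ∀ n, 0 ≤ σ n
  s_zero : σ 0 = 0
  recur : ∀ n : ℕ, (n : ℝ) * p n = ∑ m ∈ Finset.Icc 1 n, σ m * p (n - m)
  conv : ∃ n0, ∀ n ≥ n0, 0 ≤ dif p n ∧ dif p n ≤ dif p (n + 1) ∧ 0 < p n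
  T_nonneg : ∀ n, 0 ≤ T n
  T_mono : ∀ m n, m ≤ n → T m ≤ T n
  T_top : Tendsto T atTop atTop
  T_two : ∀ n, 2 ≤ n → T (2 * n) ≤ 4 * T n
  div_T : Tendsto (fun n : ℕ => (n : ℝ) / T n) atTop atTop
  exp_T : ∀ ε > 0, Tendsto (fun n : ℕ => (n : ℝ) * Real.exp (-(ε * (n / T n)))) atTop (𝓝 0)
  B_pos : 0 < B
  one_le : 1 ≤ κ
  th_pos : 0 < θ
  S_lim : ∀ t, 0 < t → Tendsto (fun n : ℕ => (∑ m ∈ Finset.Ioc 0 ⌊t * T n⌋₊, σ m) / n) atTop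
    (𝓝 (B * t ^ κ))
  summ : ∀ r, 0 < r → Summable fun m : ℕ => σ m * Real.exp (-(r * m))
  W_lim : ∀ c, 0 < c → Tendsto (fun n : ℕ => (∑' m : ℕ, σ m * Real.exp (-(c * m / T n))) / n) atTop
    (𝓝 ((θ / c) ^ κ))

namespace TData
variable {p σ T : ℕ → ℝ} {B κ θ : ℝ}

lemma S_lim' (h : TData p σ T B κ θ) {t : ℝ} (ht : 0 ≤ t) :
    Tendsto (fun n : ℕ => (∑ m ∈ Finset.Ioc 0 ⌊t * T n⌋₊, σ m) / n) atTop (𝓝 (B * t ^ κ)) := by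
  rcases ht.eq_or_lt with rfl | ht
  · have h0 : κ ≠ 0 := by have := h.one_le; linarith
    simp [Real.zero_rpow h0]
  · exact h.S_lim t ht

/-- Every window `(x T n, (x+δ) T n]` carries a proportion of the weight of order `n`. -/
lemma window (h : TData p σ T B κ θ) {x δ : ℝ} (hx : 0 ≤ x) (hδ : 0 < δ) :
    ∀ᶠ n : ℕ in atTop, B * δ ^ κ / 2 * n ≤
      ∑ m ∈ Finset.Ioc ⌊x * T n⌋₊ ⌊(x + δ) * T n⌋₊, σ m := by
  have h1 := (h.S_lim' (add_nonneg hx hδ.le)).sub (h.S_lim' hx)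
  have hpow := Real.add_rpow_le_rpow_add hx hδ.le h.one_le
  have hB := h.B_pos
  have hδκ : 0 < δ ^ κ := Real.rpow_pos_of_pos hδ κ
  have hlt : B * δ ^ κ / 2 < B * (x + δ) ^ κ - B * x ^ κ := by nlinarith [mul_pos hB hδκ]
  filter_upwards [h1.eventually (lt_mem_nhds hlt), eventually_gt_atTop 0] with n hn hn0
  have hn0' : (0 : ℝ) < n := by exact_mod_cast hn0
  rw [← sub_div, lt_div_iff₀ hn0'] at hn
  have hle : ⌊x * T n⌋₊ ≤ ⌊(x + δ) * T n⌋₊ :=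
    Nat.floor_mono (mul_le_mul_of_nonneg_right (by linarith) (h.T_nonneg n))
  have := Finset.sum_Ioc_consecutive σ (Nat.zero_le _) hle
  linarith

lemma ev_S_le (h : TData p σ T B κ θ) {t : ℝ} (ht : 0 ≤ t) :
    ∀ᶠ n : ℕ in atTop, ∑ m ∈ Finset.Ioc 0 ⌊t * T n⌋₊, σ m ≤ (B * t ^ κ + 1) * n := by
  filter_upwards [(h.S_lim' ht).eventually (gt_mem_nhds (lt_add_one _)), eventually_gt_atTop 0]
    with n hn hn0
  have hn0' : (0 : ℝ) < n := by exact_mod_cast hn0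
  rw [div_lt_iff₀ hn0'] at hn
  exact hn.le

lemma ev_W_lt (h : TData p σ T B κ θ) {c x : ℝ} (hc : 0 < c) (hx : (θ / c) ^ κ < x) :
    ∀ᶠ n : ℕ in atTop, ∑' m : ℕ, σ m * Real.exp (-(c * m / T n)) ≤ x * n := by
  filter_upwards [(h.W_lim c hc).eventually (gt_mem_nhds hx), eventually_gt_atTop 0]
    with n hn hn0
  have hn0' : (0 : ℝ) < n := by exact_mod_cast hn0
  rw [div_lt_iff₀ hn0'] at hn
  exact hn.le

lemma ev_W_gt (h : TData p σ T B κ θ) {c x : ℝ} (hc : 0 < c) (hx : x < (θ / c) ^ κ) :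
    ∀ᶠ n : ℕ in atTop, x * n ≤ ∑' m : ℕ, σ m * Real.exp (-(c * m / T n)) := by
  filter_upwards [(h.W_lim c hc).eventually (lt_mem_nhds hx), eventually_gt_atTop 0]
    with n hn hn0
  have hn0' : (0 : ℝ) < n := by exact_mod_cast hn0
  rw [lt_div_iff₀ hn0'] at hn
  exact hn.le

lemma summ' (h : TData p σ T B κ θ) {c : ℝ} (hc : 0 < c) {n : ℕ} (hT : 0 < T n) :
    Summable fun m : ℕ => σ m * Real.exp (-(c * m / T n)) := by
  refine (h.summ (c / T n) (div_pos hc hT)).congr fun m => ?_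
  congr 3; ring

lemma finsum_le (h : TData p σ T B κ θ) {c : ℝ} (hc : 0 < c) {n : ℕ} (hT : 0 < T n)
    (s : Finset ℕ) : ∑ m ∈ s, σ m * Real.exp (-(c * m / T n)) ≤
      ∑' m : ℕ, σ m * Real.exp (-(c * m / T n)) :=
  (h.summ' hc hT).sum_le_tsum _ fun m _ => mul_nonneg (h.s_nonneg m) (Real.exp_nonneg _)

/-- Splitting `e^{-cm/T} = (e^{-(c/2)m/T})^2` in the range `m > K T`. -/
lemma tail_le (h : TData p σ T B κ θ) {c K : ℝ} (hc : 0 < c) {n : ℕ} (hT : 0 < T n) :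
    ∑' m : ℕ, σ m * Real.exp (-(c * m / T n)) ≤
      ∑ m ∈ Finset.Ioc 0 ⌊K * T n⌋₊, σ m * Real.exp (-(c * m / T n)) +
      Real.exp (-(c * K / 2)) * ∑' m : ℕ, σ m * Real.exp (-(c / 2 * m / T n)) := by
  set s := Finset.Ioc 0 ⌊K * T n⌋₊
  have hs2 := (h.summ' (half_pos hc) hT).mul_left (Real.exp (-(c * K / 2)))
  rw [← tsum_mul_left, ← (h.summ' hc hT).sum_add_tsum_compl (s := s)]
  gcongr
  rw [← hs2.sum_add_tsum_compl (s := s)]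
  have hnn : 0 ≤ ∑ m ∈ s, Real.exp (-(c * K / 2)) * (σ m * Real.exp (-(c / 2 * m / T n))) :=
    Finset.sum_nonneg fun m _ => mul_nonneg (Real.exp_nonneg _)
      (mul_nonneg (h.s_nonneg m) (Real.exp_nonneg _))
  refine le_trans ?_ (le_add_of_nonneg_left hnn)
  refine ((h.summ' hc hT).subtype _).tsum_le_tsum ?_ (hs2.subtype _)
  rintro ⟨m, hm⟩
  simp only [Function.comp]
  rcases Nat.eq_zero_or_pos m with rfl | hm0
  · simp [h.s_zero]
  have hmK : K * T n ≤ m := by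
    by_contra hcon
    push Not at hcon
    apply hm
    simp only [s, Finset.coe_Ioc, Set.mem_Ioc]
    exact ⟨hm0, Nat.le_floor hcon.le⟩
  have : -(c * m / T n) ≤ -(c * K / 2) + -(c / 2 * m / T n) := by
    have h1 : c / 2 * K ≤ c / 2 * m / T n := by
      rw [le_div_iff₀ hT]; nlinarith
    have h2 : c * m / T n = c / 2 * m / T n + c / 2 * m / T n := by ring
    linarith
  calc σ m * Real.exp (-(c * m / T n))
      ≤ σ m * Real.exp (-(c * K / 2) + -(c / 2 * m / T n)) := by
        have := h.s_nonneg m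
        gcongr
    _ = _ := by rw [Real.exp_add]; ring

lemma p_mono_of {n0 : ℕ} (hn0 : ∀ n ≥ n0, 0 ≤ dif p n) {i j : ℕ} (hi : n0 ≤ i) (hij : i ≤ j) :
    p i ≤ p j := by
  induction j, hij using Nat.le_induction with
  | base => exact le_rfl
  | succ j hj ih =>
    have := hn0 (j + 1) (by omega)
    rw [dif_succ] at this
    linarith

lemma dif_mono_of {n0 : ℕ} (hn0 : ∀ n ≥ n0, dif p n ≤ dif p (n + 1)) {i j : ℕ} (hi : n0 ≤ i)
    (hij : i ≤ j) : dif p i ≤ dif p j := by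
  induction j, hij using Nat.le_induction with
  | base => exact le_rfl
  | succ j hj ih => exact ih.trans (hn0 j (by omega))

/-- Convexity: a difference quotient is at most the slope at its right end. -/
lemma sub_le_of {n0 : ℕ} (hn0 : ∀ n ≥ n0, dif p n ≤ dif p (n + 1)) {i j : ℕ} (hi : n0 ≤ i)
    (hij : i ≤ j) : p j - p i ≤ ((j : ℝ) - i) * dif p j := by
  induction j, hij using Nat.le_induction with
  | base => simp
  | succ j hj ih =>
    have h1 := hn0 j (by omega)
    have h2 : p (j + 1) = p j + dif p (j + 1) := by rw [dif_succ]; ring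
    have h3 : ((j : ℝ) - i) * dif p j ≤ ((j : ℝ) - i) * dif p (j + 1) := by
      refine mul_le_mul_of_nonneg_left h1 ?_
      have : (i : ℝ) ≤ j := by exact_mod_cast hj
      linarith
    push_cast
    linarith

/-- Convexity: a difference quotient is at least the slope at its left end. -/
lemma le_sub_of {n0 : ℕ} (hn0 : ∀ n ≥ n0, dif p n ≤ dif p (n + 1)) {i j : ℕ} (hi : n0 ≤ i)
    (hij : i ≤ j) : ((j : ℝ) - i) * dif p i ≤ p j - p i := by
  induction j, hij using Nat.le_induction with
  | base => simp
  | succ j hj ih =>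
    have h1 := dif_mono_of hn0 hi (Nat.le_succ_of_le hj)
    have h2 : p (j + 1) = p j + dif p (j + 1) := by rw [dif_succ]; ring
    push_cast
    have e : j.succ = j + 1 := rfl
    rw [e] at h1
    linarith

/-- Eventually `N + x T n ≤ n`. -/
lemma ev_room (h : TData p σ T B κ θ) (x : ℝ) (N : ℕ) :
    ∀ᶠ n : ℕ in atTop, N + ⌊x * T n⌋₊ ≤ n := by
  filter_upwards [h.div_T.eventually_ge_atTop (2 * |x|), eventually_ge_atTop (2 * N),
    h.T_top.eventually_gt_atTop 0] with n h1 h2 h3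
  rw [le_div_iff₀ h3] at h1
  have h4 : x * T n ≤ |x| * T n := mul_le_mul_of_nonneg_right (le_abs_self x) h3.le
  have h5 : (⌊x * T n⌋₊ : ℝ) ≤ |x| * T n := by
    calc (⌊x * T n⌋₊ : ℝ) ≤ (⌊|x| * T n⌋₊ : ℝ) := by exact_mod_cast Nat.floor_mono h4
      _ ≤ _ := Nat.floor_le (by positivity)
  have h6 : (2 * N : ℝ) ≤ n := by exact_mod_cast h2
  have : (N : ℝ) + ⌊x * T n⌋₊ ≤ n := by linarith
  exact_mod_cast this

/-- A first lower bound `D(n) ≫ p(n)/T(n)`: with `B K^κ = 3`, Euler's recursion forces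
`p (n - K T n) ≤ p n / 2`, and convexity turns this drop into a bound for the last difference. -/
lemma exists_lower (h : TData p σ T B κ θ) :
    ∃ a > 0, ∀ᶠ n : ℕ in atTop, a * p n ≤ dif p n * T n := by
  obtain ⟨n0, hn0⟩ := h.conv
  have hd : ∀ n ≥ n0, dif p n ≤ dif p (n + 1) := fun n hn => (hn0 n hn).2.1
  have hp : ∀ n ≥ n0, 0 ≤ dif p n := fun n hn => (hn0 n hn).1
  set K := (3 / B) ^ (1 / κ) with hK
  have hB := h.B_pos
  have hκ : 0 < κ := lt_of_lt_of_le one_pos h.one_le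
  have hKpos : 0 < K := Real.rpow_pos_of_pos (by positivity) _
  have hKk : B * K ^ κ = 3 := by
    rw [hK, ← Real.rpow_mul (by positivity), one_div_mul_cancel hκ.ne', Real.rpow_one]
    field_simp
  have hlim := h.S_lim K hKpos
  rw [hKk] at hlim
  refine ⟨1 / (2 * K), by positivity, ?_⟩
  filter_upwards [hlim.eventually (lt_mem_nhds (by norm_num : (2 : ℝ) < 3)), h.ev_room K n0,
    eventually_gt_atTop 0, h.T_top.eventually_gt_atTop 0] with n h1 h2 h3 h4
  have hn : (0 : ℝ) < n := by exact_mod_cast h3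
  rw [lt_div_iff₀ hn] at h1
  set l := ⌊K * T n⌋₊
  have h5 : p (n - l) * ∑ m ∈ Finset.Ioc 0 l, σ m ≤ n * p n := by
    rw [h.recur n, Finset.mul_sum]
    calc _ ≤ ∑ m ∈ Finset.Ioc 0 l, σ m * p (n - m) := by
          refine Finset.sum_le_sum fun m hm => ?_
          rw [Finset.mem_Ioc] at hm
          rw [mul_comm]
          exact mul_le_mul_of_nonneg_left (p_mono_of hp (by omega) (by omega)) (h.s_nonneg m)
      _ ≤ _ := by
          refine Finset.sum_le_sum_of_subset_of_nonneg (fun m hm => ?_) fun m _ _ =>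
            mul_nonneg (h.s_nonneg m) (h.p_nonneg _)
          rw [Finset.mem_Ioc] at hm
          rw [Finset.mem_Icc]
          omega
  have h6 : p (n - l) * 2 ≤ p n := by
    have := mul_le_mul_of_nonneg_left h1.le (h.p_nonneg (n - l))
    have h7 : (p (n - l) * 2) * n ≤ p n * n := by linarith
    exact le_of_mul_le_mul_right h7 hn
  have h7 := sub_le_of hd (i := n - l) (j := n) (by omega) (by omega)
  rw [Nat.cast_sub (by omega)] at h7
  have h8 : (l : ℝ) ≤ K * T n := Nat.floor_le (by positivity)
  have h9 := mul_le_mul_of_nonneg_right h8 (hp n (by omega))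
  rw [div_mul_eq_mul_div, div_le_iff₀ (by positivity)]
  nlinarith

/-- A lower bound for the logarithmic difference gives exponential decay of `p (n - m) / p n`. -/
lemma decay (h : TData p σ T B κ θ) {a : ℝ} (ha : 0 < a) {N : ℕ}
    (hN : ∀ n ≥ N, a * p n ≤ dif p n * T n) (hT : ∀ n ≥ N, 0 < T n) {n : ℕ} :
    ∀ m, N + m ≤ n → p (n - m) ≤ p n * Real.exp (-(a * m / T n)) := by
  intro m
  induction m with
  | zero => simp
  | succ m ih =>
    intro hm
    have h1 := ih (by omega)
    obtain ⟨i, hi⟩ : ∃ i, n - m = i + 1 := ⟨n - m - 1, by omega⟩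
    have hi' : n - (m + 1) = i := by omega
    rw [hi] at h1
    rw [hi']
    have h2 := hN (i + 1) (by omega)
    rw [dif_succ] at h2
    have hTi := hT (i + 1) (by omega)
    have hTn := hT n (by omega)
    have h3 : p i ≤ p (i + 1) * (1 - a / T n) := by
      have h4 : a / T n ≤ a / T (i + 1) :=
        div_le_div_of_nonneg_left ha.le hTi (h.T_mono _ _ (by omega))
      have h5 : a / T (i + 1) * p (i + 1) ≤ p (i + 1) - p i := by
        rw [div_mul_eq_mul_div, div_le_iff₀ hTi]; exact h2
      have h6 := mul_le_mul_of_nonneg_right h4 (h.p_nonneg (i + 1))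
      linarith
    have h7 : 1 - a / T n ≤ Real.exp (-(a / T n)) := by
      have := Real.add_one_le_exp (-(a / T n)); linarith
    calc p i ≤ p (i + 1) * (1 - a / T n) := h3
      _ ≤ p (i + 1) * Real.exp (-(a / T n)) := mul_le_mul_of_nonneg_left h7 (h.p_nonneg _)
      _ ≤ (p n * Real.exp (-(a * m / T n))) * Real.exp (-(a / T n)) :=
          mul_le_mul_of_nonneg_right h1 (Real.exp_nonneg _)
      _ = _ := by
          rw [mul_assoc, ← Real.exp_add]
          push_cast
          congr 2; ring

/-- The total weight `∑_{m ≤ n} σ(m)` is negligible compared with `n p(n) / T(n)`. -/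
lemma small (h : TData p σ T B κ θ) {ε : ℝ} (hε : 0 < ε) :
    ∀ᶠ n : ℕ in atTop, ∑ m ∈ Finset.Icc 1 n, σ m ≤ ε * (n * p n / T n) := by
  obtain ⟨a, ha, hlow⟩ := h.exists_lower
  obtain ⟨n0, hn0⟩ := h.conv
  obtain ⟨N, hN⟩ := eventually_atTop.mp ((hlow.and (h.T_top.eventually_gt_atTop 0)).and
    (eventually_ge_atTop n0))
  have hNp : 0 < p N := (hn0 N (hN N le_rfl).2).2.2
  set c := a / 2 with hc
  have hcpos : 0 < c := half_pos ha
  set L := (θ / c) ^ κ + 1 with hL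
  have hLpos : 0 < L := by
    have := h.th_pos
    have : 0 < (θ / c) ^ κ := Real.rpow_pos_of_pos (by positivity) _
    linarith
  have hlim := h.exp_T (a / 2) (half_pos ha)
  set η := ε * (p N * Real.exp (-(a * N / T N))) / L with hη
  have hηpos : 0 < η := by positivity
  filter_upwards [h.ev_W_lt hcpos (lt_add_one _), hlim.eventually (gt_mem_nhds hηpos),
    eventually_ge_atTop N, h.div_T.eventually_ge_atTop 1, eventually_gt_atTop 0]
    with n h1 h2 h3 h4 h5
  have hTn := (hN n h3).1.2
  have hn : (0 : ℝ) < n := by exact_mod_cast h5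
  have hTle : T n ≤ n := by rwa [le_div_iff₀ hTn, one_mul] at h4
  have hS : ∑ m ∈ Finset.Icc 1 n, σ m ≤ Real.exp (c * n / T n) * (L * n) := by
    calc _ ≤ ∑ m ∈ Finset.Icc 1 n, Real.exp (c * n / T n) *
          (σ m * Real.exp (-(c * m / T n))) := by
          refine Finset.sum_le_sum fun m hm => ?_
          rw [Finset.mem_Icc] at hm
          have hmn : (m : ℝ) ≤ n := by exact_mod_cast hm.2
          have e1 : 1 ≤ Real.exp (c * n / T n) * Real.exp (-(c * m / T n)) := by
            rw [← Real.exp_add, Real.one_le_exp_iff, ← sub_eq_add_neg, ← sub_div]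
            refine div_nonneg ?_ hTn.le
            nlinarith
          have := mul_le_mul_of_nonneg_left e1 (h.s_nonneg m)
          linarith
      _ = Real.exp (c * n / T n) * ∑ m ∈ Finset.Icc 1 n, σ m * Real.exp (-(c * m / T n)) := by
          rw [Finset.mul_sum]
      _ ≤ _ := mul_le_mul_of_nonneg_left ((h.finsum_le hcpos hTn _).trans h1) (Real.exp_nonneg _)
  have hdec := h.decay ha (fun n hn => (hN n hn).1.1) (fun n hn => (hN n hn).1.2) (n := n) (n - N)
    (by omega)
  rw [Nat.sub_sub_self h3, Nat.cast_sub h3] at hdec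
  -- `p n ≥ p N e^{a (n - N) / T n}`
  have hpn : p N * Real.exp (-(a * N / T N)) * Real.exp (a * n / T n) ≤ p n := by
    have e1 : a * N / T n ≤ a * N / T N :=
      div_le_div_of_nonneg_left (by positivity) (hN N le_rfl).1.2 (h.T_mono _ _ h3)
    calc p N * Real.exp (-(a * N / T N)) * Real.exp (a * n / T n)
        ≤ (p n * Real.exp (-(a * (n - N) / T n))) * Real.exp (-(a * N / T N))
            * Real.exp (a * n / T n) := by gcongr
      _ = p n * Real.exp (a * N / T n - a * N / T N) := by
          rw [mul_assoc, mul_assoc, ← Real.exp_add, ← Real.exp_add]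
          congr 2; ring
      _ ≤ p n * 1 := by
          refine mul_le_mul_of_nonneg_left ?_ (h.p_nonneg n)
          rw [Real.exp_le_one_iff]; linarith
      _ = p n := mul_one _
  refine hS.trans ?_
  rw [mul_div_assoc', le_div_iff₀ hTn]
  set E := Real.exp (c * n / T n) with hE
  have hEpos : 0 < E := Real.exp_pos _
  have hE2 : Real.exp (a * n / T n) = E * E := by
    rw [hE, ← Real.exp_add]; congr 1; rw [hc]; ring
  have hE3 : Real.exp (-(a / 2 * (n / T n))) = E⁻¹ := by
    rw [hE, ← Real.exp_neg]; congr 1; rw [hc]; ring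
  rw [hE2] at hpn
  rw [hE3, ← div_eq_mul_inv, div_lt_iff₀ hEpos] at h2
  have h6 : L * n ≤ ε * (p N * Real.exp (-(a * N / T N))) * E := by
    have : L * n ≤ L * (η * E) := mul_le_mul_of_nonneg_left h2.le hLpos.le
    refine this.trans_eq ?_
    rw [hη]; field_simp
  calc E * (L * n) * T n ≤ E * (L * n) * n := by gcongr
    _ ≤ E * (ε * (p N * Real.exp (-(a * N / T N))) * E) * n := by gcongr
    _ = ε * n * (p N * Real.exp (-(a * N / T N)) * (E * E)) := by ring
    _ ≤ ε * n * p n := by gcongr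
    _ = ε * (n * p n) := by ring

end TData

end

/-! ### The sharp lower bound for the differences -/

section

open Filter Topology

namespace TData
variable {p σ T : ℕ → ℝ} {B κ θ : ℝ}

/-- If a nonnegative function has small weighted sum, it is small somewhere in each window of
large weight. -/
lemma pick {σ F : ℕ → ℝ} (hσ : ∀ m, 0 ≤ σ m) {i j l : ℕ} (hjl : j ≤ l)
    (hF : ∀ m ∈ Finset.Ioc 0 l, 0 ≤ F m) {R w μ : ℝ} (hμ : 0 ≤ μ)
    (hR : ∑ m ∈ Finset.Ioc 0 l, σ m * F m ≤ R) (hw : w ≤ ∑ m ∈ Finset.Ioc i j, σ m)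
    (hlt : R < w * μ) : ∃ m, i < m ∧ m ≤ j ∧ F m ≤ μ := by
  by_contra hcon
  push Not at hcon
  have h1 : w * μ ≤ ∑ m ∈ Finset.Ioc 0 l, σ m * F m := by
    calc w * μ ≤ (∑ m ∈ Finset.Ioc i j, σ m) * μ := mul_le_mul_of_nonneg_right hw hμ
      _ = ∑ m ∈ Finset.Ioc i j, σ m * μ := Finset.sum_mul _ _ _
      _ ≤ ∑ m ∈ Finset.Ioc i j, σ m * F m := by
          refine Finset.sum_le_sum fun m hm => ?_
          rw [Finset.mem_Ioc] at hm
          exact mul_le_mul_of_nonneg_left (hcon m hm.1 hm.2).le (hσ m)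
      _ ≤ _ := by
          refine Finset.sum_le_sum_of_subset_of_nonneg (Finset.Ioc_subset_Ioc (Nat.zero_le _) hjl)
            fun m hm _ => mul_nonneg (hσ m) (hF m hm)
  linarith

lemma dif_recur (h : TData p σ T B κ θ) {n : ℕ} (hn : 1 ≤ n) :
    n * dif p n + p (n - 1) = ∑ m ∈ Finset.Icc 1 n, σ m * dif p (n - m) := by
  have h1 := pcDiff_recursion h.recur hn
  have h2 : dif p n = p n - p (n - 1) := by rw [dif, if_neg (by omega)]
  rw [h2]
  exact h1

/-- Weighted excess of the differences over their lower bound, at an index `n` where the lower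
bound is nearly attained. The recursions for `D` and for `p` are subtracted from each other, so that
the average excess is governed by the excess at `n` itself. -/
lemma excess (h : TData p σ T B κ θ) {γ η : ℝ} (hγ : 0 < γ) (hη : 0 < η)
    (hlow : ∀ᶠ n : ℕ in atTop, γ * p n ≤ dif p n * T n) (L : ℝ) :
    ∀ᶠ n : ℕ in atTop, dif p n * T n ≤ (γ + 2 * η) * p n →
      (∀ m ≤ ⌊L * T n⌋₊, 0 ≤ dif p (n - m) - γ * p (n - m) / T n) ∧
      ∑ m ∈ Finset.Ioc 0 ⌊L * T n⌋₊, σ m * (dif p (n - m) - γ * p (n - m) / T n) ≤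
        4 * η * (n * p n / T n) := by
  obtain ⟨n0, hn0⟩ := h.conv
  obtain ⟨N, hN⟩ := eventually_atTop.mp ((hlow.and (h.T_top.eventually_gt_atTop 0)).and
    (eventually_ge_atTop n0))
  set Q := ∑ i ∈ Finset.range N, (|dif p i| + γ * p i) with hQ
  have hQt : ∀ i, 0 ≤ |dif p i| + γ * p i := fun i =>
    add_nonneg (abs_nonneg _) (mul_nonneg hγ.le (h.p_nonneg i))
  have hQ0 : 0 ≤ Q := Finset.sum_nonneg fun i _ => hQt i
  filter_upwards [h.small (ε := η / (Q + 1)) (by positivity), h.ev_room L N,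
    h.T_top.eventually_ge_atTop 1, h.div_T.eventually_ge_atTop (1 / η),
    eventually_ge_atTop (n0 + 1)] with n h1 h2 h3 h4 h5 h6
  have hTn : 0 < T n := by linarith
  have hn : (0 : ℝ) < n := by exact_mod_cast (by omega : 0 < n)
  have hF : ∀ m, N + m ≤ n → 0 ≤ dif p (n - m) - γ * p (n - m) / T n := by
    intro m hm
    have hTm := (hN (n - m) (by omega)).1.2
    have e1 := (hN (n - m) (by omega)).1.1
    have e2 : γ * p (n - m) / T n ≤ γ * p (n - m) / T (n - m) :=
      div_le_div_of_nonneg_left (mul_nonneg hγ.le (h.p_nonneg _)) hTm (h.T_mono _ _ (by omega))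
    have e3 : γ * p (n - m) / T (n - m) ≤ dif p (n - m) := by rwa [div_le_iff₀ hTm]
    linarith
  refine ⟨fun m hm => hF m (by omega), ?_⟩
  have hlb : ∀ m ∈ Finset.Icc 1 n, -Q ≤ dif p (n - m) - γ * p (n - m) / T n := by
    intro m hm
    rw [Finset.mem_Icc] at hm
    by_cases hmN : N + m ≤ n
    · have := hF m hmN; linarith
    · have e1 : |dif p (n - m)| + γ * p (n - m) ≤ Q :=
        Finset.single_le_sum (f := fun i => |dif p i| + γ * p i) (fun i _ => hQt i)
          (Finset.mem_range.mpr (by omega : n - m < N))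
      have e2 : γ * p (n - m) / T n ≤ γ * p (n - m) :=
        div_le_self (mul_nonneg hγ.le (h.p_nonneg _)) h3
      have e3 := neg_abs_le (dif p (n - m))
      linarith
  have hsum : ∑ m ∈ Finset.Icc 1 n, σ m * (dif p (n - m) - γ * p (n - m) / T n) =
      n * dif p n + p (n - 1) - γ * (n * p n) / T n := by
    rw [h.dif_recur (by omega), h.recur n, Finset.mul_sum, Finset.sum_div,
      ← Finset.sum_sub_distrib]
    refine Finset.sum_congr rfl fun m _ => ?_
    ring
  have hsub : Finset.Ioc 0 ⌊L * T n⌋₊ ⊆ Finset.Icc 1 n := by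
    intro m hm
    rw [Finset.mem_Ioc] at hm
    rw [Finset.mem_Icc]
    omega
  calc _ ≤ ∑ m ∈ Finset.Ioc 0 ⌊L * T n⌋₊,
        (σ m * (dif p (n - m) - γ * p (n - m) / T n) + Q * σ m) :=
        Finset.sum_le_sum fun m _ => by
          have := mul_nonneg hQ0 (h.s_nonneg m); linarith
    _ ≤ ∑ m ∈ Finset.Icc 1 n, (σ m * (dif p (n - m) - γ * p (n - m) / T n) + Q * σ m) := by
        refine Finset.sum_le_sum_of_subset_of_nonneg hsub fun m hm _ => ?_
        have := mul_le_mul_of_nonneg_left (hlb m hm) (h.s_nonneg m)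
        linarith
    _ = n * dif p n + p (n - 1) - γ * (n * p n) / T n + Q * ∑ m ∈ Finset.Icc 1 n, σ m := by
        rw [Finset.sum_add_distrib, hsum, Finset.mul_sum]
    _ ≤ 4 * η * (n * p n / T n) := by
        have hX : 0 ≤ n * p n / T n := div_nonneg (mul_nonneg hn.le (h.p_nonneg n)) hTn.le
        have e1 : Q * ∑ m ∈ Finset.Icc 1 n, σ m ≤ η * (n * p n / T n) := by
          calc _ ≤ Q * (η / (Q + 1) * (n * p n / T n)) := mul_le_mul_of_nonneg_left h1 hQ0
            _ = Q / (Q + 1) * (η * (n * p n / T n)) := by ring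
            _ ≤ 1 * (η * (n * p n / T n)) := by
                refine mul_le_mul_of_nonneg_right ?_ (by positivity)
                rw [div_le_one (by positivity)]; linarith
            _ = _ := one_mul _
        have e2 : n * dif p n ≤ (γ + 2 * η) * (n * p n / T n) := by
          rw [mul_div_assoc', le_div_iff₀ hTn]
          nlinarith
        have e3 : p (n - 1) ≤ η * (n * p n / T n) := by
          have e4 : p (n - 1) ≤ p n := by
            have := (hn0 n (by omega)).1
            rw [dif, if_neg (by omega)] at this
            linarith
          have e5 : 1 ≤ η * (n / T n) := by
            rw [div_le_iff₀ hη] at h4; linarith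
          have e6 := mul_le_mul_of_nonneg_right e5 (h.p_nonneg n)
          calc p (n - 1) ≤ 1 * p n := by linarith
            _ ≤ η * (n / T n) * p n := e6
            _ = _ := by ring
        have e7 : γ * (n * p n) / T n = γ * (n * p n / T n) := by ring
        rw [e7]
        linarith

/-- Propagating an upper bound for differences from one point per cell to all points. -/
lemma pt_bound {p : ℕ → ℝ} {n0 n J : ℕ} (hp0 : ∀ n, 0 ≤ p n)
    (hd : ∀ n ≥ n0, dif p n ≤ dif p (n + 1)) (hdn : ∀ n ≥ n0, 0 ≤ dif p n)
    {t δ γ α c μ K : ℝ} (ht : 0 < t) (hδ : 0 < δ) (hγ : 0 ≤ γ) (hγα : γ ≤ α) (hμ : 0 ≤ μ)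
    (hα : α ≤ c * (1 - 2 * δ * α)) (hα4 : 4 * δ * α ≤ 1) (hKJ : K / δ ≤ J)
    (h0 : dif p n - γ * p n / t ≤ μ * (p n / t))
    (hcell : ∀ j ≤ J, ∃ m, ⌊j * δ * t⌋₊ < m ∧ m ≤ ⌊(j * δ + δ) * t⌋₊ ∧
      dif p (n - m) - γ * p (n - m) / t ≤ μ * (p n / t))
    {m : ℕ} (hm : m ≤ K * t) (hmn : n0 + m ≤ n) :
    dif p (n - m) * t ≤ c * p (n - m) + 2 * μ * p n := by
  have hstar : ∃ s ≤ m, (m : ℝ) - s ≤ 2 * δ * t ∧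
      dif p (n - s) - γ * p (n - s) / t ≤ μ * (p n / t) := by
    have hδt : 0 < δ * t := mul_pos hδ ht
    set j := ⌊(m : ℝ) / (δ * t)⌋₊ with hj
    have hj1 : j * (δ * t) ≤ m := by
      rw [← le_div_iff₀ hδt]; exact Nat.floor_le (by positivity)
    have hj2 : (m : ℝ) < (j + 1) * (δ * t) := by
      rw [← div_lt_iff₀ hδt]; exact Nat.lt_floor_add_one _
    rcases Nat.eq_zero_or_pos j with hj0 | hj0
    · refine ⟨0, Nat.zero_le _, ?_, by simpa using h0⟩
      rw [hj0] at hj2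
      push_cast at hj2 ⊢
      linarith
    · obtain ⟨i, hi⟩ : ∃ i, j = i + 1 := ⟨j - 1, by omega⟩
      have hjJ : j ≤ J := by
        have e1 : (m : ℝ) / (δ * t) ≤ J := by
          refine le_trans ?_ hKJ
          rw [div_le_div_iff₀ hδt hδ]
          nlinarith
        exact_mod_cast (Nat.floor_le (by positivity : 0 ≤ (m : ℝ) / (δ * t))).trans e1
      obtain ⟨s, hs1, hs2, hs3⟩ := hcell i (by omega)
      have hi' : (j : ℝ) = i + 1 := by exact_mod_cast hi
      have hs2' : (s : ℝ) ≤ (i * δ + δ) * t := (Nat.le_floor_iff (by positivity)).mp hs2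
      have hs1' : i * δ * t < s := (Nat.floor_lt (by positivity)).mp hs1
      rw [hi'] at hj1 hj2
      refine ⟨s, ?_, ?_, hs3⟩
      · have : (s : ℝ) ≤ m := by nlinarith
        exact_mod_cast this
      · nlinarith
  obtain ⟨s, hsm, hdist, hF⟩ := hstar
  have e1 : dif p (n - m) ≤ dif p (n - s) := dif_mono_of hd (by omega) (by omega)
  have e2 := sub_le_of hd (i := n - m) (j := n - s) (by omega) (by omega)
  rw [Nat.cast_sub (by omega), Nat.cast_sub (by omega)] at e2
  have hdn' := hdn (n - s) (by omega)
  have hdt : 0 ≤ dif p (n - s) * t := mul_nonneg hdn' ht.le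
  have e3 : p (n - s) ≤ p (n - m) + 2 * δ * (dif p (n - s) * t) := by
    have := mul_le_mul_of_nonneg_right hdist hdn'
    linarith
  have e4 : dif p (n - s) * t ≤ γ * p (n - s) + μ * p n := by
    have e5 := mul_le_mul_of_nonneg_right hF ht.le
    rw [sub_mul, div_mul_cancel₀ _ ht.ne', mul_assoc, div_mul_cancel₀ _ ht.ne'] at e5
    linarith
  have hq := hp0 (n - m)
  have hpn := hp0 n
  have e8 := mul_le_mul_of_nonneg_right e1 ht.le
  generalize dif p (n - s) * t = d at *
  have hz : 0 < 1 - 2 * δ * α := by linarith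
  have e6 : d * (1 - 2 * δ * α) ≤ (c * p (n - m) + 2 * μ * p n) * (1 - 2 * δ * α) := by
    have a1 : γ * p (n - s) ≤ γ * (p (n - m) + 2 * δ * d) := mul_le_mul_of_nonneg_left e3 hγ
    have a2 : γ * (p (n - m) + 2 * δ * d) ≤ α * (p (n - m) + 2 * δ * d) :=
      mul_le_mul_of_nonneg_right hγα (by positivity)
    have a3 : α * p (n - m) ≤ c * (1 - 2 * δ * α) * p (n - m) :=
      mul_le_mul_of_nonneg_right hα hq
    have a4 : 0 ≤ μ * p n * (1 - 4 * δ * α) := mul_nonneg (mul_nonneg hμ hpn) (by linarith)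
    nlinarith
  have e7 := le_of_mul_le_mul_right e6 hz
  linarith

/-- A discrete Grönwall inequality: an upper bound for `D T / p` with additive error bounds
`p (n - m) / p n` below by an exponential, up to that error. -/
lemma exp_lower {p : ℕ → ℝ} {n M : ℕ} {t c c' μ : ℝ} (ht : 0 < t) (hμ : 0 ≤ μ) (hp0 : 0 ≤ p n)
    (hc : 0 ≤ c) (hct : c / t ≤ 1) (hcc : Real.exp (-(c' / t)) ≤ 1 - c / t) (hMn : M ≤ n)
    (hb : ∀ m ≤ M, dif p (n - m) * t ≤ c * p (n - m) + μ * p n) :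
    ∀ m ≤ M, p n * (Real.exp (-(c' * m / t)) - μ * m / t) ≤ p (n - m) := by
  intro m
  induction m with
  | zero => simp
  | succ m ih =>
    intro hm
    have h1 := ih (by omega)
    have h2 := hb m (by omega)
    obtain ⟨i, hi⟩ : ∃ i, n - m = i + 1 := ⟨n - m - 1, by omega⟩
    have hi' : n - (m + 1) = i := by omega
    rw [hi, dif_succ] at h2
    rw [hi] at h1
    rw [hi']
    have h3 : (1 - c / t) * p (i + 1) - μ / t * p n ≤ p i := by
      have : p (i + 1) - p i ≤ (c * p (i + 1) + μ * p n) / t := by rwa [le_div_iff₀ ht]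
      have e : (c * p (i + 1) + μ * p n) / t = c / t * p (i + 1) + μ / t * p n := by ring
      linarith
    have h4 : 0 ≤ 1 - c / t := by linarith
    have h5 := mul_le_mul_of_nonneg_left h1 h4
    have h6 : Real.exp (-(c' * ((m + 1 : ℕ) : ℝ) / t)) =
        Real.exp (-(c' / t)) * Real.exp (-(c' * m / t)) := by
      rw [← Real.exp_add]; congr 1; push_cast; ring
    rw [h6]
    have h7 : Real.exp (-(c' / t)) * Real.exp (-(c' * m / t)) ≤
        (1 - c / t) * Real.exp (-(c' * m / t)) :=
      mul_le_mul_of_nonneg_right hcc (Real.exp_nonneg _)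
    have h8 : (1 - c / t) * (μ * m / t) ≤ μ * m / t := by
      have : 0 ≤ c / t * (μ * m / t) := by positivity
      linarith
    have h9 : p n * (Real.exp (-(c' / t)) * Real.exp (-(c' * m / t)) -
        μ * ((m + 1 : ℕ) : ℝ) / t) ≤
        p n * ((1 - c / t) * (Real.exp (-(c' * m / t)) - μ * m / t) - μ / t) := by
      refine mul_le_mul_of_nonneg_left ?_ hp0
      push_cast
      have : μ * ((m : ℝ) + 1) / t = μ * m / t + μ / t := by ring
      rw [this]
      linarith
    linarith

set_option maxHeartbeats 1000000 in
/-- Bootstrapping: below `θ`, a lower bound `α - η` for `D T / p` improves to `α + η`. If it failed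
at `n`, then by `excess` and convexity `D T / p` would be close to `α` throughout a long window
below `n`, so `p (n - m)` would be about `p n e^{-αm/T}` there; the recursion would then give
`(θ/c)^κ ≤ 1` up to small errors for some `c < θ`, which is absurd. -/
lemma improve (h : TData p σ T B κ θ) {α c : ℝ} (hα : 0 < α) (hαc : α < c) (hcθ : c < θ) :
    ∃ η > 0, (∀ᶠ n : ℕ in atTop, (α - η) * p n ≤ dif p n * T n) →
      ∀ᶠ n : ℕ in atTop, (α + η) * p n ≤ dif p n * T n := by
  obtain ⟨n0, hn0⟩ := h.conv
  have hd : ∀ n ≥ n0, dif p n ≤ dif p (n + 1) := fun n hn => (hn0 n hn).2.1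
  have hdn : ∀ n ≥ n0, 0 ≤ dif p n := fun n hn => (hn0 n hn).1
  have hκ : 0 < κ := lt_of_lt_of_le one_pos h.one_le
  have hB := h.B_pos
  have hc : 0 < c := hα.trans hαc
  have hΦ : 1 < (θ / c) ^ κ := Real.one_lt_rpow ((one_lt_div hc).mpr hcθ) hκ
  set Φ := (θ / c) ^ κ with hΦdef
  set ε := (Φ - 1) / 4 with hε
  have hεpos : 0 < ε := by rw [hε]; linarith
  set L2 := (θ / (c / 2)) ^ κ + 1 with hL2
  have hL2pos : 0 < L2 := by
    have := h.th_pos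
    have : 0 < (θ / (c / 2)) ^ κ := Real.rpow_pos_of_pos (by positivity) _
    linarith
  -- `K` is the height at which the Laplace transform is truncated
  obtain ⟨K, hKpos, hK⟩ : ∃ K > 0, Real.exp (-(c * K / 2)) * L2 ≤ ε / 2 := by
    have h1 : Tendsto (fun K : ℝ => Real.exp (-(c * K / 2)) * L2) atTop (𝓝 (0 * L2)) := by
      refine Tendsto.mul_const _ ?_
      refine Real.tendsto_exp_neg_atTop_nhds_zero.comp ?_
      exact (tendsto_id.const_mul_atTop hc).atTop_div_const two_pos
    rw [zero_mul] at h1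
    obtain ⟨K, hK1, hK2⟩ := ((h1.eventually (gt_mem_nhds (half_pos hεpos))).and
      (eventually_gt_atTop 0)).exists
    exact ⟨K, hK2, hK1.le⟩
  set c1 := (α + c) / 2 with hc1
  have hc1α : α < c1 := by rw [hc1]; linarith
  have hc1c : c1 < c := by rw [hc1]; linarith
  have hc1pos : 0 < c1 := hα.trans hc1α
  -- `δ` is the width of the cells in which `pick` finds a point of small excess
  obtain ⟨δ, hδ, hδ1, hδ2⟩ : ∃ δ > 0, α ≤ c1 * (1 - 2 * δ * α) ∧ 4 * δ * α ≤ 1 := by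
    refine ⟨min ((c1 - α) / (2 * α * c1)) (1 / (4 * α)), ?_, ?_, ?_⟩
    · refine lt_min (div_pos (by linarith) (by positivity)) (by positivity)
    · have h1 := min_le_left ((c1 - α) / (2 * α * c1)) (1 / (4 * α))
      rw [le_div_iff₀ (by positivity)] at h1
      linarith
    · have h1 := min_le_right ((c1 - α) / (2 * α * c1)) (1 / (4 * α))
      rw [le_div_iff₀ (by positivity)] at h1
      linarith
  set w := B * δ ^ κ / 2 with hw
  have hwpos : 0 < w := by
    have : 0 < δ ^ κ := Real.rpow_pos_of_pos hδ κ
    positivity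
  set V := 2 * (5 / w + 2) * K * (B * K ^ κ + 1) with hV
  have hVpos : 0 < V := by
    have : 0 < K ^ κ := Real.rpow_pos_of_pos hKpos κ
    positivity
  set η := min (α / 2) (ε / (2 * V)) with hη
  have hηpos : 0 < η := lt_min (by positivity) (by positivity)
  have hηα : η ≤ α / 2 := min_le_left _ _
  have hηV : V * η ≤ ε / 2 := by
    have : η ≤ ε / (2 * V) := min_le_right _ _
    rw [le_div_iff₀ (by positivity)] at this
    linarith
  refine ⟨η, hηpos, fun hlow => ?_⟩
  set μ := (5 / w + 2) * η with hμ
  have hμpos : 0 < μ := by positivity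
  set J := ⌈K / δ⌉₊ with hJ
  have hKJ : K / δ ≤ J := Nat.le_ceil _
  set L := (J : ℝ) * δ + δ with hL
  have hKL : K ≤ L := by
    have : K ≤ J * δ := by rwa [← div_le_iff₀ hδ]
    linarith
  have hex := h.excess (γ := α - η) (η := η) (by linarith) hηpos hlow L
  have hcells : ∀ᶠ n : ℕ in atTop, ∀ j ∈ Finset.range (J + 1),
      w * n ≤ ∑ m ∈ Finset.Ioc ⌊(j : ℝ) * δ * T n⌋₊ ⌊((j : ℝ) * δ + δ) * T n⌋₊, σ m := by
    rw [Filter.eventually_all_finset]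
    intro j _
    exact h.window (by positivity) hδ
  filter_upwards [hex, hcells, h.ev_room L n0, h.ev_S_le hKpos.le,
    h.ev_W_gt (x := 1 + 2 * ε) hc (by rw [← hΦdef, hε]; linarith),
    h.ev_W_lt (half_pos hc) (lt_add_one _), eventually_ge_atTop (n0 + 1),
    h.T_top.eventually_ge_atTop (c * c1 / (c - c1)), h.T_top.eventually_ge_atTop c1,
    h.T_top.eventually_gt_atTop 0]
    with n h1 h2 h3 h4 h5 h6 h7 h8 h9 hTn
  by_contra hcon
  push Not at hcon
  have hn : (0 : ℝ) < n := by exact_mod_cast (by omega : 0 < n)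
  have hpn : 0 < p n := (hn0 n (by omega)).2.2
  obtain ⟨hFnn, hFsum⟩ := h1 (by linarith)
  have hX : 0 < n * p n / T n := by positivity
  have hcell : ∀ j ≤ J, ∃ m, ⌊(j : ℝ) * δ * T n⌋₊ < m ∧ m ≤ ⌊((j : ℝ) * δ + δ) * T n⌋₊ ∧
      dif p (n - m) - (α - η) * p (n - m) / T n ≤ μ * (p n / T n) := by
    intro j hj
    have hjL : ⌊((j : ℝ) * δ + δ) * T n⌋₊ ≤ ⌊L * T n⌋₊ := by
      refine Nat.floor_mono (mul_le_mul_of_nonneg_right ?_ hTn.le)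
      have : (j : ℝ) ≤ J := by exact_mod_cast hj
      have := mul_le_mul_of_nonneg_right this hδ.le
      linarith
    refine pick h.s_nonneg hjL (fun m hm => hFnn m (Finset.mem_Ioc.mp hm).2) (by positivity) hFsum
      (h2 j (Finset.mem_range.mpr (by omega))) ?_
    have e1 : w * n * (μ * (p n / T n)) = (5 + 2 * w) * η * (n * p n / T n) := by
      rw [hμ]; field_simp
    rw [e1]
    refine mul_lt_mul_of_pos_right ?_ hX
    nlinarith
  have hF0 : dif p n - (α - η) * p n / T n ≤ μ * (p n / T n) := by
    have e1 : dif p n ≤ (α + η) * p n / T n := by rw [le_div_iff₀ hTn]; exact hcon.le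
    have e2 : 2 * η ≤ μ := by
      have : 0 ≤ 5 / w * η := by positivity
      rw [hμ]; linarith
    have e3 := mul_le_mul_of_nonneg_right e2 (div_nonneg hpn.le hTn.le)
    have e4 : (α + η) * p n / T n = (α - η) * p n / T n + 2 * η * (p n / T n) := by ring
    linarith
  have hKfloor : ⌊K * T n⌋₊ ≤ ⌊L * T n⌋₊ :=
    Nat.floor_mono (mul_le_mul_of_nonneg_right hKL hTn.le)
  have hpt : ∀ m ≤ ⌊K * T n⌋₊, dif p (n - m) * T n ≤ c1 * p (n - m) + 2 * μ * p n := by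
    intro m hm
    refine pt_bound h.p_nonneg hd hdn hTn hδ (by linarith) (by linarith) hμpos.le hδ1 hδ2 hKJ hF0
      hcell ((Nat.le_floor_iff (by positivity)).mp hm) (by omega)
  have hexp : Real.exp (-(c / T n)) ≤ 1 - c1 / T n := by
    rw [div_le_iff₀ (by linarith)] at h8
    have e1 : Real.exp (-(c / T n)) * (1 + c / T n) ≤ 1 := by
      have := Real.add_one_le_exp (c / T n)
      calc Real.exp (-(c / T n)) * (1 + c / T n) ≤ Real.exp (-(c / T n)) * Real.exp (c / T n) :=
            mul_le_mul_of_nonneg_left (by linarith) (Real.exp_nonneg _)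
        _ = 1 := by rw [← Real.exp_add]; simp
    have e2 : 1 ≤ (1 - c1 / T n) * (1 + c / T n) := by
      have : (1 - c1 / T n) * (1 + c / T n) - 1 = (T n * (c - c1) - c * c1) / T n ^ 2 := by
        field_simp; ring
      have e3 : 0 ≤ (T n * (c - c1) - c * c1) / T n ^ 2 :=
        div_nonneg (by linarith) (by positivity)
      linarith
    have e4 : 0 < 1 + c / T n := by positivity
    exact le_of_mul_le_mul_right (e1.trans e2) e4
  have hq := exp_lower hTn (by positivity : 0 ≤ 2 * μ) hpn.le hc1pos.le
    ((div_le_one hTn).mpr h9) hexp (by omega) hpt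
  have hrec : p n * ((∑ m ∈ Finset.Ioc 0 ⌊K * T n⌋₊, σ m * Real.exp (-(c * m / T n))) -
      2 * μ * K * ∑ m ∈ Finset.Ioc 0 ⌊K * T n⌋₊, σ m) ≤ n * p n := by
    rw [h.recur n, Finset.mul_sum, ← Finset.sum_sub_distrib, Finset.mul_sum]
    calc _ ≤ ∑ m ∈ Finset.Ioc 0 ⌊K * T n⌋₊, σ m * p (n - m) := by
          refine Finset.sum_le_sum fun m hm => ?_
          rw [Finset.mem_Ioc] at hm
          have hmK : (m : ℝ) ≤ K * T n := (Nat.le_floor_iff (by positivity)).mp hm.2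
          have e1 : 2 * μ * m / T n ≤ 2 * μ * K := by
            rw [div_le_iff₀ hTn]; nlinarith
          have e2 : p n * (Real.exp (-(c * m / T n)) - 2 * μ * K) ≤ p (n - m) :=
            (mul_le_mul_of_nonneg_left (by linarith) hpn.le).trans (hq m hm.2)
          have := mul_le_mul_of_nonneg_left e2 (h.s_nonneg m)
          linarith
      _ ≤ _ := by
          refine Finset.sum_le_sum_of_subset_of_nonneg (fun m hm => ?_) fun m _ _ =>
            mul_nonneg (h.s_nonneg m) (h.p_nonneg _)
          rw [Finset.mem_Ioc] at hm
          rw [Finset.mem_Icc]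
          omega
  have htail := h.tail_le (K := K) hc hTn
  have e1 : Real.exp (-(c * K / 2)) * ∑' m : ℕ, σ m * Real.exp (-(c / 2 * m / T n)) ≤ ε / 2 * n := by
    calc _ ≤ Real.exp (-(c * K / 2)) * (L2 * n) := mul_le_mul_of_nonneg_left h6 (Real.exp_nonneg _)
      _ = Real.exp (-(c * K / 2)) * L2 * n := by ring
      _ ≤ _ := mul_le_mul_of_nonneg_right hK hn.le
  have e2 : 2 * μ * K * ∑ m ∈ Finset.Ioc 0 ⌊K * T n⌋₊, σ m ≤ ε / 2 * n := by
    calc _ ≤ 2 * μ * K * ((B * K ^ κ + 1) * n) := mul_le_mul_of_nonneg_left h4 (by positivity)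
      _ = V * η * n := by rw [hV, hμ]; ring
      _ ≤ _ := mul_le_mul_of_nonneg_right hηV hn.le
  have e3 : (1 + ε) * n ≤ (∑ m ∈ Finset.Ioc 0 ⌊K * T n⌋₊, σ m * Real.exp (-(c * m / T n))) -
      2 * μ * K * ∑ m ∈ Finset.Ioc 0 ⌊K * T n⌋₊, σ m := by linarith
  have e4 := mul_le_mul_of_nonneg_left e3 hpn.le
  have e5 : 0 < ε * (n * p n) := by positivity
  linarith

/-- Lower bound: `D T / p` is eventually larger than any `c < θ`. -/
lemma lower (h : TData p σ T B κ θ) {c : ℝ} (hc : c < θ) :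
    ∀ᶠ n : ℕ in atTop, c * p n ≤ dif p n * T n := by
  by_contra hcon
  set 𝒜 : Set ℝ := {a | ∀ᶠ n : ℕ in atTop, a * p n ≤ dif p n * T n} with h𝒜
  have hdown : ∀ a ∈ 𝒜, ∀ b ≤ a, b ∈ 𝒜 := by
    intro a ha b hb
    exact Eventually.mono ha fun n hn => (mul_le_mul_of_nonneg_right hb (h.p_nonneg n)).trans hn
  have hbdd : ∀ a ∈ 𝒜, a ≤ c := by
    intro a ha
    by_contra hlt
    push Not at hlt
    exact hcon (hdown a ha c hlt.le)
  obtain ⟨a0, ha0, ha0A⟩ := h.exists_lower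
  have hB : BddAbove 𝒜 := ⟨c, hbdd⟩
  have hα0 : 0 < sSup 𝒜 := lt_of_lt_of_le ha0 (le_csSup hB ha0A)
  have hαc : sSup 𝒜 ≤ c := csSup_le ⟨a0, ha0A⟩ hbdd
  obtain ⟨η, hη, himp⟩ := h.improve (α := sSup 𝒜) (c := (sSup 𝒜 + θ) / 2) hα0 (by linarith)
    (by linarith)
  obtain ⟨a, haA, ha⟩ := exists_lt_of_lt_csSup ⟨a0, ha0A⟩ (sub_lt_self (sSup 𝒜) hη)
  have h1 : sSup 𝒜 + η ∈ 𝒜 := himp (hdown a haA _ ha.le)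
  have h2 := le_csSup hB h1
  linarith

end TData

end

/-! ### The sharp upper bound for the differences -/

section

open Filter Topology

namespace TData
variable {p σ T : ℕ → ℝ} {B κ θ : ℝ}

/-- With `c < θ`, the decay bound `p (n - m) ≤ p n e^{-cm/T}` is nearly sharp on weighted average. -/
lemma deficit (h : TData p σ T B κ θ) {c : ℝ} (hc : 0 < c) (hcθ : c < θ) (L : ℝ) :
    ∀ᶠ n : ℕ in atTop,
      (∀ m ≤ ⌊L * T n⌋₊, 0 ≤ Real.exp (-(c * m / T n)) - p (n - m) / p n) ∧
      ∑ m ∈ Finset.Ioc 0 ⌊L * T n⌋₊, σ m * (Real.exp (-(c * m / T n)) - p (n - m) / p n) ≤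
        2 * ((θ / c) ^ κ - 1) * n := by
  have hκ : 0 < κ := lt_of_lt_of_le one_pos h.one_le
  have hΦ : 1 < (θ / c) ^ κ := Real.one_lt_rpow ((one_lt_div hc).mpr hcθ) hκ
  set Φ := (θ / c) ^ κ with hΦdef
  obtain ⟨n0, hn0⟩ := h.conv
  obtain ⟨N, hN⟩ := eventually_atTop.mp (((h.lower hcθ).and (h.T_top.eventually_gt_atTop 0)).and
    (eventually_ge_atTop n0))
  set Q := ∑ i ∈ Finset.range N, p i with hQ
  have hQ0 : 0 ≤ Q := Finset.sum_nonneg fun i _ => h.p_nonneg i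
  set ε := (Φ - 1) / 2 with hε
  have hεpos : 0 < ε := by rw [hε]; linarith
  filter_upwards [h.small (ε := ε / (Q + 1)) (by positivity), h.ev_room L N,
    h.T_top.eventually_ge_atTop 1, h.ev_W_lt (x := Φ + ε) hc (by linarith),
    eventually_ge_atTop (N + 1)] with n h1 h2 h3 h4 h5
  have hTn : 0 < T n := by linarith
  have hn : (0 : ℝ) < n := by exact_mod_cast (by omega : 0 < n)
  have hpn : 0 < p n := (hn0 n (hN n (by omega)).2).2.2
  have hG : ∀ m, N + m ≤ n → 0 ≤ Real.exp (-(c * m / T n)) - p (n - m) / p n := by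
    intro m hm
    have := h.decay hc (fun n hn => (hN n hn).1.1) (fun n hn => (hN n hn).1.2) m hm
    have : p (n - m) / p n ≤ Real.exp (-(c * m / T n)) := by
      rw [div_le_iff₀ hpn]; linarith
    linarith
  refine ⟨fun m hm => hG m (by omega), ?_⟩
  have hlb : ∀ m ∈ Finset.Icc 1 n, -(Q / p n) ≤ Real.exp (-(c * m / T n)) - p (n - m) / p n := by
    intro m hm
    rw [Finset.mem_Icc] at hm
    by_cases hmN : N + m ≤ n
    · have := hG m hmN
      have : 0 ≤ Q / p n := by positivity
      linarith
    · have e1 : p (n - m) ≤ Q :=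
        Finset.single_le_sum (f := p) (fun i _ => h.p_nonneg i)
          (Finset.mem_range.mpr (by omega : n - m < N))
      have e2 : p (n - m) / p n ≤ Q / p n := by gcongr
      have e3 := Real.exp_nonneg (-(c * m / T n))
      linarith
  have hsum : ∑ m ∈ Finset.Icc 1 n, σ m * (Real.exp (-(c * m / T n)) - p (n - m) / p n) =
      ∑ m ∈ Finset.Icc 1 n, σ m * Real.exp (-(c * m / T n)) - n := by
    have e1 : (n : ℝ) = ∑ m ∈ Finset.Icc 1 n, σ m * (p (n - m) / p n) := by
      have := h.recur n
      rw [← eq_div_iff hpn.ne', Finset.sum_div] at this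
      rw [this]
      exact Finset.sum_congr rfl fun m _ => by ring
    conv_rhs => rw [e1]
    rw [← Finset.sum_sub_distrib]
    exact Finset.sum_congr rfl fun m _ => by ring
  have hsub : Finset.Ioc 0 ⌊L * T n⌋₊ ⊆ Finset.Icc 1 n := by
    intro m hm
    rw [Finset.mem_Ioc] at hm
    rw [Finset.mem_Icc]
    omega
  calc _ ≤ ∑ m ∈ Finset.Ioc 0 ⌊L * T n⌋₊,
        (σ m * (Real.exp (-(c * m / T n)) - p (n - m) / p n) + Q / p n * σ m) :=
        Finset.sum_le_sum fun m _ => by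
          have := mul_nonneg (div_nonneg hQ0 hpn.le) (h.s_nonneg m); linarith
    _ ≤ ∑ m ∈ Finset.Icc 1 n,
        (σ m * (Real.exp (-(c * m / T n)) - p (n - m) / p n) + Q / p n * σ m) := by
        refine Finset.sum_le_sum_of_subset_of_nonneg hsub fun m hm _ => ?_
        have := mul_le_mul_of_nonneg_left (hlb m hm) (h.s_nonneg m)
        linarith
    _ = ∑ m ∈ Finset.Icc 1 n, σ m * Real.exp (-(c * m / T n)) - n +
          Q / p n * ∑ m ∈ Finset.Icc 1 n, σ m := by
        rw [Finset.sum_add_distrib, hsum, Finset.mul_sum]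
    _ ≤ 2 * (Φ - 1) * n := by
        have e1 : Q / p n * ∑ m ∈ Finset.Icc 1 n, σ m ≤ ε * n := by
          calc _ ≤ Q / p n * (ε / (Q + 1) * (n * p n / T n)) :=
                mul_le_mul_of_nonneg_left h1 (by positivity)
            _ = Q / (Q + 1) * (1 / T n) * (ε * n) := by field_simp
            _ ≤ 1 * (ε * n) := by
                refine mul_le_mul_of_nonneg_right ?_ (by positivity)
                refine mul_le_one₀ ?_ (by positivity) ?_
                · rw [div_le_one (by positivity)]; linarith
                · rw [div_le_one hTn]; exact h3
            _ = _ := one_mul _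
        have e2 := (h.finsum_le hc hTn (Finset.Icc 1 n)).trans h4
        have e3 : 2 * (Φ - 1) * n = (Φ + ε) * n - n + ε * n := by rw [hε]; ring
        linarith

set_option maxHeartbeats 1000000 in
/-- Upper bound: `D T / p` is eventually smaller than any `ϑ > θ`. Given `N`, take `n` slightly above
`N`, about `8 δ T N` away. By `deficit` there are `s ≤ n - N ≤ u`, both of order `δ T n`, at which
`p (n - s)` and `p (n - u)` nearly equal `p n e^{-cs/T}` and `p n e^{-cu/T}`; convexity bounds `D N` by
the slope over `[n - s, n]`, and monotonicity bounds `p N` below by `p (n - u)`. -/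
lemma upper (h : TData p σ T B κ θ) {ϑ : ℝ} (hϑ : θ < ϑ) :
    ∀ᶠ n : ℕ in atTop, dif p n * T n ≤ ϑ * p n := by
  obtain ⟨n0, hn0⟩ := h.conv
  have hd : ∀ n ≥ n0, dif p n ≤ dif p (n + 1) := fun n hn => (hn0 n hn).2.1
  have hdn : ∀ n ≥ n0, 0 ≤ dif p n := fun n hn => (hn0 n hn).1
  have hκ : 0 < κ := lt_of_lt_of_le one_pos h.one_le
  have hB := h.B_pos
  have hθ := h.th_pos
  have hϑ0 : 0 < ϑ := hθ.trans hϑ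
  set g := ϑ - θ with hg
  have hgpos : 0 < g := by rw [hg]; linarith
  set δ := g / (40 * θ * ϑ) with hδ
  have hδpos : 0 < δ := by positivity
  set ρ := min (g / 4 * δ) (g / (4 * ϑ)) with hρ
  have hρpos : 0 < ρ := lt_min (by positivity) (by positivity)
  have hρ1 : ρ / δ ≤ g / 4 := by
    rw [div_le_iff₀ hδpos]; exact min_le_left _ _
  have hρ2 : ϑ * ρ ≤ g / 4 := by
    have : ρ ≤ g / (4 * ϑ) := min_le_right _ _
    rw [le_div_iff₀ (by positivity)] at this
    linarith
  have hδ2 : ϑ * (10 * θ * δ) = g / 4 := by rw [hδ]; field_simp; norm_num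
  have hchoice : θ + ρ / δ ≤ ϑ * (1 - 10 * θ * δ - ρ) := by
    have : ϑ * (1 - 10 * θ * δ - ρ) = ϑ - ϑ * (10 * θ * δ) - ϑ * ρ := by ring
    rw [this, hδ2]
    have : ϑ = θ + g := by rw [hg]; ring
    linarith
  set w := B * δ ^ κ / 2 with hw
  have hwpos : 0 < w := by
    have : 0 < δ ^ κ := Real.rpow_pos_of_pos hδpos κ
    positivity
  -- `c < θ` so close to `θ` that the deficit is below `w ρ`
  obtain ⟨c, hc, hcθ, hcΦ⟩ : ∃ c, 0 < c ∧ c < θ ∧ 2 * ((θ / c) ^ κ - 1) < w * ρ := by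
    have h1 : Tendsto (fun c : ℝ => 2 * ((θ / c) ^ κ - 1)) (𝓝 θ) (𝓝 (2 * ((θ / θ) ^ κ - 1))) := by
      have h2 : ContinuousAt (fun c : ℝ => θ / c) θ :=
        continuousAt_const.div continuousAt_id hθ.ne'
      have h3 : ContinuousAt (fun c : ℝ => (θ / c) ^ κ) θ :=
        h2.rpow_const (Or.inr hκ.le)
      exact (h3.tendsto.sub_const 1).const_mul 2
    rw [div_self hθ.ne', Real.one_rpow, sub_self, mul_zero] at h1
    have h2 := (h1.mono_left (nhdsWithin_le_nhds (s := Set.Iio θ))).eventually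
      (gt_mem_nhds (mul_pos hwpos hρpos))
    have h3 : ∀ᶠ c in 𝓝[<] θ, c < θ := self_mem_nhdsWithin
    have h4 : ∀ᶠ c in 𝓝[<] θ, 0 < c := nhdsWithin_le_nhds (lt_mem_nhds hθ)
    obtain ⟨c, ⟨a1, a2⟩, a3⟩ := ((h2.and h3).and h4).exists
    exact ⟨c, a3, a2, a1⟩
  obtain ⟨M, hM⟩ := eventually_atTop.mp ((((h.deficit hc hcθ (9 * δ + δ)).and
    (h.window hδpos.le hδpos)).and (h.window (x := 9 * δ) (by positivity) hδpos)).and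
    (h.ev_room (9 * δ + δ) n0))
  filter_upwards [eventually_ge_atTop M, eventually_ge_atTop n0, eventually_ge_atTop 2,
    h.T_top.eventually_ge_atTop (1 / δ), h.T_top.eventually_gt_atTop 0, h.ev_room (8 * δ) 1]
    with N hNM hNn0 hN2 hTδ hTN hroom
  rw [div_le_iff₀ hδpos] at hTδ
  set l := ⌊8 * δ * T N⌋₊ + 1 with hl
  have hl1 : 8 * δ * T N < l := by
    have := Nat.lt_floor_add_one (8 * δ * T N)
    rw [hl]; push_cast; exact this
  have hl2 : (l : ℝ) ≤ 8 * δ * T N + 1 := by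
    have := Nat.floor_le (by positivity : 0 ≤ 8 * δ * T N)
    rw [hl]; push_cast; linarith
  obtain ⟨n, hn⟩ : ∃ n, n = N + l := ⟨_, rfl⟩
  have hTn1 : T N ≤ T n := h.T_mono _ _ (by omega)
  have hTn2 : T n ≤ 4 * T N := (h.T_mono _ _ (by omega)).trans (h.T_two N hN2)
  have hTn : 0 < T n := by linarith
  obtain ⟨⟨⟨⟨hGnn, hGsum⟩, hw1⟩, hw2⟩, hr⟩ := hM n (by omega)
  have hnpos : (0 : ℝ) < n := by exact_mod_cast (by omega : 0 < n)
  have hpn : 0 < p n := (hn0 n (by omega)).2.2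
  have hRlt : 2 * ((θ / c) ^ κ - 1) * n < w * n * ρ := by nlinarith
  have hsub1 : ⌊(δ + δ) * T n⌋₊ ≤ ⌊(9 * δ + δ) * T n⌋₊ :=
    Nat.floor_mono (mul_le_mul_of_nonneg_right (by linarith) hTn.le)
  obtain ⟨s, hs1, hs2, hs3⟩ := pick h.s_nonneg hsub1
    (fun m hm => hGnn m (Finset.mem_Ioc.mp hm).2) hρpos.le hGsum hw1 hRlt
  obtain ⟨u, hu1, hu2, hu3⟩ := pick h.s_nonneg le_rfl
    (fun m hm => hGnn m (Finset.mem_Ioc.mp hm).2) hρpos.le hGsum hw2 hRlt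
  have hs1' : δ * T n < s := (Nat.floor_lt (by positivity)).mp hs1
  have hs2' : (s : ℝ) ≤ (δ + δ) * T n := (Nat.le_floor_iff (by positivity)).mp hs2
  have hu1' : 9 * δ * T n < u := (Nat.floor_lt (by positivity)).mp hu1
  have hu2' : (u : ℝ) ≤ (9 * δ + δ) * T n := (Nat.le_floor_iff (by positivity)).mp hu2
  have hsl : s ≤ l := by
    have : (s : ℝ) ≤ l := by nlinarith
    exact_mod_cast this
  have hlu : l ≤ u := by
    have : (l : ℝ) ≤ u := by nlinarith
    exact_mod_cast this
  have hun : n0 + u ≤ n := by omega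
  have hspos : (0 : ℝ) < s := lt_of_le_of_lt (by positivity) hs1'
  have hD : dif p N * T n ≤ p n * (c + ρ / δ) := by
    have e1 : dif p N ≤ dif p (n - s) := dif_mono_of hd hNn0 (by omega)
    have e2 := le_sub_of hd (i := n - s) (j := n) (by omega) (by omega)
    rw [Nat.cast_sub (by omega)] at e2
    have e3 : p n - p (n - s) ≤ p n * (c * s / T n + ρ) := by
      have a1 := Real.add_one_le_exp (-(c * s / T n))
      have a2 : p (n - s) / p n * p n = p (n - s) := div_mul_cancel₀ _ hpn.ne'
      have a3 : 1 - p (n - s) / p n ≤ c * s / T n + ρ := by linarith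
      have a4 := mul_le_mul_of_nonneg_right a3 hpn.le
      linarith
    have e4 : s * dif p N ≤ p n * (c * s / T n + ρ) := by
      have := mul_le_mul_of_nonneg_left e1 hspos.le
      have e : ((n : ℝ) - (n - s)) = s := by ring
      rw [e] at e2
      linarith
    have e5 : s * (dif p N * T n) ≤ s * (p n * (c + ρ / δ)) := by
      have a1 := mul_le_mul_of_nonneg_right e4 hTn.le
      have a2 : p n * (c * s / T n + ρ) * T n = s * (p n * c) + p n * ρ * T n := by
        field_simp
      have a3 : ρ * T n ≤ s * (ρ / δ) := by
        rw [mul_div_assoc', le_div_iff₀ hδpos]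
        nlinarith
      have a4 := mul_le_mul_of_nonneg_left a3 hpn.le
      linarith
    exact le_of_mul_le_mul_left e5 hspos
  have hP : p n * (1 - 10 * θ * δ - ρ) ≤ p N := by
    have e1 : p (n - u) ≤ p N := p_mono_of hdn (by omega) (by omega)
    have a1 := Real.add_one_le_exp (-(c * u / T n))
    have a2 : p (n - u) / p n * p n = p (n - u) := div_mul_cancel₀ _ hpn.ne'
    have a3 : c * u / T n ≤ 10 * θ * δ := by
      rw [div_le_iff₀ hTn]
      calc c * u ≤ θ * ((9 * δ + δ) * T n) := by gcongr
        _ = _ := by ring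
    have a4 : 1 - 10 * θ * δ - ρ ≤ p (n - u) / p n := by linarith
    have a5 := mul_le_mul_of_nonneg_right a4 hpn.le
    linarith
  calc dif p N * T N ≤ dif p N * T n := mul_le_mul_of_nonneg_left hTn1 (hdn N hNn0)
    _ ≤ p n * (c + ρ / δ) := hD
    _ ≤ p n * (ϑ * (1 - 10 * θ * δ - ρ)) := mul_le_mul_of_nonneg_left (by linarith) hpn.le
    _ = ϑ * (p n * (1 - 10 * θ * δ - ρ)) := by ring
    _ ≤ ϑ * p N := mul_le_mul_of_nonneg_left hP hϑ0.le

lemma tendsto_ratio (h : TData p σ T B κ θ) :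
    Tendsto (fun n => dif p n * T n / p n) atTop (𝓝 θ) := by
  obtain ⟨n0, hn0⟩ := h.conv
  refine tendsto_order.mpr ⟨fun a ha => ?_, fun a ha => ?_⟩
  · filter_upwards [h.lower (c := (a + θ) / 2) (by linarith), eventually_ge_atTop n0] with n h1 h2
    have hp := (hn0 n h2).2.2
    rw [lt_div_iff₀ hp]
    nlinarith
  · filter_upwards [h.upper (ϑ := (a + θ) / 2) (by linarith), eventually_ge_atTop n0] with n h1 h2
    have hp := (hn0 n h2).2.2
    rw [div_lt_iff₀ hp]
    nlinarith

/-- The forward difference version. -/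
lemma tendsto_forward (h : TData p σ T B κ θ)
    (hT : Tendsto (fun n => T (n + 1) / T n) atTop (𝓝 1)) :
    Tendsto (fun n => (p (n + 1) - p n) * T n / p n) atTop (𝓝 θ) := by
  obtain ⟨n0, hn0⟩ := h.conv
  have h1 : Tendsto (fun n => dif p (n + 1) * T (n + 1) / p (n + 1)) atTop (𝓝 θ) :=
    h.tendsto_ratio.comp (tendsto_add_atTop_nat 1)
  have hTs : Tendsto (fun n => T (n + 1)) atTop atTop := h.T_top.comp (tendsto_add_atTop_nat 1)
  -- `r = D(n+1)/p(n+1) → 0` and `p n / p (n+1) = 1 - r`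
  have h2 : Tendsto (fun n => dif p (n + 1) * T (n + 1) / p (n + 1) / T (n + 1)) atTop (𝓝 0) :=
    h1.div_atTop hTs
  have h3 := (h1.div hT one_ne_zero).div (h2.const_sub 1) (by norm_num)
  simp only [sub_zero, div_one] at h3
  refine h3.congr' ?_
  filter_upwards [eventually_ge_atTop n0, h.T_top.eventually_gt_atTop 0,
    hTs.eventually_gt_atTop 0] with n hn hT1 hT2
  have hp1 := (hn0 n hn).2.2
  have hp2 := (hn0 (n + 1) (by omega)).2.2
  simp only [Pi.div_apply]
  rw [dif_succ]
  have e : 1 - (p (n + 1) - p n) * T (n + 1) / p (n + 1) / T (n + 1) = p n / p (n + 1) := by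
    field_simp
    ring
  rw [e]
  field_simp

end TData

end

/-! ### Partitions into `k`-th powers of primes -/

section

open Filter Topology

lemma zeta_re_pos {s : ℝ} (hs : 1 < s) : 0 < (riemannZeta (s : ℂ)).re := by
  rw [zetaR_eq hs]
  have hsum : Summable fun j : ℕ => ((j : ℝ) + 1) ^ (-s) := by
    have := (summable_nat_add_iff 1).mpr (Real.summable_nat_rpow.mpr (by linarith : -s < -1))
    simpa using this
  exact hsum.tsum_pos (fun j => by positivity) 0 (by positivity)

/-- The constant `θ` solves `(θ/c)^κ = ζ(κ) Γ(κ + 1) c^{-κ}`, by `Γ(κ + 1) = κ Γ(κ)`. -/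
lemma tdata_isPk {k : ℕ} (hk : 1 ≤ k) :
    TData (fun n => (pc {a | IsPk k a} n : ℝ)) (fun m => (sig k m : ℝ)) (Tk k)
      (riemannZeta ((1 + 1 / (k : ℝ) : ℝ) : ℂ)).re (1 + 1 / (k : ℝ))
      (((1 + 1 / (k : ℝ)) * (riemannZeta ((1 + 1 / (k : ℝ) : ℝ) : ℂ)).re *
        Real.Gamma (1 + 1 / (k : ℝ))) ^ ((k : ℝ) / ((k : ℝ) + 1))) := by
  have hk0 : (0 : ℝ) < k := by positivity
  have hκ : 1 < 1 + 1 / (k : ℝ) := by simpa using hk0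
  have hζ := zeta_re_pos hκ
  have hr : (k : ℝ) / (k + 1) = 1 / (1 + 1 / (k : ℝ)) := by field_simp
  generalize hκd : 1 + 1 / (k : ℝ) = κ at *
  have hκ0 : 0 < κ := by linarith
  have hΓ := Real.Gamma_pos_of_pos hκ0
  exact
    { p_nonneg := fun n => by positivity
      s_nonneg := fun n => by positivity
      s_zero := by simp [sig_zero]
      recur := fun n => by
        have := pc_recursion (A := {a | IsPk k a}) (fun a ha => IsPk.pos ha) n
        simp only [Set.mem_ofPred_eq] at this
        exact_mod_cast this
      conv := eventually_pcDiff_isPk hk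
      T_nonneg := Tk_nonneg k
      T_mono := fun m n h => Tk_mono h
      T_top := tendsto_Tk hk
      T_two := fun n hn => Tk_two_mul hn
      div_T := tendsto_div_Tk hk
      exp_T := fun ε hε => tendsto_mul_exp_Tk hk hε
      B_pos := hζ
      one_le := hκ.le
      th_pos := by positivity
      S_lim := fun t ht => by
        have := tendsto_sigSum_scaled hk ht
        rwa [hκd] at this
      summ := fun r hr => summable_sig_exp (fun m => by positivity) (sig_le k) hr
      W_lim := fun c hc => by
        have := tendsto_laplace_sig hk hc
        rw [hκd] at this
        convert this using 2
        rw [Real.div_rpow (by positivity) hc.le, hr, ← Real.rpow_mul (by positivity),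
          one_div_mul_cancel hκ0.ne', Real.rpow_one, Real.Gamma_add_one hκ0.ne',
          Real.rpow_neg hc.le]
        ring }

lemma tendsto_pc_ratio {k : ℕ} (hk : 1 ≤ k) :
    Tendsto (fun n : ℕ =>
        ((pc {a | IsPk k a} (n + 1) : ℝ) - (pc {a | IsPk k a} n : ℝ)) /
          (((1 + 1 / (k : ℝ)) * (riemannZeta ((1 + 1 / (k : ℝ) : ℝ) : ℂ)).re *
              Real.Gamma (1 + 1 / (k : ℝ))) ^ ((k : ℝ) / ((k : ℝ) + 1)) *
            (pc {a | IsPk k a} n : ℝ) / Tk k n))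
      atTop (𝓝 1) := by
  have h := tdata_isPk hk
  have hθ := h.th_pos
  have hlim := (h.tendsto_forward tendsto_Tk_succ_div).div_const
    (((1 + 1 / (k : ℝ)) * (riemannZeta ((1 + 1 / (k : ℝ) : ℝ) : ℂ)).re *
        Real.Gamma (1 + 1 / (k : ℝ))) ^ ((k : ℝ) / ((k : ℝ) + 1)))
  rw [div_self hθ.ne'] at hlim
  refine hlim.congr fun n => ?_
  rw [div_div, mul_comm (pc _ n : ℝ), div_div_eq_mul_div]

end

lemma pPk_eq_pc (k n : ℕ) : pPk k n = pc {a | IsPk k a} n := by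
  classical
  rw [pPk, Nat.card_eq_fintype_card, Fintype.card_subtype, pc]
  congr 1

/-- Corollary 1.6: `p_{ℙ_k}(n+1) - p_{ℙ_k}(n) ~
  ((1+1/k) ζ(1+1/k) Γ(1+1/k))^{k/(k+1)} p_{ℙ_k}(n) / (n log n)^{k/(k+1)}`. -/
theorem stmt6 (k : ℕ) (hk : 1 ≤ k) :
    Tendsto (fun n : ℕ =>
        ((pPk k (n + 1) : ℝ) - (pPk k n : ℝ)) /
          (((1 + 1 / (k : ℝ)) * zetaR (1 + 1 / (k : ℝ)) *
              Real.Gamma (1 + 1 / (k : ℝ))) ^ ((k : ℝ) / ((k : ℝ) + 1)) *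
            (pPk k n : ℝ) / ((n : ℝ) * Real.log n) ^ ((k : ℝ) / ((k : ℝ) + 1))))
      atTop (nhds 1) := by
  simp only [pPk_eq_pc]
  exact tendsto_pc_ratio hk
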